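/- There exists an absolute constant A > 0 such that the following holds. Let Π be a set of n planes and S a set of k spheres in ℝ³ such that there is no 3×3 cone or cylinder configuration formed by three centers of spheres of S and three planes of Π (i.e., there are no three spheres of S whose centers lie on a common line ℓ together with three planes of Π all tangent to one common cone or cylinder with axis ℓ). Then the number T(Π,S) of tangent pairs satisfies T(Π,S) ≤ A · ( n^{3/4} k^{3/4} + n + k ). -/

import Mathlib

open scoped RealInnerProductSpace

noncomputable section

abbrev Pt3 := EuclideanSpace ℝ (Fin 3)

/-- The line through `a` with direction `v` (assumed nonzero where relevant). -/
def lineThrough3 (a v : Pt3) : Set Pt3 := {x : Pt3 | ∃ t : ℝ, x = a + t • v}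

/-- A line in space. -/
def IsLine3 (l : Set Pt3) : Prop := ∃ a v : Pt3, v ≠ 0 ∧ l = lineThrough3 a v

/-- A plane in space, given by a nonzero normal vector and an offset. -/
def IsPlane3 (s : Set Pt3) : Prop :=
  ∃ u : Pt3, ∃ d : ℝ, u ≠ 0 ∧ s = {x : Pt3 | ⟪u, x⟫ = d}

/-- Two subsets of space are tangent if they intersect in exactly one point. -/
def Tangent3 (a b : Set Pt3) : Prop := ∃ p : Pt3, a ∩ b = {p}

/-- The (double, circular) cone with apex `a`, axis direction `v` and half-angle `θ`:
the points `x` such that the angle between `x - a` and `v` is `θ` or `π - θ`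
(together with the apex itself). -/
def coneSet (a v : Pt3) (θ : ℝ) : Set Pt3 :=
  {x : Pt3 | x = a ∨ InnerProductGeometry.angle (x - a) v = θ ∨
    InnerProductGeometry.angle (x - a) v = Real.pi - θ}

/-- The cylinder with axis the line through `a` with direction `v`, and radius `r`:
the points at distance `r` from the axis. -/
def cylSet (a v : Pt3) (r : ℝ) : Set Pt3 :=
  {x : Pt3 | Metric.infDist x (lineThrough3 a v) = r}

/-- A plane is tangent to a cone precisely when it meets it in exactly one
(ruling) line. -/
def TangentPlaneCone (s : Set Pt3) (a v : Pt3) (θ : ℝ) : Prop :=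
  ∃ lam : Set Pt3, IsLine3 lam ∧ s ∩ coneSet a v θ = lam

/-- A plane is tangent to a cylinder precisely when it meets it in exactly one
(generator) line. -/
def TangentPlaneCyl (s : Set Pt3) (a v : Pt3) (r : ℝ) : Prop :=
  ∃ lam : Set Pt3, IsLine3 lam ∧ s ∩ cylSet a v r = lam

/-- Three distinct spheres of `S` (given by center–radius pairs) whose centers lie on a
common line `ℓ`, together with three distinct planes of `Pl` all tangent to one common
cone or cylinder with axis `ℓ`. -/
def SphereConeCylConfig33 (S : Finset (Pt3 × ℝ)) (Pl : Finset (Set Pt3)) : Prop :=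
  ∃ a v : Pt3, v ≠ 0 ∧
    (∃ s1 ∈ S, ∃ s2 ∈ S, ∃ s3 ∈ S,
      s1 ≠ s2 ∧ s1 ≠ s3 ∧ s2 ≠ s3 ∧
      s1.1 ∈ lineThrough3 a v ∧ s2.1 ∈ lineThrough3 a v ∧ s3.1 ∈ lineThrough3 a v) ∧
    (∃ q1 ∈ Pl, ∃ q2 ∈ Pl, ∃ q3 ∈ Pl,
      q1 ≠ q2 ∧ q1 ≠ q3 ∧ q2 ≠ q3 ∧
      ((∃ a' ∈ lineThrough3 a v, ∃ θ : ℝ, 0 < θ ∧ θ < Real.pi / 2 ∧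
          TangentPlaneCone q1 a' v θ ∧ TangentPlaneCone q2 a' v θ ∧
          TangentPlaneCone q3 a' v θ) ∨
       (∃ r : ℝ, 0 < r ∧
          TangentPlaneCyl q1 a v r ∧ TangentPlaneCyl q2 a v r ∧
          TangentPlaneCyl q3 a v r)))

set_option linter.all false

section Helpers
open MvPolynomial Module

abbrev VN (σ : Type) (N : ℕ) : Submodule ℝ (MvPolynomial σ ℝ) := restrictTotalDegree σ ℝ N

lemma finrank_VN (k N : ℕ) :
    finrank ℝ (VN (Fin k) N) = ∑ j ∈ Finset.range (N + 1), k.multichoose j := by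
  classical
  have hset : { n : Fin k →₀ ℕ | (n.sum fun _ e => e) ≤ N } =
      ((Finset.range (N+1)).biUnion (fun j => (Finset.univ : Finset (Fin k)).finsuppAntidiag j) :
        Finset (Fin k →₀ ℕ)) := by
    ext n
    simp [Finset.mem_finsuppAntidiag, Finsupp.sum_fintype]
  have h1 : finrank ℝ (VN (Fin k) N) =
      Nat.card { n : Fin k →₀ ℕ | (n.sum fun _ e => e) ≤ N } :=
    finrank_eq_nat_card_basis (basisRestrictSupport ℝ { n : Fin k →₀ ℕ | (n.sum fun _ e => e) ≤ N })
  rw [h1, hset]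
  rw [Nat.card_coe_set_eq, Set.ncard_coe_finset, Finset.card_biUnion]
  · refine Finset.sum_congr rfl fun j _ => ?_
    rw [Finset.card_finsuppAntidiag_nat_eq_multichoose]; simp
  · intro i _ j _ hij
    simp only [Finset.disjoint_left, Finset.mem_finsuppAntidiag]
    rintro a ⟨h1, _⟩ ⟨h2, _⟩
    exact hij (h1.symm.trans h2)

lemma finrank_VN2 (N : ℕ) : 2 * finrank ℝ (VN (Fin 2) N) = (N + 1) * (N + 2) := by
  rw [finrank_VN]
  induction N with
  | zero => simp
  | succ n ih =>
    rw [Finset.sum_range_succ, mul_add, ih, Nat.multichoose_two]; ring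

lemma finrank_VN3 (N : ℕ) : 6 * finrank ℝ (VN (Fin 3) N) = (N + 1) * (N + 2) * (N + 3) := by
  rw [finrank_VN]
  induction N with
  | zero => simp
  | succ n ih =>
    rw [Finset.sum_range_succ, mul_add, ih, Nat.multichoose_eq]
    have : (3 + (n+1) - 1).choose (n+1) = (n+3).choose 2 := by
      rw [show 3 + (n+1) - 1 = n+3 by omega]
      exact Nat.choose_symm_of_eq_add (by omega)
    rw [this]
    have h2 : (n+3).choose 2 * 2 = (n+3) * (n+2) := by
      have := Nat.triangle_succ (n+2)
      rw [Nat.choose_two_right]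
      exact Nat.div_mul_cancel (even_iff_two_dvd.mp (by simpa using Nat.even_mul_pred_self (n+3)))
    linarith

lemma mem_VN {σ : Type} {N : ℕ} {p : MvPolynomial σ ℝ} : p ∈ VN σ N ↔ p.totalDegree ≤ N :=
  mem_restrictTotalDegree _ _ _

lemma bezJ {σ : Type} [Finite σ] (F G : MvPolynomial σ ℝ) (hF : F ≠ 0) (hG : G ≠ 0)
    (h : IsRelPrime F G) (N : ℕ) (hN : F.totalDegree + G.totalDegree ≤ N) :
    ∃ J : Submodule ℝ (MvPolynomial σ ℝ), J ≤ VN σ N ∧ (∀ x ∈ J, ∃ u v, x = F * u + G * v) ∧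
      finrank ℝ (VN σ (N - F.totalDegree)) + finrank ℝ (VN σ (N - G.totalDegree)) ≤
      finrank ℝ J + finrank ℝ (VN σ (N - F.totalDegree - G.totalDegree)) := by
  let φ : (VN σ (N - F.totalDegree) × VN σ (N - G.totalDegree)) →ₗ[ℝ] MvPolynomial σ ℝ :=
    LinearMap.coprod ((LinearMap.mulLeft ℝ F).comp (VN σ _).subtype)
      ((LinearMap.mulLeft ℝ G).comp (VN σ _).subtype)
  have hφ : ∀ u v, φ (u, v) = F * u + G * v := by intro u v; simp [φ]
  refine ⟨LinearMap.range φ, ?_, ?_, ?_⟩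
  · rintro _ ⟨⟨u, v⟩, rfl⟩
    rw [hφ, mem_VN]
    have hu := mem_VN.1 u.2
    have hv := mem_VN.1 v.2
    refine (totalDegree_add _ _).trans (max_le ?_ ?_)
    · have := totalDegree_mul F (u : MvPolynomial σ ℝ); omega
    · have := totalDegree_mul G (v : MvPolynomial σ ℝ); omega
  · rintro _ ⟨⟨u, v⟩, rfl⟩
    exact ⟨u, v, hφ u v⟩
  · have hrk := LinearMap.finrank_range_add_finrank_ker φ
    rw [Module.finrank_prod] at hrk
    rw [← hrk]
    apply Nat.add_le_add_left
    have key : ∀ x : LinearMap.ker φ, ∃ w : VN σ (N - F.totalDegree - G.totalDegree),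
        (x.1.1 : MvPolynomial σ ℝ) = G * w ∧ (x.1.2 : MvPolynomial σ ℝ) = - (F * w) := by
      rintro ⟨⟨u, v⟩, hx⟩
      rw [LinearMap.mem_ker, hφ] at hx
      have hd : G ∣ (u : MvPolynomial σ ℝ) := by
        refine h.symm.dvd_of_dvd_mul_left ?_
        exact ⟨-v, by linear_combination hx⟩
      obtain ⟨w, hw⟩ := hd
      have hv : (v : MvPolynomial σ ℝ) = - (F * w) := by
        apply mul_left_cancel₀ hG
        rw [hw] at hx
        linear_combination hx
      refine ⟨⟨w, ?_⟩, hw, hv⟩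
      rw [mem_VN]
      by_cases hw0 : w = 0
      · simp [hw0]
      · have hu := mem_VN.1 u.2
        rw [hw, totalDegree_mul_of_isDomain hG hw0] at hu
        omega
    choose ψ hψ1 hψ2 using key
    have hψinj : ∀ x y, ψ x = ψ y → x = y := by
      intro x y hxy
      apply Subtype.ext
      refine Prod.ext (Subtype.ext ?_) (Subtype.ext ?_)
      · rw [hψ1, hψ1, hxy]
      · rw [hψ2, hψ2, hxy]
    let ψl : LinearMap.ker φ →ₗ[ℝ] VN σ (N - F.totalDegree - G.totalDegree) :=
      { toFun := ψ
        map_add' := by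
          intro x y
          apply Subtype.ext
          apply mul_left_cancel₀ hG
          rw [← hψ1]
          simp only [Submodule.coe_add, mul_add, Prod.fst_add, ← hψ1]
        map_smul' := by
          intro c x
          apply Subtype.ext
          apply mul_left_cancel₀ hG
          rw [← hψ1]
          simp only [RingHom.id_apply, Submodule.coe_smul, mul_smul_comm, Prod.smul_fst, ← hψ1] }
    exact LinearMap.finrank_le_finrank_of_injective (f := ψl) hψinj

lemma interp {σ : Type} [Fintype σ] (T : Finset (σ → ℝ)) (t : σ → ℝ) :
    ∃ p : MvPolynomial σ ℝ, p.totalDegree ≤ T.card ∧ eval t p ≠ 0 ∧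
      ∀ s ∈ T, s ≠ t → eval s p = 0 := by
  classical
  have : ∀ s : σ → ℝ, ∃ l : MvPolynomial σ ℝ, l.totalDegree ≤ 1 ∧ eval t l ≠ 0 ∧
      (s ≠ t → eval s l = 0) := by
    intro s
    by_cases h : s = t
    · exact ⟨1, by simp, by simp, fun h' => absurd h h'⟩
    · obtain ⟨i, hi⟩ := Function.ne_iff.1 h
      refine ⟨X i - C (s i), ?_, ?_, ?_⟩
      · refine (totalDegree_sub _ _).trans ?_
        simp [totalDegree_X]
      · simpa [sub_eq_zero] using fun h' => hi h'.symm
      · intro _; simp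
  choose l h1 h2 h3 using this
  refine ⟨∏ s ∈ T, l s, ?_, ?_, ?_⟩
  · refine (totalDegree_finsetProd _ _).trans ?_
    refine (Finset.sum_le_sum (fun s _ => h1 s)).trans (by simp)
  · rw [map_prod]; exact Finset.prod_ne_zero_iff.2 fun s _ => h2 s
  · intro s hs hst
    rw [map_prod]; exact Finset.prod_eq_zero hs (h3 s hst)

/-- dimension of polynomials vanishing on T -/
lemma vanish_dim {σ : Type} [Fintype σ] (T : Finset (σ → ℝ)) (N : ℕ) (hN : T.card ≤ N)
    (J : Submodule ℝ (MvPolynomial σ ℝ)) (hJ : J ≤ VN σ N) (hv : ∀ x ∈ J, ∀ t ∈ T, eval t x = 0) :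
    finrank ℝ J + T.card ≤ finrank ℝ (VN σ N) := by
  classical
  let E : VN σ N →ₗ[ℝ] (T → ℝ) :=
    LinearMap.pi fun t => ((aeval (t : σ → ℝ)).toLinearMap : MvPolynomial σ ℝ →ₗ[ℝ] ℝ).comp
      (VN σ N).subtype
  have hE : ∀ x t, E x t = eval t.1 x.1 := by
    intro x t; simp [E, aeval_eq_eval]
  have hsurj : LinearMap.range E = ⊤ := by
    rw [eq_top_iff, ← (Pi.basisFun ℝ T).span_eq, Submodule.span_le]
    rintro _ ⟨t, rfl⟩
    obtain ⟨p, hp1, hp2, hp3⟩ := interp T t.1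
    refine ⟨(eval t.1 p)⁻¹ • ⟨p, mem_VN.2 (hp1.trans hN)⟩, ?_⟩
    ext s
    rw [map_smul, Pi.smul_apply, hE]
    by_cases hst : s = t
    · subst hst; simp [hp2]
    · rw [hp3 s s.2 (fun h => hst (Subtype.ext h))]
      simp [Pi.single_apply, hst]
  have hrk := LinearMap.finrank_range_add_finrank_ker E
  rw [hsurj, finrank_top, finrank_fintype_fun_eq_card, Fintype.card_coe] at hrk
  have : finrank ℝ J ≤ finrank ℝ (LinearMap.ker E) := by
    let ι : J →ₗ[ℝ] LinearMap.ker E := LinearMap.codRestrict _ (Submodule.inclusion hJ) (by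
      intro x; rw [LinearMap.mem_ker]; ext t; rw [hE]; exact hv x.1 x.2 t.1 t.2)
    apply LinearMap.finrank_le_finrank_of_injective (f := ι)
    intro x y hxy
    have := congrArg (fun z => (z.1.1 : MvPolynomial σ ℝ)) hxy
    exact Subtype.ext this
  omega

lemma bezout2 (F G : MvPolynomial (Fin 2) ℝ) (hF : F ≠ 0) (hG : G ≠ 0) (h : IsRelPrime F G)
    (T : Finset (Fin 2 → ℝ)) (hTF : ∀ t ∈ T, eval t F = 0) (hTG : ∀ t ∈ T, eval t G = 0) :
    T.card ≤ F.totalDegree * G.totalDegree := by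
  set a := F.totalDegree with ha
  set b := G.totalDegree with hb
  obtain ⟨J, hJ, hJ2, hd⟩ := bezJ F G hF hG h (a + b + T.card) (by omega)
  have := vanish_dim T (a + b + T.card) (by omega) J hJ (by
    intro x hx t ht
    obtain ⟨u, v, rfl⟩ := hJ2 x hx
    simp [hTF t ht, hTG t ht])
  rw [← ha, ← hb] at hd
  have e0 := finrank_VN2 (a + b + T.card)
  have e1 := finrank_VN2 (a + b + T.card - a)
  have e2 := finrank_VN2 (a + b + T.card - b)
  have e3 := finrank_VN2 (a + b + T.card - a - b)
  rw [show a + b + T.card - a - b = T.card by omega] at *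
  rw [show a + b + T.card - a = b + T.card by omega] at *
  rw [show a + b + T.card - b = a + T.card by omega] at *
  nlinarith

lemma sum_eq_degree {σ : Type} (m : σ →₀ ℕ) : (m.sum fun _ e => e) = m.degree := rfl

lemma td_pderiv {σ : Type} (i : σ) (p : MvPolynomial σ ℝ) (h : pderiv i p ≠ 0) :
    (pderiv i p).totalDegree + 1 ≤ p.totalDegree := by
  classical
  have key : ∀ m ∈ (pderiv i p).support, (m.sum fun _ e => e) + 1 ≤ p.totalDegree := by
    intro m hm
    rw [MvPolynomial.mem_support_iff, coeff_pderiv] at hm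
    have h1 : coeff (m + Finsupp.single i 1) p ≠ 0 := left_ne_zero_of_mul hm
    have := le_totalDegree (MvPolynomial.mem_support_iff.2 h1)
    rw [sum_eq_degree, map_add, Finsupp.degree_single] at this
    rw [sum_eq_degree]; exact this
  obtain ⟨m, hm⟩ := support_nonempty.2 h
  have h1 := key m hm
  have : (pderiv i p).totalDegree ≤ p.totalDegree - 1 := by
    refine Finset.sup_le fun m hm => ?_
    have := key m hm; omega
  omega

lemma td_pderiv_le {σ : Type} (i : σ) (p : MvPolynomial σ ℝ) :
    (pderiv i p).totalDegree ≤ p.totalDegree := by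
  by_cases h : pderiv i p = 0
  · simp [h]
  · have := td_pderiv i p h; omega

lemma td_zero_of_pderiv {σ : Type} (p : MvPolynomial σ ℝ) (h : ∀ i, pderiv i p = 0) :
    p.totalDegree = 0 := by
  classical
  by_contra hne
  obtain ⟨m, hm, hm2⟩ := Finset.exists_mem_eq_sup p.support (support_nonempty.2 (by
    rintro rfl; simp at hne)) (fun s => s.sum fun _ e => e)
  have h3 : (m.sum fun _ e => e) ≠ 0 := by rw [← hm2]; exact hne
  rw [sum_eq_degree] at h3
  have h4 : m ≠ 0 := by rintro rfl; simp at h3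
  obtain ⟨i, hi⟩ := Finsupp.ne_iff.1 h4
  have h5 := congrArg (coeff (m - Finsupp.single i 1)) (h i)
  rw [coeff_pderiv, coeff_zero] at h5
  have h6 : m - Finsupp.single i 1 + Finsupp.single i 1 = m :=
    tsub_add_cancel_of_le (by
      rw [Finsupp.single_le_iff]; exact Nat.one_le_iff_ne_zero.2 hi)
  rw [h6] at h5
  rcases mul_eq_zero.1 h5 with h7 | h7
  · exact (MvPolynomial.mem_support_iff.1 hm) h7
  · have : (0:ℝ) ≤ (((m - Finsupp.single i 1 : σ →₀ ℕ) i : ℕ) : ℝ) := Nat.cast_nonneg _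
    linarith

lemma irr_factor_zero {σ : Type} (q : σ → ℝ) (h : MvPolynomial σ ℝ) (h0 : h ≠ 0)
    (hq : eval q h = 0) : ∃ g ∈ UniqueFactorizationMonoid.factors h, Irreducible g ∧ g ∣ h ∧ eval q g = 0 := by
  obtain ⟨u, hu⟩ := UniqueFactorizationMonoid.factors_prod h0
  have h1 : eval q (UniqueFactorizationMonoid.factors h).prod = 0 := by
    have := congrArg (eval q) hu
    rw [map_mul, hq] at this
    exact (mul_eq_zero.1 this).resolve_right (IsUnit.ne_zero ((u.isUnit).map (eval q)))
  rw [← Multiset.prod_hom, Multiset.prod_eq_zero_iff, Multiset.mem_map] at h1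
  obtain ⟨g, hg, hg2⟩ := h1
  exact ⟨g, hg, UniqueFactorizationMonoid.irreducible_of_factor g hg,
    UniqueFactorizationMonoid.dvd_of_mem_factors hg, hg2⟩

abbrev gradCLM (R : MvPolynomial (Fin 2) ℝ) (q : Fin 2 → ℝ) : (Fin 2 → ℝ) →L[ℝ] ℝ :=
  (eval q (pderiv 0 R)) • ContinuousLinearMap.proj 0 +
  (eval q (pderiv 1 R)) • ContinuousLinearMap.proj 1

lemma hasGrad (R : MvPolynomial (Fin 2) ℝ) (q : Fin 2 → ℝ) :
    HasStrictFDerivAt (fun q => eval q R) (gradCLM R q) q := by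
  induction R using MvPolynomial.induction_on with
  | C a =>
    simp only [eval_C, gradCLM, pderiv_C, map_zero, zero_smul, add_zero]
    exact hasStrictFDerivAt_const _ _
  | add p r hp hr =>
    refine ((hp.add hr).congr_fderiv ?_).congr_of_eventuallyEq (Filter.Eventually.of_forall ?_)
    · ext x; simp <;> ring
    · intro x; simp
  | mul_X p i hp =>
    have h2 : HasStrictFDerivAt (fun q : Fin 2 → ℝ => q i)
      (ContinuousLinearMap.proj i : (Fin 2 → ℝ) →L[ℝ] ℝ) q :=
      (ContinuousLinearMap.proj i : (Fin 2 → ℝ) →L[ℝ] ℝ).hasStrictFDerivAt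
    refine ((hp.mul h2).congr_fderiv ?_).congr_of_eventuallyEq (Filter.Eventually.of_forall ?_)
    · fin_cases i <;> (ext x; simp [pderiv_X] <;> ring)
    · intro x; simp

/-- gradient of H^2 exp(2(ux+vy)) -/
lemma hasGradExp (H : MvPolynomial (Fin 2) ℝ) (u v : ℝ) (q : Fin 2 → ℝ) :
    HasStrictFDerivAt (fun q : Fin 2 → ℝ => (eval q H)^2 * Real.exp (2*(u * q 0 + v * q 1)))
      ((2 * eval q H * Real.exp (2*(u * q 0 + v * q 1))) •
        ((eval q (pderiv 0 H + C u * H)) • (ContinuousLinearMap.proj 0 : (Fin 2 → ℝ) →L[ℝ] ℝ) +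
         (eval q (pderiv 1 H + C v * H)) • ContinuousLinearMap.proj 1)) q := by
  have h0 : HasStrictFDerivAt (fun q : Fin 2 → ℝ => q 0)
      (ContinuousLinearMap.proj 0 : (Fin 2 → ℝ) →L[ℝ] ℝ) q :=
      (ContinuousLinearMap.proj 0 : (Fin 2 → ℝ) →L[ℝ] ℝ).hasStrictFDerivAt
  have h1 : HasStrictFDerivAt (fun q : Fin 2 → ℝ => q 1)
      (ContinuousLinearMap.proj 1 : (Fin 2 → ℝ) →L[ℝ] ℝ) q :=
      (ContinuousLinearMap.proj 1 : (Fin 2 → ℝ) →L[ℝ] ℝ).hasStrictFDerivAt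
  have h2 := (((h0.const_mul u).add (h1.const_mul v)).const_mul 2).exp
  have h3 := ((hasGrad H q).pow 2).mul h2
  refine h3.congr_fderiv ?_
  ext x
  simp <;> ring

def SameSign {σ : Type} (L : List (MvPolynomial σ ℝ)) (p q : σ → ℝ) : Prop :=
  ∀ f ∈ L, 0 < eval p f * eval q f

lemma SameSign.symm {σ : Type} {L : List (MvPolynomial σ ℝ)} {p q : σ → ℝ} (h : SameSign L p q) :
    SameSign L q p := fun f hf => by rw [mul_comm]; exact h f hf

lemma SameSign.trans {σ : Type} {L : List (MvPolynomial σ ℝ)} {p q r : σ → ℝ} (h : SameSign L p q)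
    (h' : SameSign L q r) : SameSign L p r := fun f hf => by
  have h1 := h f hf
  have h2 := h' f hf
  have h3 : 0 < (eval q f)^2 := by
    have : eval q f ≠ 0 := by rintro h; simp [h] at h1
    positivity
  have h4 := mul_pos h1 h2
  by_contra hc
  push Not at hc
  nlinarith

lemma signmax (Z : Set (Fin 2 → ℝ)) (hZ : IsClosed Z) (L : List (MvPolynomial (Fin 2) ℝ))
    (b : MvPolynomial (Fin 2) ℝ) (hb : IsCompact {q | 0 ≤ eval q b}) (u v : ℝ)
    (t : Fin 2 → ℝ) (htZ : t ∈ Z) (hbt : 0 < eval t b) (ht : ∀ f ∈ L, eval t f ≠ 0) :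
    ∃ q ∈ Z, SameSign (b :: L) t q ∧ eval q (b * L.prod) ≠ 0 ∧
      IsLocalMaxOn (fun q : Fin 2 → ℝ =>
        (eval q (b * L.prod))^2 * Real.exp (2*(u * q 0 + v * q 1))) Z q := by
  set φ := (fun q : Fin 2 → ℝ =>
        (eval q (b * L.prod))^2 * Real.exp (2*(u * q 0 + v * q 1))) with hφ
  have hcont : ∀ f : MvPolynomial (Fin 2) ℝ, Continuous (fun q => eval q f) :=
    fun f => MvPolynomial.continuous_eval f
  have hφc : Continuous φ := by
    have := hcont (b * L.prod)
    fun_prop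
  set K := {q | q ∈ Z ∧ 0 ≤ eval q b ∧ ∀ f ∈ L, 0 ≤ eval t f * eval q f} with hK
  have hKc : IsCompact K := by
    have : K = {q | 0 ≤ eval q b} ∩ (Z ∩ ⋂ f ∈ L, {q | 0 ≤ eval t f * eval q f}) := by
      ext q; simp [hK]; tauto
    rw [this]
    refine hb.inter_right (hZ.inter ?_)
    refine isClosed_biInter fun f _ => isClosed_le continuous_const (continuous_const.mul (hcont f))
  have htK : t ∈ K := ⟨htZ, hbt.le, fun f _ => mul_self_nonneg _⟩
  obtain ⟨q, hqK, hq⟩ := hKc.exists_isMaxOn ⟨t, htK⟩ hφc.continuousOn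
  have hprod : ∀ x : Fin 2 → ℝ, eval x L.prod ≠ 0 ↔ ∀ f ∈ L, eval x f ≠ 0 := by
    intro x
    rw [← List.prod_hom]
    simp only [ne_eq, List.prod_eq_zero_iff, List.mem_map, not_exists, not_and]
  have hφt : 0 < φ t := by
    have : eval t (b * L.prod) ≠ 0 := by
      rw [map_mul]; exact mul_ne_zero hbt.ne' ((hprod t).2 ht)
    simp only [hφ]; positivity
  have hφq : 0 < φ q := hφt.trans_le (hq htK)
  have hHq : eval q (b * L.prod) ≠ 0 := by
    intro h; simp only [hφ] at hφq; rw [h] at hφq; simp at hφq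
  have hHq2 := hHq
  rw [map_mul] at hHq2
  have hqb : 0 < eval q b := lt_of_le_of_ne hqK.2.1 (Ne.symm (left_ne_zero_of_mul hHq2))
  have hqf := (hprod q).1 (right_ne_zero_of_mul hHq2)
  have hqs : ∀ f ∈ L, 0 < eval t f * eval q f := fun f hf =>
    lt_of_le_of_ne (hqK.2.2 f hf) (Ne.symm (mul_ne_zero (ht f hf) (hqf f hf)))
  refine ⟨q, hqK.1, ?_, hHq, ?_⟩
  · intro f hf
    rcases List.mem_cons.1 hf with rfl | hf
    · exact mul_pos hbt hqb
    · exact hqs f hf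
  · have hopen : IsOpen ({x | 0 < eval x b} ∩ ⋂ f ∈ L.toFinset, {x | 0 < eval t f * eval x f}) := by
      classical
      refine (isOpen_lt continuous_const (hcont b)).inter ?_
      exact isOpen_biInter_finset fun f _ => isOpen_lt continuous_const (continuous_const.mul (hcont f))
    have hmem : q ∈ ({x | 0 < eval x b} ∩ ⋂ f ∈ L.toFinset, {x | 0 < eval t f * eval x f}) := by
      simp only [Set.mem_inter_iff, Set.mem_ofPred_eq, Set.mem_iInter, List.mem_toFinset]
      exact ⟨hqb, hqs⟩
    have hn := hopen.mem_nhds hmem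
    filter_upwards [mem_nhdsWithin_of_mem_nhds hn, self_mem_nhdsWithin] with x hx hxZ
    simp only [Set.mem_inter_iff, Set.mem_ofPred_eq, Set.mem_iInter, List.mem_toFinset] at hx
    exact hq ⟨hxZ, hx.1.le, fun f hf => (hx.2 f hf).le⟩

lemma sum_factors_td {σ : Type} [DecidableEq (MvPolynomial σ ℝ)] (h : MvPolynomial σ ℝ) (h0 : h ≠ 0) :
    ∑ g ∈ (UniqueFactorizationMonoid.factors h).toFinset, g.totalDegree ≤ h.totalDegree := by
  have key : ∀ s : Multiset (MvPolynomial σ ℝ), (∀ g ∈ s, g ≠ 0) →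
      s.prod ≠ 0 ∧ s.prod.totalDegree = (s.map totalDegree).sum := by
    intro s
    induction s using Multiset.induction_on with
    | empty => intro _; simp
    | cons a s ih =>
      intro hs
      obtain ⟨h1, h2⟩ := ih fun g hg => hs g (Multiset.mem_cons_of_mem hg)
      have ha := hs a (Multiset.mem_cons_self _ _)
      rw [Multiset.prod_cons]
      refine ⟨mul_ne_zero ha h1, ?_⟩
      rw [totalDegree_mul_of_isDomain ha h1, h2, Multiset.map_cons, Multiset.sum_cons]
  obtain ⟨h1, h2⟩ := key (UniqueFactorizationMonoid.factors h) fun g hg =>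
    (UniqueFactorizationMonoid.irreducible_of_factor g hg).ne_zero
  have h3 : (UniqueFactorizationMonoid.factors h).prod.totalDegree ≤ h.totalDegree := by
    exact totalDegree_le_of_dvd_of_isDomain (UniqueFactorizationMonoid.factors_prod h0).dvd h0
  refine le_trans ?_ (h2 ▸ h3)
  rw [Finset.sum_multiset_map_count]
  refine Finset.sum_le_sum fun g hg => ?_
  have : 1 ≤ Multiset.count g (UniqueFactorizationMonoid.factors h) :=
    Multiset.one_le_count_iff_mem.2 (Multiset.mem_toFinset.1 hg)
  simpa using Nat.mul_le_mul_right g.totalDegree this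

lemma discPoly (T : Finset (Fin 2 → ℝ)) : ∃ b : MvPolynomial (Fin 2) ℝ, b.totalDegree ≤ 2 ∧
    IsCompact {q | 0 ≤ eval q b} ∧ ∀ t ∈ T, 0 < eval t b := by
  set M : ℝ := ∑ t ∈ T, ((t 0)^2 + (t 1)^2) + 1 with hM
  have hM1 : 1 ≤ M := by
    have : 0 ≤ ∑ t ∈ T, ((t 0)^2 + (t 1)^2) := Finset.sum_nonneg fun t _ => by positivity
    linarith
  have hev : ∀ q : Fin 2 → ℝ, eval q (C M - X 0 ^ 2 - X 1 ^ 2) = M - (q 0)^2 - (q 1)^2 := by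
    intro q; simp
  refine ⟨C M - X 0 ^ 2 - X 1 ^ 2, ?_, ?_, ?_⟩
  · refine (totalDegree_sub _ _).trans (max_le ((totalDegree_sub _ _).trans (max_le ?_ ?_)) ?_)
    · simp
    · simp [totalDegree_X_pow]
    · simp [totalDegree_X_pow]
  · refine Metric.isCompact_of_isClosed_isBounded
      (isClosed_le continuous_const (MvPolynomial.continuous_eval _)) ?_
    refine (Metric.isBounded_closedBall (x := (0 : Fin 2 → ℝ)) (r := M)).subset ?_
    intro q hq
    simp only [Set.mem_ofPred_eq, hev] at hq
    rw [mem_closedBall_zero_iff, pi_norm_le_iff_of_nonneg (by linarith)]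
    intro i
    rw [Real.norm_eq_abs]
    apply abs_le_of_sq_le_sq _ (by linarith)
    fin_cases i
    · simp; nlinarith [sq_nonneg (q 1)]
    · simp; nlinarith [sq_nonneg (q 0)]
  · intro t ht
    rw [hev]
    have := Finset.single_le_sum (f := fun t : Fin 2 → ℝ => (t 0)^2 + (t 1)^2)
      (fun t _ => by positivity) ht
    linarith

lemma eval_zero_of_dvd {σ : Type} {g h : MvPolynomial σ ℝ} {q : σ → ℝ} (hd : g ∣ h)
    (hg : eval q g = 0) : eval q h = 0 := by
  obtain ⟨k, rfl⟩ := hd; simp [hg]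

lemma eval_list_prod_ne {σ : Type} (L : List (MvPolynomial σ ℝ)) (x : σ → ℝ) :
    eval x L.prod ≠ 0 ↔ ∀ f ∈ L, eval x f ≠ 0 := by
  rw [← List.prod_hom]
  simp only [ne_eq, List.prod_eq_zero_iff, List.mem_map, not_exists, not_and]

lemma card_via_max (T : Finset (Fin 2 → ℝ)) (L : List (MvPolynomial (Fin 2) ℝ))
    (b : MvPolynomial (Fin 2) ℝ)
    (hdist : ∀ s ∈ T, ∀ t ∈ T, SameSign L s t → s = t) (Q : (Fin 2 → ℝ) → Prop) (B : ℕ)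
    (h : ∀ t ∈ T, ∃ q, SameSign (b :: L) t q ∧ Q q)
    (hB : ∀ T' : Finset (Fin 2 → ℝ), (∀ q ∈ T', Q q) → T'.card ≤ B) : T.card ≤ B := by
  classical
  choose! f hf1 hf2 using h
  have := hB (T.image f) (by
    intro q hq
    obtain ⟨t, ht, rfl⟩ := Finset.mem_image.1 hq
    exact hf2 t ht)
  rwa [Finset.card_image_of_injOn] at this
  intro s hs t ht hst
  apply hdist s hs t ht
  have h1 := hf1 s hs
  have h2 := hf1 t ht
  rw [← hst] at h2
  have := h1.trans h2.symm
  exact fun f hf => this f (List.mem_cons_of_mem _ hf)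

lemma curveClasses (g : MvPolynomial (Fin 2) ℝ) (hg : Irreducible g)
    (L : List (MvPolynomial (Fin 2) ℝ)) (T : Finset (Fin 2 → ℝ))
    (hTg : ∀ t ∈ T, eval t g = 0) (hne : ∀ t ∈ T, ∀ f ∈ L, eval t f ≠ 0)
    (hdist : ∀ s ∈ T, ∀ t ∈ T, SameSign L s t → s = t) :
    T.card ≤ g.totalDegree * (g.totalDegree + L.prod.totalDegree + 2) := by
  rcases T.eq_empty_or_nonempty with rfl | ⟨t0, ht0⟩
  · simp
  obtain ⟨b, hb1, hb2, hb3⟩ := discPoly T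
  set H := b * L.prod with hH
  have hHt0 : eval t0 H ≠ 0 := by
    rw [hH, map_mul]
    exact mul_ne_zero (hb3 t0 ht0).ne' ((eval_list_prod_ne L t0).2 (hne t0 ht0))
  have hgH : ¬ g ∣ H := fun hd => hHt0 (eval_zero_of_dvd hd (hTg t0 ht0))
  have hHd : H.totalDegree ≤ L.prod.totalDegree + 2 := by
    have := totalDegree_mul b L.prod; rw [← hH] at this; omega
  let J : ℝ → ℝ → MvPolynomial (Fin 2) ℝ := fun u v =>
    pderiv 0 g * (pderiv 1 H + C v * H) - pderiv 1 g * (pderiv 0 H + C u * H)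
  have hJ : ∃ u v, ¬ g ∣ J u v := by
    by_contra hcon
    push Not at hcon
    have h00 := hcon 0 0
    have h10 := (dvd_sub h00 (hcon 1 0))
    have h01 := (dvd_sub (hcon 0 1) h00)
    have e1 : J 0 0 - J 1 0 = pderiv 1 g * H := by simp only [J]; simp only [C_0, C_1]; ring
    have e2 : J 0 1 - J 0 0 = pderiv 0 g * H := by simp only [J]; simp only [C_0, C_1]; ring
    rw [e1] at h10
    rw [e2] at h01
    have d : ∀ i, g ∣ pderiv i g → pderiv i g = 0 := by
      intro i hd
      by_contra hne
      have h1 := totalDegree_le_of_dvd_of_isDomain hd hne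
      have h2 := td_pderiv i g hne
      omega
    have d1 := d 1 ((hg.prime.dvd_or_dvd h10).resolve_right hgH)
    have d0 := d 0 ((hg.prime.dvd_or_dvd h01).resolve_right hgH)
    have := td_zero_of_pderiv g (by intro i; fin_cases i <;> assumption)
    rw [totalDegree_eq_zero_iff_eq_C] at this
    rw [this] at hg
    have hc : coeff 0 g ≠ 0 := by
      intro h; rw [h] at hg; simp at hg
    exact hg.not_isUnit ((isUnit_iff_ne_zero.2 hc).map C)
  obtain ⟨u, v, huv⟩ := hJ
  have hJ0 : J u v ≠ 0 := by intro h; rw [h] at huv; exact huv (dvd_zero _)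
  have hJd : (J u v).totalDegree ≤ g.totalDegree + H.totalDegree := by
    have hi : ∀ (i : Fin 2) (w : ℝ), (pderiv i H + C w * H).totalDegree ≤ H.totalDegree := by
      intro i w
      refine (totalDegree_add _ _).trans (max_le (td_pderiv_le i H) ?_)
      refine (totalDegree_mul _ _).trans (by simp)
    refine (totalDegree_sub _ _).trans (max_le ?_ ?_)
    · refine (totalDegree_mul _ _).trans (add_le_add (td_pderiv_le _ _) (hi _ _))
    · refine (totalDegree_mul _ _).trans (add_le_add (td_pderiv_le _ _) (hi _ _))
  have hrel : IsRelPrime g (J u v) := (hg.isRelPrime_iff_not_dvd).2 huv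
  refine card_via_max T L b hdist (fun q => eval q g = 0 ∧ eval q (J u v) = 0) _ ?_ ?_
  · intro t ht
    obtain ⟨q, hqZ, hqs, hqH, hqmax⟩ := signmax {q | eval q g = 0}
      (isClosed_eq (MvPolynomial.continuous_eval g) continuous_const) L b hb2 u v t (hTg t ht) (hb3 t ht) (hne t ht)
    refine ⟨q, hqs, hqZ, ?_⟩
    have hset : {x | eval x g = eval q g} = {x : Fin 2 → ℝ | eval x g = 0} := by
      ext x; simp only [Set.mem_ofPred_eq]; rw [show eval q g = 0 from hqZ]
    have hext : IsLocalExtrOn (fun q : Fin 2 → ℝ =>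
        (eval q H)^2 * Real.exp (2*(u * q 0 + v * q 1))) {x | eval x g = eval q g} q := by
      rw [hset]; exact Or.inr hqmax
    obtain ⟨α, β, hαβ, heq⟩ := hext.exists_multipliers_of_hasStrictFDerivAt_1d (hasGrad g q)
      (hasGradExp H u v q)
    set E := 2 * eval q H * Real.exp (2*(u * q 0 + v * q 1)) with hE
    have hE0 : E ≠ 0 := by
      rw [hE]; exact mul_ne_zero (mul_ne_zero two_ne_zero hqH) (Real.exp_pos _).ne'
    have e0 := congrArg (fun l => l (Pi.single 0 1)) heq
    have e1 := congrArg (fun l => l (Pi.single 1 1)) heq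
    simp at e0 e1
    simp only [J, map_sub, map_mul, map_add, eval_C]
    set gx := eval q (pderiv 0 g)
    set gy := eval q (pderiv 1 g)
    set hx := eval q (pderiv 0 H)
    set hy := eval q (pderiv 1 H)
    set hh := eval q H
    have k1 : β * (E * (gx * (hy + v * hh) - gy * (hx + u * hh))) = 0 := by
      linear_combination gx * e1 - gy * e0
    have k2 : α * (E * (gx * (hy + v * hh) - gy * (hx + u * hh))) = 0 := by
      linear_combination E * (hy + v * hh) * e0 - E * (hx + u * hh) * e1
    by_contra hc
    have hz := mul_ne_zero hE0 hc
    exact hαβ (Prod.ext ((mul_eq_zero.1 k2).resolve_right hz) ((mul_eq_zero.1 k1).resolve_right hz))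
  · intro T' hT'
    refine (bezout2 g (J u v) hg.ne_zero hJ0 hrel T' (fun t ht => (hT' t ht).1)
      (fun t ht => (hT' t ht).2)).trans ?_
    exact Nat.mul_le_mul_left _ (by omega)

lemma curveClasses' (Φ : MvPolynomial (Fin 2) ℝ) (hΦ : Φ ≠ 0)
    (L : List (MvPolynomial (Fin 2) ℝ)) (T : Finset (Fin 2 → ℝ))
    (hTg : ∀ t ∈ T, eval t Φ = 0) (hne : ∀ t ∈ T, ∀ f ∈ L, eval t f ≠ 0)
    (hdist : ∀ s ∈ T, ∀ t ∈ T, SameSign L s t → s = t) :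
    T.card ≤ Φ.totalDegree * (Φ.totalDegree + L.prod.totalDegree + 2) := by
  classical
  set S := (UniqueFactorizationMonoid.factors Φ).toFinset with hS
  have hsub : T ⊆ S.biUnion fun g => T.filter fun t => eval t g = 0 := by
    intro t ht
    obtain ⟨g, hg, _, _, hz⟩ := irr_factor_zero t Φ hΦ (hTg t ht)
    exact Finset.mem_biUnion.2 ⟨g, Multiset.mem_toFinset.2 hg, Finset.mem_filter.2 ⟨ht, hz⟩⟩
  calc T.card ≤ (S.biUnion fun g => T.filter fun t => eval t g = 0).card := Finset.card_le_card hsub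
    _ ≤ ∑ g ∈ S, (T.filter fun t => eval t g = 0).card := Finset.card_biUnion_le
    _ ≤ ∑ g ∈ S, g.totalDegree * (Φ.totalDegree + L.prod.totalDegree + 2) := by
        refine Finset.sum_le_sum fun g hg => ?_
        rw [hS, Multiset.mem_toFinset] at hg
        refine (curveClasses g (UniqueFactorizationMonoid.irreducible_of_factor g hg) L _ ?_ ?_ ?_).trans ?_
        · intro t ht; exact (Finset.mem_filter.1 ht).2
        · intro t ht; exact hne t (Finset.mem_filter.1 ht).1
        · intro s hs t ht; exact hdist s (Finset.mem_filter.1 hs).1 t (Finset.mem_filter.1 ht).1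
        · have := totalDegree_le_of_dvd_of_isDomain (UniqueFactorizationMonoid.dvd_of_mem_factors hg) hΦ
          exact Nat.mul_le_mul_left _ (by omega)
    _ = (∑ g ∈ S, g.totalDegree) * (Φ.totalDegree + L.prod.totalDegree + 2) := by
        rw [Finset.sum_mul]
    _ ≤ Φ.totalDegree * (Φ.totalDegree + L.prod.totalDegree + 2) :=
        Nat.mul_le_mul_right _ (sum_factors_td Φ hΦ)

lemma planeClasses (L : List (MvPolynomial (Fin 2) ℝ)) (T : Finset (Fin 2 → ℝ))
    (hne : ∀ t ∈ T, ∀ f ∈ L, eval t f ≠ 0)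
    (hdist : ∀ s ∈ T, ∀ t ∈ T, SameSign L s t → s = t) :
    T.card ≤ (L.prod.totalDegree + 2) ^ 2 := by
  rcases T.eq_empty_or_nonempty with rfl | ⟨t0, ht0⟩
  · simp
  obtain ⟨b, hb1, hb2, hb3⟩ := discPoly T
  set H := b * L.prod with hH
  have hHt0 : eval t0 H ≠ 0 := by
    rw [hH, map_mul]
    exact mul_ne_zero (hb3 t0 ht0).ne' ((eval_list_prod_ne L t0).2 (hne t0 ht0))
  have hH0 : H ≠ 0 := by intro h; rw [h] at hHt0; simp at hHt0
  have hHd : H.totalDegree ≤ L.prod.totalDegree + 2 := by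
    have := totalDegree_mul b L.prod; rw [← hH] at this; omega
  let A : Fin 2 → ℝ → MvPolynomial (Fin 2) ℝ := fun i w => pderiv i H + C w * H
  have hAd : ∀ i w, (A i w).totalDegree ≤ H.totalDegree := by
    intro i w
    refine (totalDegree_add _ _).trans (max_le (td_pderiv_le i H) ?_)
    refine (totalDegree_mul _ _).trans (by simp)
  have hA0 : ∀ i w, w ≠ 0 → A i w ≠ 0 := by
    intro i w hw h
    have h1 : pderiv i H = C (-w) * H := by
      simp only [A] at h
      rw [C_neg]; linear_combination h
    have hne : C (-w) * H ≠ 0 := mul_ne_zero (by simpa using hw) hH0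
    have h2 := td_pderiv i H (by rw [h1]; exact hne)
    rw [h1, totalDegree_mul_of_isDomain (by simpa using hw) hH0] at h2
    simp at h2
  -- choose v
  have hbad : ({v : ℝ | v ≠ 0 ∧ ∀ g ∈ UniqueFactorizationMonoid.factors (A 0 1), ¬ g ∣ H → ¬ g ∣ A 1 v}).Nonempty := by
    classical
    have hfin : (⋃ g ∈ (UniqueFactorizationMonoid.factors (A 0 1)).toFinset, {v : ℝ | ¬ g ∣ H ∧ g ∣ A 1 v}).Finite := by
      refine Set.Finite.biUnion (Finset.finite_toSet _) fun g hg => ?_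
      apply Set.Subsingleton.finite
      rintro v ⟨hv1, hv2⟩ w ⟨_, hw2⟩
      by_contra hvw
      have h1 := dvd_sub hv2 hw2
      have h2 : A 1 v - A 1 w = C (v - w) * H := by simp only [A, C_sub]; ring
      rw [h2] at h1
      apply hv1
      have hu : IsUnit (C (v - w) : MvPolynomial (Fin 2) ℝ) :=
        (isUnit_iff_ne_zero.2 (sub_ne_zero.2 hvw)).map C
      exact (hu.dvd_mul_left).1 h1
    obtain ⟨v, hv⟩ := (hfin.union (Set.finite_singleton (0:ℝ))).exists_notMem
    refine ⟨v, fun h => hv (Or.inr h), ?_⟩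
    intro g hg hgH hd
    exact hv (Or.inl (Set.mem_biUnion (Multiset.mem_toFinset.2 hg) ⟨hgH, hd⟩))
  obtain ⟨v, hv0, hv⟩ := hbad
  have hAne := hA0 0 1 one_ne_zero
  have hBne := hA0 1 v hv0
  obtain ⟨A', B', h, hrel, hA', hB'⟩ :=
    UniqueFactorizationMonoid.exists_reduced_factors (A 0 1) hAne (A 1 v)
  have hA'0 : A' ≠ 0 := by rintro rfl; simp at hA'; exact hAne hA'.symm
  have hB'0 : B' ≠ 0 := by rintro rfl; simp at hB'; exact hBne hB'.symm
  have hh0 : h ≠ 0 := by rintro rfl; simp at hA'; exact hAne hA'.symm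
  refine card_via_max T L b hdist (fun q => eval q A' = 0 ∧ eval q B' = 0) _ ?_ ?_
  · intro t ht
    obtain ⟨q, hqZ, hqs, hqH, hqmax⟩ := signmax Set.univ isClosed_univ L b hb2 1 v t trivial (hb3 t ht) (hne t ht)
    refine ⟨q, hqs, ?_⟩
    rw [isLocalMaxOn_univ_iff] at hqmax
    have heq := hqmax.hasFDerivAt_eq_zero (hasGradExp H 1 v q).hasFDerivAt
    set E := 2 * eval q H * Real.exp (2*(1 * q 0 + v * q 1)) with hE
    have hE0 : E ≠ 0 := by
      rw [hE]; exact mul_ne_zero (mul_ne_zero two_ne_zero hqH) (Real.exp_pos _).ne'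
    have e0 : E * eval q (A 0 1) = 0 := by
      have := congrArg (fun l => l (Pi.single 0 1)) heq
      simpa [A] using this
    have e1 : E * eval q (A 1 v) = 0 := by
      have := congrArg (fun l => l (Pi.single 1 1)) heq
      simpa [A] using this
    have f0 := (mul_eq_zero.1 e0).resolve_left hE0
    have f1 := (mul_eq_zero.1 e1).resolve_left hE0
    have hhq : eval q h ≠ 0 := by
      intro hz
      obtain ⟨g, hg, hgi, hgd, hgz⟩ := irr_factor_zero q h hh0 hz
      obtain ⟨g', hg', hass⟩ := UniqueFactorizationMonoid.exists_mem_factors_of_dvd hAne hgi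
        (hgd.trans ⟨A', hA'.symm⟩)
      refine hv g' hg' ?_ ?_
      · intro hd
        exact hqH (eval_zero_of_dvd (hass.dvd.trans hd) hgz)
      · exact hass.symm.dvd.trans (hgd.trans ⟨B', hB'.symm⟩)
    rw [← hA', map_mul] at f0
    rw [← hB', map_mul] at f1
    exact ⟨(mul_eq_zero.1 f0).resolve_left hhq, (mul_eq_zero.1 f1).resolve_left hhq⟩
  · intro T' hT'
    refine (bezout2 A' B' hA'0 hB'0 hrel T' (fun t ht => (hT' t ht).1)
      (fun t ht => (hT' t ht).2)).trans ?_
    have h1 := (totalDegree_le_of_dvd_of_isDomain (f := A') ⟨h, by rw [← hA']; ring⟩ hAne).trans (hAd 0 1)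
    have h2 := (totalDegree_le_of_dvd_of_isDomain (f := B') ⟨h, by rw [← hB']; ring⟩ hBne).trans (hAd 1 v)
    rw [sq]
    exact Nat.mul_le_mul (h1.trans hHd) (h2.trans hHd)

section split
variable {ι : Type} [Fintype ι] [DecidableEq ι] {α : Type} [DecidableEq α]

abbrev rowFn (v : ι → α → Option ι → ℝ) (a : ι → α) (z : Option ι → ℝ) : Option ι → Option ι → ℝ :=
  fun r => r.elim z (fun i => v i (a i))

abbrev fdet (v : ι → α → Option ι → ℝ) (a : ι → α) (z : Option ι → ℝ) : ℝ :=
  Matrix.detRowAlternating (rowFn v a z)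

lemma fdet_lin (v : ι → α → Option ι → ℝ) (a : ι → α) (z : Option ι → ℝ) :
    fdet v a z = ∑ j, fdet v a (Pi.single j 1) * z j := by
  have h : ∀ z, fdet v a z =
      (MultilinearMap.toLinearMap (Matrix.detRowAlternating (n := Option ι) (R := ℝ)).toMultilinearMap
        (rowFn v a 0) none) z := by
    intro z
    rw [MultilinearMap.toLinearMap_apply]
    change Matrix.detRowAlternating (rowFn v a z) = Matrix.detRowAlternating _
    congr 1
    funext r
    cases r with
    | none => simp [rowFn]
    | some i => simp [rowFn]
  simp only [h]
  rw [LinearMap.pi_apply_eq_sum_univ]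
  refine Finset.sum_congr rfl fun j _ => ?_
  rw [smul_eq_mul, mul_comm]
  congr 2
  funext x
  simp [Pi.single_apply, eq_comm]

lemma fdet_swap (v : ι → α → Option ι → ℝ) (a : ι → α) (i : ι) (x y : α) :
    fdet v (Function.update a i x) (v i y) = - fdet v (Function.update a i y) (v i x) := by
  have h := AlternatingMap.map_swap (Matrix.detRowAlternating (n := Option ι) (R := ℝ))
    (rowFn v (Function.update a i x) (v i y)) (i := none) (j := some i) (by simp)
  rw [fdet, fdet, ← neg_eq_iff_eq_neg, ← h]
  congr 1
  funext r
  cases r with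
  | none => simp [rowFn]
  | some j =>
    by_cases hj : j = i
    · subst hj; simp [rowFn]
    · have : (Equiv.swap (none : Option ι) (some i)) (some j) = some j :=
        Equiv.swap_apply_of_ne_of_ne (by simp) (by simpa using hj)
      simp only [Function.comp, this, rowFn, Option.elim, Function.update_of_ne hj]

lemma sum_update (A : ι → Finset α) (i : ι) (g : (ι → α) → ℝ) :
    ∑ a ∈ Fintype.piFinset A, ∑ x ∈ A i, g (Function.update a i x) =
      (A i).card * ∑ a ∈ Fintype.piFinset A, g a := by
  rw [← Finset.sum_product']
  rw [← nsmul_eq_mul, ← Finset.sum_const, ← Finset.sum_product']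
  refine Finset.sum_bij' (fun p _ => (p.1 i, Function.update p.1 i p.2))
    (fun p _ => (Function.update p.2 i p.1, p.2 i)) ?_ ?_ ?_ ?_ ?_
  · rintro ⟨a, x⟩ h
    simp only [Finset.mem_product, Fintype.mem_piFinset] at h ⊢
    refine ⟨h.1 i, fun j => ?_⟩
    by_cases hj : j = i
    · subst hj; simpa using h.2
    · simpa [Function.update_of_ne hj] using h.1 j
  · rintro ⟨x, a⟩ h
    simp only [Finset.mem_product, Fintype.mem_piFinset] at h ⊢
    refine ⟨fun j => ?_, h.2 i⟩
    by_cases hj : j = i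
    · subst hj; simpa using h.1
    · simpa [Function.update_of_ne hj] using h.2 j
  · rintro ⟨a, x⟩ h; simp
  · rintro ⟨a, x⟩ h; simp
  · rintro ⟨a, x⟩ h; simp

open Classical in
lemma split0 (A : ι → Finset α) (v : ι → α → Option ι → ℝ)
    (hnd : ∃ a ∈ Fintype.piFinset A, ∃ z, fdet v a z ≠ 0) :
    ∃ c : Option ι → ℝ, c ≠ 0 ∧
      ∑ i, ((((A i).filter fun p => 0 < ∑ j, c j * v i p j).card : ℝ)^3 +
            (((A i).filter fun p => ∑ j, c j * v i p j < 0).card : ℝ)^3) ≤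
      (2/3) * ∑ i, ((A i).card : ℝ)^3 := by
  set nd : (ι → α) → ℝ := fun a => if ∃ z, fdet v a z ≠ 0 then 1 else 0 with hndd
  -- S i a : number of same-sign pairs
  set gp : ι → (ι → α) → α → α → ℝ := fun i a y w =>
    if 0 < fdet v a (v i y) * fdet v a (v i w) then 1 else 0 with hgp
  have key : ∀ i, ∑ a ∈ Fintype.piFinset A, nd a * ∑ y ∈ A i, ∑ w ∈ A i, gp i a y w ≤
      (2/3) * ((A i).card : ℝ)^2 * ∑ a ∈ Fintype.piFinset A, nd a := by
    intro i
    rcases (A i).eq_empty_or_nonempty with h0 | h0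
    · simp [h0]
    have hpos : (0:ℝ) < (A i).card := by exact_mod_cast h0.card_pos
    rw [← mul_le_mul_iff_right₀ hpos, ← sum_update A i]
    rw [show ((A i).card : ℝ) * (2/3 * ((A i).card : ℝ)^2 * ∑ a ∈ Fintype.piFinset A, nd a) =
      2/3 * ((A i).card : ℝ)^2 * (((A i).card : ℝ) * ∑ a ∈ Fintype.piFinset A, nd a) by ring]
    rw [← sum_update A i, Finset.mul_sum]
    refine Finset.sum_le_sum fun a _ => ?_
    set B : α → α → ℝ := fun x y => fdet v (Function.update a i x) (v i y) with hB
    have hanti : ∀ x y, B x y = - B y x := fun x y => fdet_swap v a i x y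
    set N : α → ℝ := fun x => nd (Function.update a i x) with hN
    set G : α → α → α → ℝ := fun x y w =>
      N x * (2 - 3 * (if 0 < B x y * B x w then 1 else 0)) with hG
    have hN01 : ∀ x, N x = 1 ∨ (N x = 0 ∧ ∀ y, B x y = 0) := by
      intro x
      simp only [hN, hndd]
      split_ifs with h
      · exact Or.inl rfl
      · push Not at h
        exact Or.inr ⟨rfl, fun y => h _⟩
    have hbr : ∀ x y w, 0 ≤ G x y w + G y x w + G w x y := by
      intro x y w
      have hone : ∀ x y w, N x = 1 → -1 ≤ G x y w := by
        intro x y w h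
        simp only [hG, h]; split_ifs <;> norm_num
      have htwo : ∀ x y w, N x = 1 → B x y * B x w ≤ 0 → G x y w = 2 := by
        intro x y w h h'
        simp only [hG, h]; rw [if_neg (not_lt.2 h')]; norm_num
      have hzero : ∀ x y w, N x = 0 → G x y w = 0 := by
        intro x y w h; simp [hG, h]
      rcases hN01 x with hx | ⟨hx, hx'⟩ <;> rcases hN01 y with hy | ⟨hy, hy'⟩ <;>
        rcases hN01 w with hw | ⟨hw, hw'⟩
      · -- all nondegenerate
        by_cases h1 : B x y * B x w ≤ 0
        · have := htwo x y w hx h1; have := hone y x w hy; have := hone w x y hw; linarith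
        by_cases h2 : B y x * B y w ≤ 0
        · have := htwo y x w hy h2; have := hone x y w hx; have := hone w x y hw; linarith
        have h3 : B w x * B w y ≤ 0 := by
          push Not at h1 h2
          have e1 := hanti y x
          have e2 := hanti w x
          have e3 := hanti w y
          rw [e2, e3]
          rw [e1] at h2
          by_contra hc
          push Not at hc
          have := mul_pos (mul_pos h1 h2) hc
          nlinarith [sq_nonneg (B x y * B x w * B y w)]
        have := htwo w x y hw h3; have := hone x y w hx; have := hone y x w hy; linarith
      · have := htwo x y w hx (by rw [hanti x w, hw']; simp)
        have := htwo y x w hy (by rw [hanti y w, hw']; simp)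
        have := hzero w x y hw; linarith
      · have := htwo x y w hx (by rw [hanti x y, hy']; simp)
        have := htwo w x y hw (by rw [hanti w y, hy']; simp)
        have := hzero y x w hy; linarith
      · have := htwo x y w hx (by rw [hanti x y, hy']; simp)
        have := hzero w x y hw
        have := hzero y x w hy; linarith
      · have := htwo y x w hy (by rw [hanti y x, hx']; simp)
        have := htwo w x y hw (by rw [hanti w x, hx']; simp)
        have := hzero x y w hx; linarith
      · have := htwo y x w hy (by rw [hanti y x, hx']; simp)
        have := hzero w x y hw
        have := hzero x y w hx; linarith
      · have := htwo w x y hw (by rw [hanti w x, hx']; simp)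
        have := hzero y x w hy
        have := hzero x y w hx; linarith
      · have := hzero w x y hw
        have := hzero y x w hy
        have := hzero x y w hx; linarith
    have hsumG : 0 ≤ ∑ x ∈ A i, ∑ y ∈ A i, ∑ w ∈ A i, G x y w := by
      have h1 : 0 ≤ ∑ x ∈ A i, ∑ y ∈ A i, ∑ w ∈ A i, (G x y w + G y x w + G w x y) :=
        Finset.sum_nonneg fun x _ => Finset.sum_nonneg fun y _ => Finset.sum_nonneg fun w _ => hbr x y w
      simp only [Finset.sum_add_distrib] at h1
      have h2 : ∑ x ∈ A i, ∑ y ∈ A i, ∑ w ∈ A i, G y x w = ∑ x ∈ A i, ∑ y ∈ A i, ∑ w ∈ A i, G x y w :=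
        Finset.sum_comm
      have h3 : ∑ x ∈ A i, ∑ y ∈ A i, ∑ w ∈ A i, G w x y = ∑ x ∈ A i, ∑ y ∈ A i, ∑ w ∈ A i, G x y w := by
        calc _ = ∑ x ∈ A i, ∑ w ∈ A i, ∑ y ∈ A i, G w x y :=
              Finset.sum_congr rfl fun x _ => Finset.sum_comm
          _ = _ := Finset.sum_comm
      linarith
    have hexp : ∑ x ∈ A i, ∑ y ∈ A i, ∑ w ∈ A i, G x y w =
        2 * ((A i).card : ℝ)^2 * ∑ x ∈ A i, N x -
        3 * ∑ x ∈ A i, N x * ∑ y ∈ A i, ∑ w ∈ A i, gp i (Function.update a i x) y w := by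
      rw [Finset.mul_sum, Finset.mul_sum, ← Finset.sum_sub_distrib]
      refine Finset.sum_congr rfl fun x _ => ?_
      simp only [hG, hgp, hB]
      simp only [← Finset.mul_sum, Finset.sum_sub_distrib, Finset.sum_const, nsmul_eq_mul]
      ring
    rw [hexp] at hsumG
    linarith
  -- averaging
  have hex : ∃ a ∈ Fintype.piFinset A, nd a = 1 ∧
      ∑ i, ((A i).card : ℝ) * ∑ y ∈ A i, ∑ w ∈ A i, gp i a y w ≤ (2/3) * ∑ i, ((A i).card : ℝ)^3 := by
    by_contra hcon
    push Not at hcon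
    obtain ⟨a0, ha0, hz⟩ := hnd
    have hlt : ∑ a ∈ Fintype.piFinset A, nd a * ((2/3) * ∑ i, ((A i).card : ℝ)^3) <
        ∑ a ∈ Fintype.piFinset A, nd a *
          ∑ i, ((A i).card : ℝ) * ∑ y ∈ A i, ∑ w ∈ A i, gp i a y w := by
      refine Finset.sum_lt_sum ?_ ⟨a0, ha0, ?_⟩
      · intro a ha
        by_cases h : nd a = 1
        · rw [h, one_mul, one_mul]; exact (hcon a ha h).le
        · have : nd a = 0 := by
            simp only [hndd] at h ⊢
            split_ifs at h ⊢ <;> simp_all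
          simp [this]
      · have : nd a0 = 1 := by simp only [hndd]; exact if_pos hz
        rw [this, one_mul, one_mul]; exact hcon a0 ha0 this
    have h2 : ∑ a ∈ Fintype.piFinset A, nd a *
          ∑ i, ((A i).card : ℝ) * ∑ y ∈ A i, ∑ w ∈ A i, gp i a y w =
        ∑ i, ((A i).card : ℝ) * ∑ a ∈ Fintype.piFinset A, nd a * ∑ y ∈ A i, ∑ w ∈ A i, gp i a y w := by
      simp only [Finset.mul_sum]
      rw [Finset.sum_comm]
      refine Finset.sum_congr rfl fun i _ => Finset.sum_congr rfl fun a _ =>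
        Finset.sum_congr rfl fun y _ => Finset.sum_congr rfl fun w _ => by ring
    have h3 : ∑ i, ((A i).card : ℝ) * ∑ a ∈ Fintype.piFinset A, nd a * ∑ y ∈ A i, ∑ w ∈ A i, gp i a y w
        ≤ ∑ i, ((A i).card : ℝ) * ((2/3) * ((A i).card : ℝ)^2 * ∑ a ∈ Fintype.piFinset A, nd a) :=
      Finset.sum_le_sum fun i _ => mul_le_mul_of_nonneg_left (key i) (Nat.cast_nonneg _)
    have h4 : ∑ i, ((A i).card : ℝ) * ((2/3) * ((A i).card : ℝ)^2 * ∑ a ∈ Fintype.piFinset A, nd a) =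
        ∑ a ∈ Fintype.piFinset A, nd a * ((2/3) * ∑ i, ((A i).card : ℝ)^3) := by
      rw [← Finset.sum_mul, Finset.mul_sum, Finset.mul_sum]
      refine Finset.sum_congr rfl fun i _ => by ring
    linarith
  obtain ⟨a, ha, hnda, hle⟩ := hex
  have hz : ∃ z, fdet v a z ≠ 0 := by
    by_contra h; simp only [hndd] at hnda; rw [if_neg h] at hnda; norm_num at hnda
  refine ⟨fun j => fdet v a (Pi.single j 1), ?_, ?_⟩
  · intro hc
    obtain ⟨z, hz⟩ := hz
    apply hz
    rw [fdet_lin]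
    refine Finset.sum_eq_zero fun j _ => ?_
    have := congrFun hc j
    simp only [Pi.zero_apply] at this
    rw [this, zero_mul]
  · refine le_trans (Finset.sum_le_sum fun i _ => ?_) hle
    simp only [← fdet_lin]
    set Pp := (A i).filter fun p => 0 < fdet v a (v i p) with hPp
    set Pm := (A i).filter fun p => fdet v a (v i p) < 0 with hPm
    have hS : ((Pp.card : ℝ)^2 + (Pm.card : ℝ)^2) = ∑ y ∈ A i, ∑ w ∈ A i, gp i a y w := by
      have : ∀ y w, gp i a y w = (if 0 < fdet v a (v i y) then 1 else 0) * (if 0 < fdet v a (v i w) then 1 else 0)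
          + (if fdet v a (v i y) < 0 then 1 else 0) * (if fdet v a (v i w) < 0 then 1 else 0) := by
        intro y w
        simp only [hgp, mul_pos_iff]
        generalize fdet v a (v i y) = s
        generalize fdet v a (v i w) = t
        rcases lt_trichotomy s 0 with h1 | h1 | h1 <;> rcases lt_trichotomy t 0 with h2 | h2 | h2 <;>
          simp [h1, h2, not_lt_of_gt]
      simp only [this, Finset.sum_add_distrib, ← Finset.mul_sum, ← Finset.sum_mul, Finset.sum_boole]
      ring
    rw [← hS]
    have h1 : (Pp.card : ℝ) ≤ (A i).card := by exact_mod_cast Finset.card_le_card (Finset.filter_subset _ _)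
    have h2 : (Pm.card : ℝ) ≤ (A i).card := by exact_mod_cast Finset.card_le_card (Finset.filter_subset _ _)
    nlinarith [sq_nonneg (Pp.card : ℝ), sq_nonneg (Pm.card : ℝ)]

end split

open Classical in
lemma split1 {ι : Type} [Fintype ι] {α : Type} (A : ι → Finset α) (hA : ∀ i, (A i).Nonempty)
    (v : α → Option ι → ℝ) :
    ∃ c : Option ι → ℝ, c ≠ 0 ∧
      ∑ i, ((((A i).filter fun p => 0 < ∑ j, c j * v p j).card : ℝ)^3 +
            (((A i).filter fun p => ∑ j, c j * v p j < 0).card : ℝ)^3) ≤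
      (2/3) * ∑ i, ((A i).card : ℝ)^3 := by
  choose a ha using hA
  set w : ℝ → ι → α → Option ι → ℝ := fun ε i p => v p + ε • Pi.single (some i) 1 with hw
  set M : Matrix (Option ι) (Option ι) ℝ := fun r => r.elim 0 (fun i => - v (a i)) with hM
  have hnd : ∀ ε : ℝ, M.charpoly.eval ε ≠ 0 → ∃ a ∈ Fintype.piFinset A, ∃ z, fdet (w ε) a z ≠ 0 := by
    intro ε hε
    refine ⟨a, Fintype.mem_piFinset.2 ha, ε • Pi.single none 1, ?_⟩
    rw [Matrix.eval_charpoly] at hε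
    convert hε using 1
    change Matrix.det _ = _
    congr 1
    funext r s
    rw [Matrix.sub_apply, Matrix.scalar_apply, Matrix.diagonal_apply]
    cases r with
    | none =>
      rw [show M none s = 0 from rfl]
      change (ε • Pi.single none 1 : Option ι → ℝ) s = _
      simp [Pi.single_apply, eq_comm]
    | some i =>
      rw [show M (some i) s = - v (a i) s from rfl]
      change (v (a i) + ε • Pi.single (some i) 1 : Option ι → ℝ) s = _
      simp [Pi.single_apply, eq_comm, add_comm]
  have hseq : ∀ n : ℕ, ∃ ε : ℝ, 0 < ε ∧ ε < 1 / ((n:ℝ) + 1) ∧ M.charpoly.eval ε ≠ 0 := by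
    intro n
    have hinf : (Set.Ioo (0:ℝ) (1 / ((n:ℝ)+1))).Infinite := Set.Ioo_infinite (by positivity)
    have hfin : {x | M.charpoly.eval x = 0}.Finite := by
      have h := M.charpoly.roots.toFinset.finite_toSet
      refine h.subset fun x hx => ?_
      simp only [Finset.mem_coe, Multiset.mem_toFinset]
      rw [Polynomial.mem_roots (Matrix.charpoly_monic M).ne_zero]
      exact hx
    obtain ⟨x, hx, hx2⟩ := hinf.exists_notMem_finite hfin
    exact ⟨x, hx.1, hx.2, hx2⟩
  choose ε hε0 hε1 hε2 using hseq
  have hc := fun n => split0 A (w (ε n)) (hnd _ (hε2 n))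
  choose c hc0 hc1 using hc
  set d : ℕ → Option ι → ℝ := fun n => (‖c n‖)⁻¹ • c n with hd
  have hdS : ∀ n, d n ∈ Metric.sphere (0 : Option ι → ℝ) 1 := by
    intro n
    rw [mem_sphere_zero_iff_norm, hd]
    simp only [norm_smul, norm_inv, norm_norm]
    exact inv_mul_cancel₀ (norm_ne_zero_iff.2 (hc0 n))
  obtain ⟨c', hc'S, φ, hφ, hlim⟩ := (isCompact_sphere (0 : Option ι → ℝ) 1).tendsto_subseq hdS
  refine ⟨c', ?_, ?_⟩
  · rintro rfl
    rw [mem_sphere_zero_iff_norm] at hc'S; simp at hc'S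
  have hε : Filter.Tendsto ε Filter.atTop (nhds 0) :=
    squeeze_zero (fun n => (hε0 n).le) (fun n => (hε1 n).le) tendsto_one_div_add_atTop_nhds_zero_nat
  have hconv : ∀ i p, Filter.Tendsto (fun n => ∑ j, d (φ n) j * w (ε (φ n)) i p j) Filter.atTop
      (nhds (∑ j, c' j * v p j)) := by
    intro i p
    refine tendsto_finsetSum _ fun j _ => ?_
    have h1 : Filter.Tendsto (fun n => d (φ n) j) Filter.atTop (nhds (c' j)) :=
      (tendsto_pi_nhds.1 hlim) j
    have h2 : Filter.Tendsto (fun n => w (ε (φ n)) i p j) Filter.atTop (nhds (v p j)) := by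
      have h3 : Filter.Tendsto (fun n => v p j + ε (φ n) * (Pi.single (some i) 1 : Option ι → ℝ) j)
        Filter.atTop (nhds (v p j + 0 * (Pi.single (some i) 1 : Option ι → ℝ) j)) :=
        ((hε.comp hφ.tendsto_atTop).mul_const _).const_add _
      simpa [hw] using h3
    exact h1.mul h2
  have hev : ∀ᶠ n in Filter.atTop, ∀ i, ∀ p ∈ A i,
      (0 < ∑ j, c' j * v p j → 0 < ∑ j, d (φ n) j * w (ε (φ n)) i p j) ∧
      (∑ j, c' j * v p j < 0 → ∑ j, d (φ n) j * w (ε (φ n)) i p j < 0) := by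
    rw [Filter.eventually_all]
    intro i
    rw [Filter.eventually_all_finset]
    intro p _
    refine Filter.Eventually.and ?_ ?_
    · by_cases h : 0 < ∑ j, c' j * v p j
      · filter_upwards [(hconv i p).eventually (lt_mem_nhds h)] with n hn _ using hn
      · exact Filter.Eventually.of_forall fun n hn => absurd hn h
    · by_cases h : ∑ j, c' j * v p j < 0
      · filter_upwards [(hconv i p).eventually (gt_mem_nhds h)] with n hn _ using hn
      · exact Filter.Eventually.of_forall fun n hn => absurd hn h
  obtain ⟨n, hn⟩ := hev.exists
  have hdc : ∀ i p, ∑ j, d (φ n) j * w (ε (φ n)) i p j =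
      (‖c (φ n)‖)⁻¹ * ∑ j, c (φ n) j * w (ε (φ n)) i p j := by
    intro i p
    rw [Finset.mul_sum]
    refine Finset.sum_congr rfl fun j _ => ?_
    simp only [hd, Pi.smul_apply, smul_eq_mul]; ring
  have hpos : 0 < (‖c (φ n)‖)⁻¹ := inv_pos.2 (norm_pos_iff.2 (hc0 _))
  refine le_trans (Finset.sum_le_sum fun i _ => ?_) (hc1 (φ n))
  have h1 : ((A i).filter fun p => 0 < ∑ j, c' j * v p j).card ≤
      ((A i).filter fun p => 0 < ∑ j, c (φ n) j * w (ε (φ n)) i p j).card := by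
    refine Finset.card_le_card fun p hp => ?_
    rw [Finset.mem_filter] at hp ⊢
    refine ⟨hp.1, ?_⟩
    have := (hn i p hp.1).1 hp.2
    rw [hdc] at this
    exact pos_of_mul_pos_right this hpos.le
  have h2 : ((A i).filter fun p => ∑ j, c' j * v p j < 0).card ≤
      ((A i).filter fun p => ∑ j, c (φ n) j * w (ε (φ n)) i p j < 0).card := by
    refine Finset.card_le_card fun p hp => ?_
    rw [Finset.mem_filter] at hp ⊢
    refine ⟨hp.1, ?_⟩
    have := (hn i p hp.1).2 hp.2
    rw [hdc] at this
    by_contra hcon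
    push Not at hcon
    have := mul_nonneg hpos.le hcon
    linarith
  have h1' : ((((A i).filter fun p => 0 < ∑ j, c' j * v p j).card : ℕ):ℝ) ≤ _ := Nat.cast_le.2 h1
  have h2' : ((((A i).filter fun p => ∑ j, c' j * v p j < 0).card : ℕ):ℝ) ≤ _ := Nat.cast_le.2 h2
  exact add_le_add (pow_le_pow_left₀ (Nat.cast_nonneg _) h1' 3) (pow_le_pow_left₀ (Nat.cast_nonneg _) h2' 3)

section part
variable {σ : Type}

open Classical in
def cl (P : Finset (σ → ℝ)) (L : List (MvPolynomial σ ℝ)) (x : σ → ℝ) : Finset (σ → ℝ) :=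
  P.filter fun y => SameSign L x y

def Phi (P : Finset (σ → ℝ)) (L : List (MvPolynomial σ ℝ)) : ℝ :=
  ∑ x ∈ P, ((cl P L x).card : ℝ)^2

open Classical in
def nz (P : Finset (σ → ℝ)) (L : List (MvPolynomial σ ℝ)) : Finset (σ → ℝ) :=
  P.filter fun y => ∀ f ∈ L, eval y f ≠ 0

lemma sameSign_self {L : List (MvPolynomial σ ℝ)} {x : σ → ℝ} (h : ∀ f ∈ L, eval x f ≠ 0) :
    SameSign L x x := fun f hf => mul_self_pos.2 (h f hf)

lemma sameSign_left {L : List (MvPolynomial σ ℝ)} {x y : σ → ℝ} (h : SameSign L x y) :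
    ∀ f ∈ L, eval x f ≠ 0 := fun f hf h0 => by
  have := h f hf; rw [h0] at this; simp at this

open Classical in
def clset (P : Finset (σ → ℝ)) (L : List (MvPolynomial σ ℝ)) : Finset (Finset (σ → ℝ)) :=
  (nz P L).image (cl P L)

lemma cl_eq {P : Finset (σ → ℝ)} {L : List (MvPolynomial σ ℝ)} {x y : σ → ℝ} (h : SameSign L x y) :
    cl P L x = cl P L y := by
  classical
  ext z
  simp only [cl, Finset.mem_filter]
  exact and_congr_right fun _ => ⟨fun h2 => h.symm.trans h2, fun h2 => h.trans h2⟩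

open Classical in
lemma fiber_cl {P : Finset (σ → ℝ)} {L : List (MvPolynomial σ ℝ)} {C} (hC : C ∈ clset P L) :
    (nz P L).filter (fun x => cl P L x = C) = C := by
  obtain ⟨y, hy, rfl⟩ := Finset.mem_image.1 hC
  simp only [nz, Finset.mem_filter] at hy
  ext x
  simp only [Finset.mem_filter, nz]
  constructor
  · rintro ⟨⟨h1, h2⟩, h3⟩
    rw [← h3]
    simp only [cl, Finset.mem_filter]
    exact ⟨h1, sameSign_self h2⟩
  · intro h
    simp only [cl, Finset.mem_filter] at h
    exact ⟨⟨h.1, sameSign_left h.2.symm⟩, cl_eq h.2.symm⟩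

lemma sum_nz (P : Finset (σ → ℝ)) (L : List (MvPolynomial σ ℝ)) (g : (σ → ℝ) → ℝ) :
    ∑ x ∈ nz P L, g x = ∑ C ∈ clset P L, ∑ x ∈ C, g x := by
  classical
  rw [← Finset.sum_fiberwise_of_maps_to (s := nz P L) (t := clset P L) (g := cl P L)
    (fun x hx => Finset.mem_image_of_mem _ hx)]
  exact Finset.sum_congr rfl fun C hC => by rw [fiber_cl hC]

lemma sum_clcard (P : Finset (σ → ℝ)) (L : List (MvPolynomial σ ℝ)) :
    ∑ C ∈ clset P L, (C.card : ℝ) ≤ P.card := by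
  classical
  have := sum_nz P L (fun _ => 1)
  simp only [Finset.sum_const, nsmul_eq_mul, mul_one] at this
  rw [← this]
  exact_mod_cast Finset.card_le_card (Finset.filter_subset _ _)

lemma Phi_nz (P : Finset (σ → ℝ)) (L L' : List (MvPolynomial σ ℝ)) (h : ∀ f ∈ L, f ∈ L'):
    Phi P L' = ∑ x ∈ nz P L, ((cl P L' x).card : ℝ)^2 := by
  classical
  rw [Phi, nz]
  symm
  refine Finset.sum_subset (Finset.filter_subset _ _) fun x hx hx2 => ?_
  have : cl P L' x = ∅ := by
    rw [cl, Finset.filter_eq_empty_iff]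
    intro y _ hs
    exact hx2 (Finset.mem_filter.2 ⟨hx, fun f hf => sameSign_left hs f (h f hf)⟩)
  rw [this]; simp

lemma cl_mem {P : Finset (σ → ℝ)} {L : List (MvPolynomial σ ℝ)} {C} (hC : C ∈ clset P L)
    {x} (hx : x ∈ C) : cl P L x = C := by
  classical
  rw [← fiber_cl hC, Finset.mem_filter] at hx
  exact hx.2

lemma Phi_eq (P : Finset (σ → ℝ)) (L : List (MvPolynomial σ ℝ)) :
    Phi P L = ∑ C ∈ clset P L, (C.card : ℝ)^3 := by
  rw [Phi_nz P L L (fun _ h => h), sum_nz]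
  refine Finset.sum_congr rfl fun C hC => ?_
  rw [Finset.sum_congr rfl fun x hx => by rw [cl_mem hC hx]]
  rw [Finset.sum_const, nsmul_eq_mul]; ring

open Classical in
lemma Phi_cons (P : Finset (σ → ℝ)) (L : List (MvPolynomial σ ℝ)) (f : MvPolynomial σ ℝ) :
    Phi P (f :: L) = ∑ C ∈ clset P L, (((C.filter fun p => 0 < eval p f).card : ℝ)^3 +
      ((C.filter fun p => eval p f < 0).card : ℝ)^3) := by
  rw [Phi_nz P L (f :: L) (fun _ h => List.mem_cons_of_mem _ h), sum_nz]
  refine Finset.sum_congr rfl fun C hC => ?_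
  have key : ∀ x ∈ C, ((cl P (f::L) x).card : ℝ)^2 =
      (if 0 < eval x f then ((C.filter fun p => 0 < eval p f).card : ℝ)^2 else 0) +
      (if eval x f < 0 then ((C.filter fun p => eval p f < 0).card : ℝ)^2 else 0) := by
    intro x hx
    have hcl : cl P (f::L) x = C.filter fun y => 0 < eval x f * eval y f := by
      conv_rhs => rw [← cl_mem hC hx]
      ext y
      rw [Finset.mem_filter, cl, cl, Finset.mem_filter, Finset.mem_filter]
      simp only [SameSign, List.forall_mem_cons]
      tauto
    rw [hcl]
    rcases lt_trichotomy (eval x f) 0 with h | h | h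
    · rw [if_neg h.not_gt, if_pos h, zero_add]
      congr 3
      ext y
      simp [Finset.mem_filter, mul_pos_iff, h, h.not_gt]
    · simp [h]
    · rw [if_pos h, if_neg h.not_gt, add_zero]
      congr 3
      ext y
      simp [Finset.mem_filter, mul_pos_iff, h, h.not_gt]
  rw [Finset.sum_congr rfl key, Finset.sum_add_distrib, ← Finset.sum_filter, ← Finset.sum_filter]
  rw [Finset.sum_const, Finset.sum_const, nsmul_eq_mul, nsmul_eq_mul]
  ring

lemma filt_le (C : Finset (σ → ℝ)) (f : MvPolynomial σ ℝ) [DecidablePred fun p => 0 < eval p f]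
   [DecidablePred fun p => eval p f < 0] :
  (((C.filter fun p => 0 < eval p f).card : ℝ)^3 +
      ((C.filter fun p => eval p f < 0).card : ℝ)^3) ≤ (C.card : ℝ)^3 := by
  have h : (C.filter fun p => 0 < eval p f).card + (C.filter fun p => eval p f < 0).card ≤ C.card := by
    classical
    rw [← Finset.card_union_of_disjoint]
    · exact Finset.card_le_card (Finset.union_subset (Finset.filter_subset _ _) (Finset.filter_subset _ _))
    · rw [Finset.disjoint_filter]
      intro x _ h1 h2; linarith
  have h' : ((C.filter fun p => 0 < eval p f).card : ℝ) + (C.filter fun p => eval p f < 0).card ≤ C.card := by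
    exact_mod_cast h
  set a : ℝ := ((C.filter fun p => 0 < eval p f).card : ℝ)
  set b : ℝ := ((C.filter fun p => eval p f < 0).card : ℝ)
  have ha : 0 ≤ a := Nat.cast_nonneg _
  have hb : 0 ≤ b := Nat.cast_nonneg _
  have := pow_le_pow_left₀ (add_nonneg ha hb) h' 3
  refine le_trans ?_ this
  nlinarith [mul_nonneg ha hb, mul_nonneg (mul_nonneg ha hb) ha, mul_nonneg (mul_nonneg ha hb) hb]

lemma step (P : Finset (σ → ℝ)) (L : List (MvPolynomial σ ℝ)) (U : Submodule ℝ (MvPolynomial σ ℝ))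
    (τ : ℝ) (hτ : 0 < τ) (hτ2 : τ ≤ finrank ℝ U) :
    ∃ f ∈ U, f ≠ 0 ∧ Phi P (f :: L) ≤ (2/3) * Phi P L + (P.card : ℝ)^3 / τ^2 := by
  classical
  set H := (clset P L).filter fun C => (P.card : ℝ) < C.card * τ with hH
  have hHc : (H.card : ℝ) < τ := by
    rcases H.eq_empty_or_nonempty with h | h
    · rw [h]; simpa using hτ
    have h1 : ∑ C ∈ H, (P.card : ℝ) < ∑ C ∈ H, (C.card : ℝ) * τ :=
      Finset.sum_lt_sum_of_nonempty h fun C hC => (Finset.mem_filter.1 hC).2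
    rw [← Finset.sum_mul, Finset.sum_const, nsmul_eq_mul] at h1
    have h2 : ∑ C ∈ H, (C.card : ℝ) ≤ P.card :=
      (Finset.sum_le_sum_of_subset_of_nonneg (Finset.filter_subset _ _) fun _ _ _ => Nat.cast_nonneg _).trans
        (sum_clcard P L)
    have h3 : (H.card : ℝ) * P.card < P.card * τ := lt_of_lt_of_le h1 (by gcongr)
    rw [mul_comm] at h3
    exact lt_of_mul_lt_mul_left h3 (Nat.cast_nonneg _)
  have hcard : H.card + 1 ≤ finrank ℝ U := by
    have : (H.card : ℝ) < finrank ℝ U := lt_of_lt_of_le hHc hτ2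
    exact_mod_cast this
  haveI : Module.Finite ℝ U := Module.finite_of_finrank_pos (by omega)
  obtain ⟨e⟩ : Nonempty (Option H ↪ Fin (finrank ℝ U)) :=
    Function.Embedding.nonempty_of_card_le (by simpa using hcard)
  set bs := Module.finBasis ℝ U
  obtain ⟨c, hc0, hc⟩ := split1 (ι := H) (fun C => C.1) (fun C => by
      obtain ⟨y, hy, h⟩ := Finset.mem_image.1 (Finset.mem_filter.1 C.2).1
      refine ⟨y, ?_⟩
      rw [← h]
      simp only [nz, Finset.mem_filter] at hy
      simp only [cl, Finset.mem_filter]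
      exact ⟨hy.1, sameSign_self hy.2⟩)
    (fun p j => eval p (bs (e j)).1)
  set g : U := ∑ j, c j • bs (e j) with hg
  have hge : ∀ p, eval p g.1 = ∑ j, c j * eval p (bs (e j)).1 := by
    intro p
    rw [hg]
    simp [map_sum, smul_eval]
  refine ⟨g.1, g.2, ?_, ?_⟩
  · intro h
    apply hc0
    have h0 : g = 0 := Subtype.ext h
    have hli := bs.linearIndependent.comp e e.injective
    rw [Fintype.linearIndependent_iff] at hli
    funext j
    exact hli c h0 j
  · simp only [← hge] at hc
    rw [Phi_cons, Phi_eq]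
    rw [← Finset.sum_filter_add_sum_filter_not (clset P L) (fun C => (P.card : ℝ) < C.card * τ)]
    have e1 := Finset.sum_coe_sort H (fun C => (((C.filter fun p => 0 < eval p g.1).card : ℝ)^3 +
      ((C.filter fun p => eval p g.1 < 0).card : ℝ)^3))
    have e2 := Finset.sum_coe_sort H (fun C => (C.card : ℝ)^3)
    rw [e1, e2] at hc
    refine add_le_add (hc.trans ?_) ?_
    · gcongr
      exact Finset.filter_subset _ _
    · calc _ ≤ ∑ C ∈ (clset P L).filter (fun C => ¬ (P.card : ℝ) < C.card * τ), (P.card/τ)^2 * (C.card : ℝ) := by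
            refine Finset.sum_le_sum fun C hC => (filt_le C g.1).trans ?_
            have := (Finset.mem_filter.1 hC).2
            push Not at this
            have h2 : (C.card : ℝ) ≤ P.card / τ := by rwa [le_div_iff₀ hτ]
            calc (C.card : ℝ)^3 = (C.card : ℝ)^2 * C.card := by ring
              _ ≤ _ := by gcongr
        _ ≤ ∑ C ∈ (clset P L), (P.card/τ)^2 * (C.card : ℝ) :=
            Finset.sum_le_sum_of_subset_of_nonneg (Finset.filter_subset _ _) fun _ _ _ => by positivity
        _ ≤ (P.card/τ)^2 * P.card := by
            rw [← Finset.mul_sum]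
            gcongr
            exact sum_clcard P L
        _ = _ := by field_simp

lemma stepN (P : Finset (σ → ℝ)) (L : List (MvPolynomial σ ℝ)) (U : Submodule ℝ (MvPolynomial σ ℝ))
    (τ : ℝ) (hτ : 0 < τ) (hτ2 : τ ≤ finrank ℝ U) (k : ℕ) :
    ∃ L' : List (MvPolynomial σ ℝ), L'.length = k ∧ (∀ f ∈ L', f ∈ U ∧ f ≠ 0) ∧
      Phi P (L' ++ L) ≤ (2/3)^k * Phi P L + 3 * ((P.card : ℝ)^3 / τ^2) := by
  have hX : 0 ≤ (P.card : ℝ)^3 / τ^2 := by positivity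
  induction k with
  | zero => exact ⟨[], rfl, by simp, by simpa using hX⟩
  | succ k ih =>
    obtain ⟨L', h1, h2, h3⟩ := ih
    obtain ⟨f, hf, hf0, h⟩ := step P (L' ++ L) U τ hτ hτ2
    refine ⟨f :: L', by simp [h1], ?_, ?_⟩
    · intro g hg
      rcases List.mem_cons.1 hg with rfl | hg
      · exact ⟨hf, hf0⟩
      · exact h2 g hg
    · rw [List.cons_append]
      refine h.trans ?_
      rw [pow_succ (2/3 : ℝ) k]
      linarith

theorem partition (P : Finset (σ → ℝ)) (U : ℕ → Submodule ℝ (MvPolynomial σ ℝ)) (τ : ℕ → ℝ)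
    (h0 : ∀ i, 0 < τ i) (h1 : τ 0 ≤ 1) (h2 : ∀ i, τ (i+1) ≤ 8 * τ i)
    (h3 : ∀ i, τ i ≤ finrank ℝ (U i)) (h4 : ∀ i, ∀ f ∈ U i, f.totalDegree ≤ 2^i) (I : ℕ) :
    ∃ L : List (MvPolynomial σ ℝ), (∀ f ∈ L, ∃ i ≤ I, f ∈ U i ∧ f ≠ 0) ∧
      (L.map totalDegree).sum ≤ 22 * 2^I ∧ Phi P L ≤ 12 * (P.card : ℝ)^3 / (τ I)^2 := by
  induction I with
  | zero =>
    refine ⟨[], by simp, by simp, ?_⟩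
    have : Phi P ([] : List (MvPolynomial σ ℝ)) = (P.card : ℝ)^3 := by
      simp only [Phi, cl, SameSign]
      simp; ring
    rw [this, le_div_iff₀ (by have := h0 0; positivity)]
    have hh : (τ 0)^2 ≤ 1 := pow_le_one₀ (h0 0).le h1
    have : (0:ℝ) ≤ (P.card : ℝ)^3 := by positivity
    nlinarith
  | succ I ih =>
    obtain ⟨L, a1, a2, a3⟩ := ih
    obtain ⟨L', b1, b2, b3⟩ := stepN P L (U (I+1)) (τ (I+1)) (h0 _) (h3 _) 11
    refine ⟨L' ++ L, ?_, ?_, ?_⟩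
    · intro f hf
      rcases List.mem_append.1 hf with hf | hf
      · exact ⟨I+1, le_rfl, b2 f hf⟩
      · obtain ⟨i, hi, h⟩ := a1 f hf
        exact ⟨i, by omega, h⟩
    · have : (L'.map totalDegree).sum ≤ 11 * 2^(I+1) := by
        have := List.sum_le_card_nsmul (L'.map totalDegree) (2^(I+1)) (by
          intro x hx
          obtain ⟨f, hf, rfl⟩ := List.mem_map.1 hx
          exact h4 _ f (b2 f hf).1)
        simpa [b1] using this
      rw [List.map_append, List.sum_append]
      rw [pow_succ] at *
      omega
    · refine b3.trans ?_
      have hτ := h0 (I+1)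
      have hτ' := h0 I
      have key : (P.card:ℝ)^3 / (τ I)^2 ≤ 64 * ((P.card:ℝ)^3 / (τ (I+1))^2) := by
        rw [div_le_iff₀ (by positivity), mul_comm, ← mul_assoc, mul_div_assoc', le_div_iff₀ (by positivity)]
        have : (τ (I+1))^2 ≤ (8 * τ I)^2 := pow_le_pow_left₀ hτ.le (h2 I) 2
        have h3 : (0:ℝ) ≤ (P.card : ℝ)^3 := by positivity
        nlinarith
      have h5 : 0 ≤ (P.card:ℝ)^3 / (τ (I+1))^2 := by positivity
      rw [mul_div_assoc] at a3 ⊢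
      norm_num
      nlinarith

end part

section incs
variable {α β : Type}

open Classical in
def inc (P : Finset α) (N : Finset β) (R : α → β → Prop) : ℕ :=
  ∑ s ∈ N, (P.filter fun p => R p s).card

def K33 (P : Finset α) (N : Finset β) (R : α → β → Prop) : Prop :=
  ∀ p1 ∈ P, ∀ p2 ∈ P, ∀ p3 ∈ P, ∀ s1 ∈ N, ∀ s2 ∈ N, ∀ s3 ∈ N,
    p1 ≠ p2 → p1 ≠ p3 → p2 ≠ p3 → s1 ≠ s2 → s1 ≠ s3 → s2 ≠ s3 →
    R p1 s1 → R p1 s2 → R p1 s3 → R p2 s1 → R p2 s2 → R p2 s3 →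
    R p3 s1 → R p3 s2 → R p3 s3 → False

lemma K33.mono {P P' : Finset α} {N N' : Finset β} {R : α → β → Prop} (h : K33 P N R)
    (hP : P' ⊆ P) (hN : N' ⊆ N) : K33 P' N' R :=
  fun p1 h1 p2 h2 p3 h3 s1 g1 s2 g2 s3 g3 =>
    h p1 (hP h1) p2 (hP h2) p3 (hP h3) s1 (hN g1) s2 (hN g2) s3 (hN g3)

lemma K33.flip {P : Finset α} {N : Finset β} {R : α → β → Prop} (h : K33 P N R) :
    K33 N P (fun s p => R p s) :=
  fun s1 g1 s2 g2 s3 g3 p1 h1 p2 h2 p3 h3 a b c a' b' c' x1 x2 x3 x4 x5 x6 x7 x8 x9 =>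
    h p1 h1 p2 h2 p3 h3 s1 g1 s2 g2 s3 g3 a' b' c' a b c x1 x4 x7 x2 x5 x8 x3 x6 x9

lemma inc_flip (P : Finset α) (N : Finset β) (R : α → β → Prop) :
    inc P N R = inc N P (fun s p => R p s) := by
  classical
  simp only [inc]
  have := Finset.sum_card_bipartiteAbove_eq_sum_card_bipartiteBelow (s := P) (t := N) R
  simp only [Finset.bipartiteAbove, Finset.bipartiteBelow] at this
  convert this.symm using 1

lemma inc_mono {P P' : Finset α} {N N' : Finset β} {R R' : α → β → Prop}
    (hP : P ⊆ P') (hN : N ⊆ N') (hR : ∀ p ∈ P, ∀ s ∈ N, R p s → R' p s) : inc P N R ≤ inc P' N' R' := by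
  classical
  unfold inc
  refine (Finset.sum_le_sum fun s hs => Finset.card_le_card ?_).trans (Finset.sum_le_sum_of_subset hN)
  intro p hp
  rw [Finset.mem_filter] at hp ⊢
  exact ⟨hP hp.1, hR p hp.1 s hs hp.2⟩

lemma inc_split (P : Finset α) (N : Finset β) (R R' R'' : α → β → Prop)
    (hR : ∀ p ∈ P, ∀ s ∈ N, R p s → R' p s ∨ R'' p s) : inc P N R ≤ inc P N R' + inc P N R'' := by
  classical
  unfold inc
  rw [← Finset.sum_add_distrib]
  refine Finset.sum_le_sum fun s hs => ?_
  refine (Finset.card_le_card ?_).trans (Finset.card_union_le _ _)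
  intro p hp
  rw [Finset.mem_filter] at hp
  rw [Finset.mem_union, Finset.mem_filter, Finset.mem_filter]
  rcases hR p hp.1 s hs hp.2 with h | h
  · exact Or.inl ⟨hp.1, h⟩
  · exact Or.inr ⟨hp.1, h⟩

lemma inc_biUnion {γ : Type} (P : Finset α) (N : Finset β) (R : α → β → Prop) (T : Finset γ)
    (Q : γ → Finset α) (h : ∀ p ∈ P, ∃ t ∈ T, p ∈ Q t) :
    inc P N R ≤ ∑ t ∈ T, inc (Q t) N R := by
  classical
  unfold inc
  rw [Finset.sum_comm]
  refine Finset.sum_le_sum fun s hs => ?_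
  refine (Finset.card_le_card (t := T.biUnion fun t => (Q t).filter fun p => R p s) ?_).trans Finset.card_biUnion_le
  intro p hp
  rw [Finset.mem_filter] at hp
  obtain ⟨t, ht, hpt⟩ := h p hp.1
  exact Finset.mem_biUnion.2 ⟨t, ht, Finset.mem_filter.2 ⟨hpt, hp.2⟩⟩

lemma inc_unionP (P P1 P2 : Finset α) (N : Finset β) (R : α → β → Prop)
    (h : ∀ p ∈ P, p ∈ P1 ∨ p ∈ P2) : inc P N R ≤ inc P1 N R + inc P2 N R := by
  classical
  have := inc_biUnion P N R (Finset.univ : Finset Bool) (fun b => if b then P1 else P2) (by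
    intro p hp
    rcases h p hp with h | h
    · exact ⟨true, by simp, by simpa⟩
    · exact ⟨false, by simp, by simpa⟩)
  simpa using this

lemma inc_unionN (P : Finset α) (N N1 N2 : Finset β) (R : α → β → Prop)
    (h : ∀ p ∈ N, p ∈ N1 ∨ p ∈ N2) : inc P N R ≤ inc P N1 R + inc P N2 R := by
  rw [inc_flip, inc_flip P N1, inc_flip P N2]
  exact inc_unionP _ _ _ _ _ h

open Classical in
lemma inc_K33 {P : Finset α} {N : Finset β} {R : α → β → Prop} (h : K33 P N R) :
    inc P N R ≤ 2 * (N.filter fun s => ∃ p ∈ P, R p s).card + 2 * P.card^3 := by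
  set tr : Finset (α × α × α) := (P ×ˢ P ×ˢ P).filter fun t => t.1 ≠ t.2.1 ∧ t.1 ≠ t.2.2 ∧ t.2.1 ≠ t.2.2 with htr
  obtain ⟨on, hon⟩ : ∃ on : α × α × α → β → Prop, on = fun t s => R t.1 s ∧ R t.2.1 s ∧ R t.2.2 s := ⟨_, rfl⟩
  have h1 : ∀ s, (P.filter fun p => R p s).card ≤ (if ∃ p ∈ P, R p s then 2 else 0) + (tr.filter fun t => on t s).card := by
    intro s
    by_cases he : ∃ p ∈ P, R p s
    · rw [if_pos he]
      set A := P.filter fun p => R p s with hA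
      by_cases hc : A.card ≤ 2
      · omega
      · obtain ⟨x, hx, y, hy, z, hz, hxy, hxz, hyz⟩ := Finset.two_lt_card.1 (not_le.1 hc)
        have : ((A.erase x).erase y).card ≤ (tr.filter fun t => on t s).card := by
          refine Finset.card_le_card_of_injOn (fun z => (x, y, z)) ?_ ?_
          · intro w hw
            simp only [Finset.coe_erase, Set.mem_diff, Finset.mem_coe, Set.mem_singleton_iff] at hw
            simp only [hA, Finset.mem_filter] at hx hy hw
            simp only [htr, hon, Finset.coe_filter, Finset.mem_filter, Finset.mem_product]
            exact ⟨⟨⟨hx.1, hy.1, hw.1.1.1⟩, hxy, fun h => hw.1.2 h.symm, fun h => hw.2 h.symm⟩, hx.2, hy.2, hw.1.1.2⟩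
          · intro a _ b _ h
            simpa using h
        rw [Finset.card_erase_of_mem (Finset.mem_erase.2 ⟨hxy.symm, hy⟩), Finset.card_erase_of_mem hx] at this
        omega
    · rw [if_neg he]
      push Not at he
      rw [Finset.filter_eq_empty_iff.2 fun {p} hp => he p hp]
      simp
  have h2 : ∑ s ∈ N, (tr.filter fun t => on t s).card ≤ 2 * P.card^3 := by
    have := inc_flip tr N on
    simp only [inc] at this
    rw [this]
    calc _ ≤ ∑ t ∈ tr, 2 := by
            refine Finset.sum_le_sum fun t ht => ?_
            by_contra hc
            obtain ⟨a, ha, b, hb, c, hc, hab, hac, hbc⟩ := Finset.two_lt_card.1 (not_le.1 hc)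
            simp only [htr, hon, Finset.mem_filter, Finset.mem_product] at ht ha hb hc
            exact h _ ht.1.1 _ ht.1.2.1 _ ht.1.2.2 a ha.1 b hb.1 c hc.1 ht.2.1 ht.2.2.1 ht.2.2.2 hab hac hbc
              ha.2.1 hb.2.1 hc.2.1 ha.2.2.1 hb.2.2.1 hc.2.2.1 ha.2.2.2 hb.2.2.2 hc.2.2.2
      _ = 2 * tr.card := by simp [mul_comm]
      _ ≤ 2 * P.card^3 := by
        gcongr
        refine (Finset.card_filter_le _ _).trans ?_
        simp only [Finset.card_product]
        apply le_of_eq; ring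
  calc inc P N R ≤ ∑ s ∈ N, ((if ∃ p ∈ P, R p s then 2 else 0) + (tr.filter fun t => on t s).card) :=
        Finset.sum_le_sum fun s _ => h1 s
    _ ≤ _ := by
        rw [Finset.sum_add_distrib]
        refine add_le_add (le_of_eq ?_) h2
        rw [Finset.card_filter, Finset.mul_sum]
        refine Finset.sum_congr rfl fun s _ => by split_ifs <;> simp

lemma inc_K33a {P : Finset α} {N : Finset β} {R : α → β → Prop} (h : K33 P N R) :
    inc P N R ≤ 2 * N.card + 2 * P.card^3 := by
  classical
  exact (inc_K33 h).trans (by have := Finset.card_filter_le N (fun s => ∃ p ∈ P, R p s); omega)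

lemma inc_K33b {P : Finset α} {N : Finset β} {R : α → β → Prop} (h : K33 P N R) :
    inc P N R ≤ 2 * P.card + 2 * N.card^3 := by
  rw [inc_flip]; exact inc_K33a h.flip

lemma inc_classes {σ : Type} {P : Finset (σ → ℝ)} {N : Finset β} {R : (σ → ℝ) → β → Prop} (h : K33 P N R)
    (L : List (MvPolynomial σ ℝ)) (K : ℝ)
    (hK : ∀ s ∈ N, ∀ T ⊆ nz P L, (∀ t ∈ T, R t s) → (∀ x ∈ T, ∀ y ∈ T, SameSign L x y → x = y) → (T.card : ℝ) ≤ K) :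
    (inc (nz P L) N R : ℝ) ≤ 2 * K * N.card + 2 * Phi P L := by
  classical
  have h1 := inc_biUnion (nz P L) N R (clset P L) id (by
    intro p hp
    refine ⟨cl P L p, Finset.mem_image_of_mem _ hp, ?_⟩
    simp only [nz, Finset.mem_filter] at hp
    simp only [id, cl, Finset.mem_filter]
    exact ⟨hp.1, sameSign_self hp.2⟩)
  have hsub : ∀ C ∈ clset P L, C ⊆ nz P L := by
    intro C hC
    rw [← fiber_cl hC]
    exact Finset.filter_subset _ _
  have hnzP : nz P L ⊆ P := Finset.filter_subset _ _
  have h2 : ∑ C ∈ clset P L, inc (id C) N R ≤ ∑ C ∈ clset P L, (2 * (N.filter fun s => ∃ p ∈ C, R p s).card + 2 * C.card^3) :=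
    Finset.sum_le_sum fun C hC => inc_K33 (h.mono ((hsub C hC).trans hnzP) le_rfl)
  have h3 : (∑ C ∈ clset P L, (N.filter fun s => ∃ p ∈ C, R p s).card : ℝ) ≤ K * N.card := by
    have e : ∑ C ∈ clset P L, (N.filter fun s => ∃ p ∈ C, R p s).card =
        ∑ s ∈ N, ((clset P L).filter fun C => ∃ p ∈ C, R p s).card := by
      have := inc_flip N (clset P L) (fun s C => ∃ p ∈ C, R p s)
      simpa only [inc] using this
    have e' := congrArg (Nat.cast : ℕ → ℝ) e
    push_cast at e'
    rw [e', mul_comm, ← nsmul_eq_mul, ← Finset.sum_const]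
    refine Finset.sum_le_sum fun s hs => ?_
    set W := (clset P L).filter fun C => ∃ p ∈ C, R p s with hW
    have hch : ∀ C : Finset (σ → ℝ), ∃ p : σ → ℝ, C ∈ W → p ∈ C ∧ R p s := by
      intro C
      by_cases hC : C ∈ W
      · obtain ⟨p, hp⟩ := (Finset.mem_filter.1 hC).2
        exact ⟨p, fun _ => hp⟩
      · exact ⟨0, fun h => absurd h hC⟩
    choose r hr using hch
    have hcl : ∀ C ∈ W, cl P L (r C) = C := fun C hC => cl_mem (Finset.mem_filter.1 hC).1 (hr C hC).1
    have hinj : Set.InjOn r W := by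
      intro C hC C' hC' he
      rw [← hcl C hC, ← hcl C' hC', he]
    rw [← Finset.card_image_of_injOn hinj]
    refine hK s hs _ ?_ ?_ ?_
    · intro x hx
      obtain ⟨C, hC, rfl⟩ := Finset.mem_image.1 hx
      exact hsub C (Finset.mem_filter.1 hC).1 (hr C hC).1
    · intro x hx
      obtain ⟨C, hC, rfl⟩ := Finset.mem_image.1 hx
      exact (hr C hC).2
    · intro x hx y hy hxy
      obtain ⟨C, hC, rfl⟩ := Finset.mem_image.1 hx
      obtain ⟨C', hC', rfl⟩ := Finset.mem_image.1 hy
      have := cl_eq (P := P) hxy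
      rw [hcl C hC, hcl C' hC'] at this
      rw [this]
  have h4 : (inc (nz P L) N R : ℝ) ≤ ∑ C ∈ clset P L, (2 * ((N.filter fun s => ∃ p ∈ C, R p s).card : ℝ) + 2 * (C.card : ℝ)^3) := by
    exact_mod_cast h1.trans h2
  rw [Finset.sum_add_distrib, ← Finset.mul_sum, ← Finset.mul_sum, ← Phi_eq] at h4
  linarith

end incs

lemma compl_dim {σ : Type} [Finite σ] (g : MvPolynomial σ ℝ) (hg : g ≠ 0) (N : ℕ) :
    ∃ C : Submodule ℝ (MvPolynomial σ ℝ), C ≤ VN σ N ∧ (∀ c ∈ C, g ∣ c → c = 0) ∧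
      (g.totalDegree ≤ N → finrank ℝ (VN σ N) ≤ finrank ℝ C + finrank ℝ (VN σ (N - g.totalDegree))) ∧
      (N < g.totalDegree → finrank ℝ (VN σ N) ≤ finrank ℝ C) := by
  by_cases hN : g.totalDegree ≤ N
  · let φ : VN σ (N - g.totalDegree) →ₗ[ℝ] VN σ N :=
      LinearMap.codRestrict _ ((LinearMap.mulLeft ℝ g).comp (VN σ _).subtype) (by
        intro u
        have hu := mem_VN.1 u.2
        rw [mem_VN]
        have := totalDegree_mul g (u : MvPolynomial σ ℝ)
        simp only [LinearMap.coe_comp, Function.comp, LinearMap.mulLeft_apply, Submodule.subtype_apply]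
        omega)
    obtain ⟨C, hC⟩ := Submodule.exists_isCompl (LinearMap.range φ)
    refine ⟨C.map (VN σ N).subtype, ?_, ?_, ?_, fun h => absurd hN (not_le.2 h)⟩
    · rintro _ ⟨x, _, rfl⟩; exact x.2
    · rintro _ ⟨x, hx, rfl⟩ ⟨w, hw⟩
      have hxr : x ∈ LinearMap.range φ := by
        refine ⟨⟨w, ?_⟩, Subtype.ext ?_⟩
        · rw [mem_VN]
          by_cases hw0 : w = 0
          · simp [hw0]
          · have hu := mem_VN.1 x.2
            change (x : MvPolynomial σ ℝ) = _ at hw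
            rw [hw, totalDegree_mul_of_isDomain hg hw0] at hu
            omega
        · exact hw.symm
      have := hC.disjoint.le_bot ⟨hxr, hx⟩
      rw [Submodule.mem_bot] at this
      simp [this]
    · intro _
      have h1 := Submodule.finrank_add_eq_of_isCompl hC
      rw [LinearEquiv.finrank_eq (Submodule.equivMapOfInjective (VN σ N).subtype (Submodule.injective_subtype _) C).symm]
      have h2 := LinearMap.finrank_range_le φ
      omega
  · refine ⟨VN σ N, le_rfl, ?_, fun h => absurd h hN, fun _ => le_rfl⟩
    rintro c hc ⟨w, rfl⟩
    by_contra h0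
    have hw0 : w ≠ 0 := right_ne_zero_of_mul h0
    have := mem_VN.1 hc
    rw [totalDegree_mul_of_isDomain hg hw0] at this
    omega

lemma irr_td {σ : Type} {g : MvPolynomial σ ℝ} (hg : Irreducible g) : 0 < g.totalDegree := by
  by_contra h
  have h0 : g.totalDegree = 0 := by omega
  rw [totalDegree_eq_zero_iff_eq_C] at h0
  have hne := hg.ne_zero
  rw [h0] at hne
  have : coeff 0 g ≠ 0 := fun h => hne (by rw [h, C_0])
  exact hg.not_isUnit (by rw [h0]; exact (isUnit_iff_ne_zero.2 this).map C)

lemma partition1 (P : Finset (Fin 3 → ℝ)) (I : ℕ) :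
    ∃ L : List (MvPolynomial (Fin 3) ℝ), (∀ f ∈ L, f ≠ 0) ∧
      (L.map totalDegree).sum ≤ 22 * 2^I ∧ Phi P L ≤ 432 * (P.card : ℝ)^3 / 64^I := by
  obtain ⟨L, h1, h2, h3⟩ := partition P (fun i => VN (Fin 3) (2^i)) (fun i => 8^i/6)
    (fun i => by positivity) (by norm_num) (fun i => by rw [pow_succ]; apply le_of_eq; ring)
    (fun i => by
      have h := finrank_VN3 (2^i)
      have h' : (6:ℝ) * (finrank ℝ (VN (Fin 3) (2^i)) : ℝ) = (2^i+1)*(2^i+2)*(2^i+3) := by exact_mod_cast h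
      have h8 : (8:ℝ)^i = (2^i)^3 := by rw [← pow_mul, mul_comm, pow_mul]; norm_num
      rw [h8]
      have : (0:ℝ) < 2^i := by positivity
      nlinarith [mul_pos this this])
    (fun i f hf => mem_VN.1 hf) I
  refine ⟨L, fun f hf => ?_, h2, h3.trans (le_of_eq ?_)⟩
  · obtain ⟨_, _, _, h⟩ := h1 f hf; exact h
  · have : (64:ℝ)^I = (8^I)^2 := by rw [← pow_mul, mul_comm, pow_mul]; norm_num
    rw [this]; field_simp; ring

lemma partition2 (F : MvPolynomial (Fin 3) ℝ) (hF : Irreducible F) (P : Finset (Fin 3 → ℝ)) (I : ℕ)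
    (hI : F.totalDegree ≤ 2^I) :
    ∃ L : List (MvPolynomial (Fin 3) ℝ), (∀ f ∈ L, ¬ F ∣ f) ∧
      (L.map totalDegree).sum ≤ 22 * 2^I ∧ Phi P L ≤ 432 * (P.card : ℝ)^3 / (F.totalDegree^2 * 16^I) := by
  choose U hU1 hU2 hU3 hU4 using fun i => compl_dim F hF.ne_zero (2^i)
  have hD : (1:ℝ) ≤ F.totalDegree := by exact_mod_cast irr_td hF
  set D := F.totalDegree with hDdef
  obtain ⟨L, h1, h2, h3⟩ := partition P U (fun i => min (D:ℝ) (2^i) * 4^i/6)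
    (fun i => by have : 0 < min (D:ℝ) (2^i) := lt_min (by linarith) (by positivity)
                 positivity) (by simp [hD]; norm_num)
    (fun i => by
      have : min (D:ℝ) (2^(i+1)) ≤ 2 * min (D:ℝ) (2^i) := by
        rw [pow_succ, mul_comm ((2:ℝ)^i) 2, mul_min_of_nonneg _ _ (by norm_num)]
        exact min_le_min (by linarith) le_rfl
      rw [pow_succ (4:ℝ) i]
      have h4 : (0:ℝ) < 4^i := by positivity
      nlinarith)
    (fun i => by
      have h := finrank_VN3 (2^i)
      have h' : (6:ℝ) * (finrank ℝ (VN (Fin 3) (2^i)) : ℝ) = (2^i+1)*(2^i+2)*(2^i+3) := by exact_mod_cast h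
      have h8 : (4:ℝ)^i = (2^i)^2 := by rw [← pow_mul, mul_comm, pow_mul]; norm_num
      rw [h8]
      have he : (0:ℝ) < 2^i := by positivity
      rcases lt_or_ge (2^i) D with hlt | hge
      · have h4 : ((finrank ℝ (VN (Fin 3) (2^i)) : ℕ) : ℝ) ≤ finrank ℝ (U i) := by exact_mod_cast hU4 i hlt
        have : min (D:ℝ) (2^i) ≤ 2^i := min_le_right _ _
        nlinarith [mul_pos he he, mul_le_mul_of_nonneg_right this (sq_nonneg ((2:ℝ)^i))]
      · have h4 := hU3 i hge
        have h5 := finrank_VN3 (2^i - D)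
        have h5' : (6:ℝ) * (finrank ℝ (VN (Fin 3) (2^i - D)) : ℝ) = (2^i-D+1)*(2^i-D+2)*(2^i-D+3) := by
          have : ((2^i - D : ℕ):ℝ) = 2^i - D := by rw [Nat.cast_sub hge]; simp
          rw [← this]; exact_mod_cast h5
        have h4' : ((finrank ℝ (VN (Fin 3) (2^i)) : ℕ) : ℝ) ≤ finrank ℝ (U i) + (finrank ℝ (VN (Fin 3) (2^i - D)) : ℕ) := by
          exact_mod_cast h4
        have hge' : (D:ℝ) ≤ 2^i := by exact_mod_cast hge
        have : min (D:ℝ) (2^i) = D := min_eq_left hge'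
        rw [this]
        obtain ⟨t, ht0, ht⟩ : ∃ t : ℝ, 0 ≤ t ∧ (2:ℝ)^i = D + t := ⟨2^i - D, by linarith, by ring⟩
        rw [ht] at h' h5' ⊢
        nlinarith [mul_nonneg ht0 ht0, mul_nonneg ht0 (by linarith : (0:ℝ) ≤ D), mul_nonneg (mul_nonneg ht0 ht0) (by linarith : (0:ℝ) ≤ D), mul_nonneg (mul_nonneg ht0 (by linarith : (0:ℝ) ≤ D)) (by linarith : (0:ℝ) ≤ D), mul_nonneg (by linarith : (0:ℝ) ≤ D) (by linarith : (0:ℝ) ≤ D)])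
    (fun i f hf => mem_VN.1 (hU1 i hf)) I
  refine ⟨L, fun f hf => ?_, h2, h3.trans (le_of_eq ?_)⟩
  · obtain ⟨i, _, hfU, h⟩ := h1 f hf
    exact fun hd => h (hU2 i f hfU hd)
  · have hI' : (D:ℝ) ≤ 2^I := by exact_mod_cast hI
    have h16 : (16:ℝ)^I = (4^I)^2 := by rw [← pow_mul, mul_comm, pow_mul]; norm_num
    rw [min_eq_left hI', h16]; field_simp; ring

/-- restriction to the graph -/
def rho (f : MvPolynomial (Fin 2) ℝ) : MvPolynomial (Fin 3) ℝ →ₐ[ℝ] MvPolynomial (Fin 2) ℝ :=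
  aeval (Fin.cons f (fun i => X i) : Fin 3 → MvPolynomial (Fin 2) ℝ)

/-- lifting -/
def lift3 : MvPolynomial (Fin 2) ℝ →ₐ[ℝ] MvPolynomial (Fin 3) ℝ := rename Fin.succ

lemma rho_lift (f g : MvPolynomial (Fin 2) ℝ) : rho f (lift3 g) = g := by
  simp only [rho, lift3, aeval_rename]
  have : ((Fin.cons f (fun i => X i) : Fin 3 → MvPolynomial (Fin 2) ℝ) ∘ Fin.succ) = X := by
    funext i; simp
  rw [this]; simp

lemma rho_X0 (f : MvPolynomial (Fin 2) ℝ) : rho f (X 0) = f := by simp [rho]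

def tl (p : Fin 3 → ℝ) : Fin 2 → ℝ := fun i => p i.succ

lemma eval_rho (f : MvPolynomial (Fin 2) ℝ) (F : MvPolynomial (Fin 3) ℝ) (p : Fin 3 → ℝ)
    (h : p 0 = eval (tl p) f) : eval (tl p) (rho f F) = eval p F := by
  have : (eval (tl p)).comp (rho f).toRingHom = eval p := by
    apply MvPolynomial.ringHom_ext
    · intro r; simp [rho]
    · intro i
      refine Fin.cases ?_ (fun j => ?_) i
      · simp [rho, h]
      · simp [rho, tl]
  exact congrArg (fun φ => φ F) this

lemma td_rho (f : MvPolynomial (Fin 2) ℝ) (hf : f.totalDegree ≤ 2) (F : MvPolynomial (Fin 3) ℝ) :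
    (rho f F).totalDegree ≤ 2 * F.totalDegree := by
  rw [rho, aeval_def, eval₂_eq']
  refine (totalDegree_finset_sum _ _).trans (Finset.sup_le fun d hd => ?_)
  refine (totalDegree_mul _ _).trans ?_
  rw [algebraMap_eq, totalDegree_C, zero_add]
  refine (totalDegree_finsetProd _ _).trans ?_
  have h1 : ∀ i : Fin 3, ((Fin.cons f (fun i => X i) : Fin 3 → MvPolynomial (Fin 2) ℝ) i).totalDegree ≤ 2 := by
    intro i
    refine Fin.cases ?_ (fun j => ?_) i
    · simpa using hf
    · simp [totalDegree_X]
  calc _ ≤ ∑ i, 2 * d i := by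
        refine Finset.sum_le_sum fun i _ => (totalDegree_pow _ _).trans ?_
        rw [mul_comm]
        exact Nat.mul_le_mul_right _ (h1 i)
    _ ≤ _ := by
        rw [← Finset.mul_sum]
        refine Nat.mul_le_mul_left _ ?_
        have := le_totalDegree hd
        rwa [Finsupp.sum_fintype _ _ (fun _ => rfl)] at this

lemma rho_eq (f : MvPolynomial (Fin 2) ℝ) (F : MvPolynomial (Fin 3) ℝ) :
    rho f F = Polynomial.eval f (finSuccEquiv ℝ 2 F) := by
  have : (rho f).toRingHom = (Polynomial.evalRingHom f).comp (finSuccEquiv ℝ 2).toRingEquiv.toRingHom := by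
    apply MvPolynomial.ringHom_ext
    · intro r; simp [rho, finSuccEquiv_apply]
    · intro i
      refine Fin.cases ?_ (fun j => ?_) i
      · simp [rho, finSuccEquiv_apply]
      · simp [rho, finSuccEquiv_apply]
  exact congrArg (fun φ => φ F) this

lemma card_rho_zero (F : MvPolynomial (Fin 3) ℝ) (hF : F ≠ 0) (N : Finset (MvPolynomial (Fin 2) ℝ))
    (hN : ∀ f ∈ N, rho f F = 0) : N.card ≤ F.totalDegree := by
  have h0 : finSuccEquiv ℝ 2 F ≠ 0 := by simpa using hF
  have := Polynomial.card_le_degree_of_subset_roots (p := finSuccEquiv ℝ 2 F) (Z := N) (by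
    intro f hf
    rw [Polynomial.mem_roots h0, Polynomial.IsRoot, ← rho_eq]
    exact hN f (by simpa using hf))
  rw [natDegree_finSuccEquiv] at this
  exact this.trans (degreeOf_le_totalDegree _ _)

abbrev R2 := MvPolynomial (Fin 2) ℝ
abbrev R3 := MvPolynomial (Fin 3) ℝ

lemma psi_exists (K : Finset (R2 × R2)) (hirr : ∀ κ ∈ K, Irreducible κ.1)
    (hne : ∀ κ ∈ K, ∀ κ' ∈ K, κ ≠ κ' → ¬ (Associated κ.1 κ'.1 ∧ κ.1 ∣ κ.2 - κ'.2))
    (κ : R2 × R2) (hκ : κ ∈ K) :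
    ∃ Ψ : R3, ¬ κ.1 ∣ rho κ.2 Ψ ∧ ∀ κ' ∈ K, κ' ≠ κ → κ'.1 ∣ rho κ'.2 Ψ := by
  classical
  have key : ∀ κ' : R2 × R2, ∃ ψ : R3, κ' ∈ K → κ' ≠ κ → ¬ κ.1 ∣ rho κ.2 ψ ∧ κ'.1 ∣ rho κ'.2 ψ := by
    intro κ'
    by_cases h : Associated κ.1 κ'.1
    · refine ⟨X 0 - lift3 κ'.2, fun h1 h2 => ?_⟩
      rw [map_sub, map_sub, rho_X0, rho_lift, rho_X0, rho_lift]
      refine ⟨fun hd => hne κ hκ κ' h1 h2.symm ⟨h, hd⟩, by simp⟩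
    · refine ⟨lift3 κ'.1, fun h1 h2 => ?_⟩
      rw [rho_lift, rho_lift]
      refine ⟨fun hd => h ((hirr κ hκ).associated_of_dvd (hirr κ' h1) hd), dvd_rfl⟩
  choose ψ hψ using key
  refine ⟨∏ κ' ∈ K.erase κ, ψ κ', ?_, ?_⟩
  · rw [map_prod]
    intro hd
    obtain ⟨κ', h1, h2⟩ := ((hirr κ hκ).prime.dvd_finset_prod_iff _).1 hd
    rw [Finset.mem_erase] at h1
    exact (hψ κ' h1.2 h1.1).1 h2
  · intro κ' h1 h2
    rw [map_prod]
    exact (hψ κ' h1 h2).2.trans (Finset.dvd_prod_of_mem _ (Finset.mem_erase.2 ⟨h2, h1⟩))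

lemma curveSum_dim (F G : R3) (hF : F ≠ 0) (hG : G ≠ 0) (hrel : IsRelPrime F G)
    (K : Finset (R2 × R2)) (hirr : ∀ κ ∈ K, Irreducible κ.1)
    (h1 : ∀ κ ∈ K, κ.1 ∣ rho κ.2 F) (h2 : ∀ κ ∈ K, κ.1 ∣ rho κ.2 G)
    (hne : ∀ κ ∈ K, ∀ κ' ∈ K, κ ≠ κ' → ¬ (Associated κ.1 κ'.1 ∧ κ.1 ∣ κ.2 - κ'.2)) :
    ∃ e : ℕ, ∀ k : ℕ, F.totalDegree + G.totalDegree ≤ k → (∀ κ ∈ K, κ.1.totalDegree ≤ k) →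
      ∃ c : R2 × R2 → ℕ, (∀ κ ∈ K, finrank ℝ (VN (Fin 2) k) ≤ c κ + finrank ℝ (VN (Fin 2) (k - κ.1.totalDegree))) ∧
       ∑ κ ∈ K, c κ + finrank ℝ (VN (Fin 3) (k + e - F.totalDegree)) + finrank ℝ (VN (Fin 3) (k + e - G.totalDegree)) ≤
        finrank ℝ (VN (Fin 3) (k+e)) + finrank ℝ (VN (Fin 3) (k + e - F.totalDegree - G.totalDegree)) := by
  classical
  choose! Ψ hΨ1 hΨ2 using psi_exists K hirr hne
  refine ⟨∑ κ ∈ K, (Ψ κ).totalDegree, fun k hk hkK => ?_⟩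
  set e := ∑ κ ∈ K, (Ψ κ).totalDegree with he
  obtain ⟨J, hJ1, hJ2, hJ3⟩ := bezJ F G hF hG hrel (k+e) (by omega)
  have hCe : ∀ κ : R2 × R2, ∃ C : Submodule ℝ R2, C ≤ VN (Fin 2) k ∧ (κ ∈ K → ((∀ c ∈ C, κ.1 ∣ c → c = 0) ∧
      finrank ℝ (VN (Fin 2) k) ≤ finrank ℝ C + finrank ℝ (VN (Fin 2) (k - κ.1.totalDegree)))) := by
    intro κ
    by_cases hκ : κ ∈ K
    · obtain ⟨C, a1, a2, a3, _⟩ := compl_dim κ.1 (hirr κ hκ).ne_zero k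
      exact ⟨C, a1, fun _ => ⟨a2, a3 (hkK κ hκ)⟩⟩
    · exact ⟨⊥, bot_le, fun h => absurd h hκ⟩
  choose C hC1 hC2 using hCe
  refine ⟨fun κ => finrank ℝ (C κ), fun κ hκ => (hC2 κ hκ).2, ?_⟩
  haveI : ∀ κ : K, Module.Finite ℝ (C κ) := fun κ =>
    Submodule.finiteDimensional_of_le (hC1 κ)
  haveI : Module.Finite ℝ J := Submodule.finiteDimensional_of_le hJ1
  let Θ : ((∀ κ : K, C κ) × J) →ₗ[ℝ] R3 :=
    LinearMap.coprod
      (∑ κ : K, (LinearMap.mulLeft ℝ (Ψ κ)).comp (lift3.toLinearMap.comp ((C κ).subtype.comp (LinearMap.proj κ))))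
      J.subtype
  have hΘ : ∀ c j, Θ (c, j) = ∑ κ : K, Ψ κ * lift3 (c κ : R2) + j := by
    intro c j; simp [Θ]
  have hΘV : ∀ x, Θ x ∈ VN (Fin 3) (k+e) := by
    rintro ⟨c, j⟩
    rw [hΘ]
    refine Submodule.add_mem _ (Submodule.sum_mem _ fun κ _ => ?_) (hJ1 j.2)
    rw [mem_VN]
    refine (totalDegree_mul _ _).trans ?_
    have a1 : (Ψ κ).totalDegree ≤ e := Finset.single_le_sum (f := fun κ => (Ψ κ).totalDegree) (fun _ _ => Nat.zero_le _) κ.2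
    have a2 : (lift3 (c κ : R2)).totalDegree ≤ k :=
      (totalDegree_rename_le _ _).trans (mem_VN.1 (hC1 κ (c κ).2))
    omega
  have hinj : Function.Injective (LinearMap.codRestrict _ Θ hΘV) := by
    rw [← LinearMap.ker_eq_bot, LinearMap.ker_codRestrict, LinearMap.ker_eq_bot']
    rintro ⟨c, j⟩ h0
    rw [hΘ] at h0
    have hc0 : ∀ κ : K, (c κ : R2) = 0 := by
      intro κ0
      obtain ⟨u, v, huv⟩ := hJ2 j j.2
      have e1 := congrArg (rho κ0.1.2) h0
      rw [map_add, map_sum, map_zero] at e1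
      simp only [map_mul, rho_lift] at e1
      have hj : κ0.1.1 ∣ rho κ0.1.2 j := by
        rw [huv, map_add, map_mul, map_mul]
        exact dvd_add ((h1 κ0 κ0.2).mul_right _) ((h2 κ0 κ0.2).mul_right _)
      have hd : κ0.1.1 ∣ ∑ κ : K, rho κ0.1.2 (Ψ κ) * (c κ : R2) := by
        rw [eq_neg_of_add_eq_zero_left e1]
        exact hj.neg_right
      rw [← Finset.add_sum_erase _ _ (Finset.mem_univ κ0)] at hd
      have hrest : κ0.1.1 ∣ ∑ κ ∈ (Finset.univ : Finset K).erase κ0, rho κ0.1.2 (Ψ κ) * (c κ : R2) := by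
        refine Finset.dvd_sum fun κ hκ => ?_
        refine (hΨ2 κ κ.2 κ0 κ0.2 ?_).mul_right _
        intro h
        exact (Finset.mem_erase.1 hκ).1 (Subtype.ext h.symm)
      have hd2 := (dvd_add_left hrest).1 hd
      rcases (hirr κ0 κ0.2).prime.dvd_or_dvd hd2 with h | h
      · exact absurd h (hΨ1 κ0 κ0.2)
      · exact (hC2 κ0 κ0.2).1 _ (c κ0).2 h
    have hj0 : (j : R3) = 0 := by
      simpa [hc0] using h0
    refine Prod.ext (funext fun κ => Subtype.ext (hc0 κ)) (Subtype.ext hj0)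
  have hfr := LinearMap.finrank_le_finrank_of_injective hinj
  rw [Module.finrank_prod, Module.finrank_pi_fintype] at hfr
  rw [Finset.sum_coe_sort K (fun κ => finrank ℝ (C κ))] at hfr
  change ∑ κ ∈ K, finrank ℝ (C κ) + _ + _ ≤ _
  change _ ≤ finrank ℝ (VN (Fin 3) (k+e)) at hfr
  linarith

lemma curveSum (F G : R3) (hF : F ≠ 0) (hG : G ≠ 0) (hrel : IsRelPrime F G)
    (K : Finset (R2 × R2)) (hirr : ∀ κ ∈ K, Irreducible κ.1)
    (h1 : ∀ κ ∈ K, κ.1 ∣ rho κ.2 F) (h2 : ∀ κ ∈ K, κ.1 ∣ rho κ.2 G)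
    (hne : ∀ κ ∈ K, ∀ κ' ∈ K, κ ≠ κ' → ¬ (Associated κ.1 κ'.1 ∧ κ.1 ∣ κ.2 - κ'.2)) :
    ∑ κ ∈ K, κ.1.totalDegree ≤ F.totalDegree * G.totalDegree := by
  obtain ⟨e, he⟩ := curveSum_dim F G hF hG hrel K hirr h1 h2 hne
  set a := F.totalDegree
  set b := G.totalDegree
  set Sq := ∑ κ ∈ K, κ.1.totalDegree ^ 2 with hSq
  set k := a * b * (2*e+4) + Sq + a + b + ∑ κ ∈ K, κ.1.totalDegree + 1 with hk
  have hkK : ∀ κ ∈ K, κ.1.totalDegree ≤ k := by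
    intro κ hκ
    have := Finset.single_le_sum (f := fun κ : R2 × R2 => κ.1.totalDegree) (fun _ _ => Nat.zero_le _) hκ
    omega
  obtain ⟨c, hc1, hc2⟩ := he k (by omega) hkK
  by_contra hcon
  push Not at hcon
  have g0 := finrank_VN3 (k+e)
  have g1 := finrank_VN3 (k+e-a)
  have g2 := finrank_VN3 (k+e-b)
  have g3 := finrank_VN3 (k+e-a-b)
  have hc : ∀ κ ∈ K, (κ.1.totalDegree : ℤ) * (2*k) - (κ.1.totalDegree:ℤ)^2 ≤ 2 * c κ := by
    intro κ hκ
    have q := hc1 κ hκ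
    have q1 := finrank_VN2 k
    have q2 := finrank_VN2 (k - κ.1.totalDegree)
    have hd := hkK κ hκ
    set d := κ.1.totalDegree
    zify [hd] at q q1 q2
    have : (0:ℤ) ≤ d := Int.natCast_nonneg _
    nlinarith
  have hs := Finset.sum_le_sum hc
  rw [Finset.sum_sub_distrib, ← Finset.sum_mul, ← Finset.mul_sum] at hs
  have hSq' : ((Sq:ℕ):ℤ) = ∑ κ ∈ K, (κ.1.totalDegree:ℤ)^2 := by rw [hSq]; push_cast; rfl
  rw [← hSq'] at hs
  have hab : a + b ≤ k + e := by omega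
  obtain ⟨r, hr⟩ : ∃ r, k + e = a + b + r := ⟨k+e-a-b, by omega⟩
  rw [show k + e - a - b = r by omega] at g3 hc2
  rw [show k + e - a = b + r by omega] at g1 hc2
  rw [show k + e - b = a + r by omega] at g2 hc2
  zify at g0 g1 g2 g3 hc2 hcon hr hk
  have hS : (∑ κ ∈ K, (c κ : ℤ)) * 2 ≤ a * b * (2 * (k+e) + 4) := by
    rw [hr] at g0 ⊢
    have : (0:ℤ) ≤ (a:ℤ) * b * (a + b) := by positivity
    nlinarith
  have hT : (a:ℤ)*b + 1 ≤ ∑ κ ∈ K, (κ.1.totalDegree:ℤ) := hcon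
  have hk0 : (0:ℤ) ≤ k := Int.natCast_nonneg _
  have := mul_le_mul_of_nonneg_right hT (by linarith : (0:ℤ) ≤ 2 * k)
  have hab0 : (0:ℤ) ≤ a := Int.natCast_nonneg _
  have hb0 : (0:ℤ) ≤ b := Int.natCast_nonneg _
  have hk2 : (a:ℤ) * b * (2*e+4) + Sq < k := by
    have : (0:ℤ) ≤ ∑ κ ∈ K, (κ.1.totalDegree:ℤ) := by positivity
    linarith
  nlinarith

abbrev On (p : Fin 3 → ℝ) (s : R2) : Prop := p 0 = eval (tl p) s

lemma tl_inj {s : R2} {p q : Fin 3 → ℝ} (hp : On p s) (hq : On q s) (h : tl p = tl q) : p = q := by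
  funext i
  refine Fin.cases ?_ (fun j => ?_) i
  · rw [hp, hq, h]
  · exact congrFun h j

lemma count_common (s G H : R2) (hG : G ≠ 0) (hH : H ≠ 0) (hrel : IsRelPrime G H) (T : Finset (Fin 3 → ℝ))
    (h : ∀ p ∈ T, On p s ∧ eval (tl p) G = 0 ∧ eval (tl p) H = 0) :
    T.card ≤ G.totalDegree * H.totalDegree := by
  classical
  rw [← Finset.card_image_of_injOn (f := tl) (s := T) fun p hp q hq he => tl_inj (h p hp).1 (h q hq).1 he]
  refine bezout2 G H hG hH hrel _ ?_ ?_
  · intro x hx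
    obtain ⟨p, hp, rfl⟩ := Finset.mem_image.1 hx
    exact (h p hp).2.1
  · intro x hx
    obtain ⟨p, hp, rfl⟩ := Finset.mem_image.1 hx
    exact (h p hp).2.2

lemma transversal {γ : Type} (E : γ → γ → Prop) (hrefl : ∀ x, E x x) (hsymm : ∀ x y, E x y → E y x)
    (X : Finset γ) : ∃ K ⊆ X, (∀ x ∈ K, ∀ y ∈ K, x ≠ y → ¬ E x y) ∧ ∀ x ∈ X, ∃ y ∈ K, E x y := by
  classical
  induction X using Finset.induction_on with
  | empty => exact ⟨∅, by simp, by simp, by simp⟩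
  | insert a X ha ih =>
    obtain ⟨K, h1, h2, h3⟩ := ih
    by_cases h : ∃ y ∈ K, E a y
    · refine ⟨K, h1.trans (Finset.subset_insert _ _), h2, ?_⟩
      intro x hx
      rcases Finset.mem_insert.1 hx with rfl | hx
      · exact h
      · exact h3 x hx
    · push Not at h
      refine ⟨insert a K, Finset.insert_subset_insert _ h1, ?_, ?_⟩
      · intro x hx y hy hxy
        rcases Finset.mem_insert.1 hx with rfl | hx' <;> rcases Finset.mem_insert.1 hy with rfl | hy'
        · exact absurd rfl hxy
        · exact h y hy'
        · exact fun he => h x hx' (hsymm _ _ he)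
        · exact h2 x hx' y hy' hxy
      · intro x hx
        rcases Finset.mem_insert.1 hx with rfl | hx
        · exact ⟨x, Finset.mem_insert_self _ _, hrefl x⟩
        · obtain ⟨y, hy, h⟩ := h3 x hx
          exact ⟨y, Finset.mem_insert_of_mem hy, h⟩

def OnC (p : Fin 3 → ℝ) (κ : R2 × R2) : Prop := On p κ.2 ∧ eval (tl p) κ.1 = 0

lemma onC_on {p : Fin 3 → ℝ} {κ : R2 × R2} (h : OnC p κ) {s : R2} (hd : κ.1 ∣ κ.2 - s) : On p s := by
  have := eval_zero_of_dvd hd h.2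
  rw [map_sub, sub_eq_zero] at this
  rw [On, ← this]; exact h.1

lemma partD (F f : R3) (hF : Irreducible F) (hf : ¬ F ∣ f) (P : Finset (Fin 3 → ℝ)) (N : Finset R2)
    (hP : ∀ p ∈ P, eval p F = 0 ∧ eval p f = 0) (hN : ∀ s ∈ N, s.totalDegree ≤ 2)
    (hNF : ∀ s ∈ N, rho s F ≠ 0) (hK : K33 P N On) :
    inc P N On ≤ N.card * (8 * (F.totalDegree * f.totalDegree)) + 2 * P.card := by
  classical
  have hf0 : f ≠ 0 := fun h => hf (h ▸ dvd_zero F)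
  have hrel : IsRelPrime F f := (hF.isRelPrime_iff_not_dvd).2 hf
  have hred : ∀ s : R2, ∃ A B c : R2, s ∈ N → (IsRelPrime A B ∧ c * A = rho s F ∧ c * B = rho s f) := by
    intro s
    by_cases hs : s ∈ N
    · obtain ⟨A, B, c, h1, h2, h3⟩ := UniqueFactorizationMonoid.exists_reduced_factors (rho s F) (hNF s hs) (rho s f)
      exact ⟨A, B, c, fun _ => ⟨h1, h2, h3⟩⟩
    · exact ⟨0, 0, 0, fun h => absurd h hs⟩
  choose A B c hABc using hred
  have hA0 : ∀ s ∈ N, A s ≠ 0 := fun s hs h => hNF s hs (by rw [← (hABc s hs).2.1, h, mul_zero])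
  have hc0 : ∀ s ∈ N, c s ≠ 0 := fun s hs h => hNF s hs (by rw [← (hABc s hs).2.1, h, zero_mul])
  set X : Finset (R2 × R2) := N.biUnion fun s =>
    ((UniqueFactorizationMonoid.factors (c s)).toFinset.image fun g => (g, s)) with hX
  have hXm : ∀ κ ∈ X, κ.2 ∈ N ∧ κ.1 ∈ UniqueFactorizationMonoid.factors (c κ.2) := by
    intro κ hκ
    obtain ⟨s, hs, h⟩ := Finset.mem_biUnion.1 hκ
    obtain ⟨g, hg, rfl⟩ := Finset.mem_image.1 h
    exact ⟨hs, Multiset.mem_toFinset.1 hg⟩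
  have hXirr : ∀ κ ∈ X, Irreducible κ.1 := fun κ hκ =>
    UniqueFactorizationMonoid.irreducible_of_factor _ (hXm κ hκ).2
  have hXd : ∀ κ ∈ X, κ.1 ∣ c κ.2 := fun κ hκ =>
    UniqueFactorizationMonoid.dvd_of_mem_factors (hXm κ hκ).2
  obtain ⟨K, hKX, hKne, hKex⟩ := transversal (fun κ κ' : R2 × R2 => Associated κ.1 κ'.1 ∧ κ.1 ∣ κ.2 - κ'.2)
    (fun x => ⟨Associated.refl _, by simp⟩) (fun x y h => ⟨h.1.symm, by
      have := h.1.symm.dvd.trans h.2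
      rwa [← dvd_neg, neg_sub]⟩) X
  have hKdeg : ∑ κ ∈ K, κ.1.totalDegree ≤ F.totalDegree * f.totalDegree :=
    curveSum F f hF.ne_zero hf0 hrel K (fun κ hκ => hXirr κ (hKX hκ))
      (fun κ hκ => by
        have := (hABc κ.2 (hXm κ (hKX hκ)).1).2.1
        rw [← this]; exact (hXd κ (hKX hκ)).mul_right _)
      (fun κ hκ => by
        have := (hABc κ.2 (hXm κ (hKX hκ)).1).2.2
        rw [← this]; exact (hXd κ (hKX hκ)).mul_right _) hKne
  have hKcard : K.card ≤ F.totalDegree * f.totalDegree := by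
    refine le_trans ?_ hKdeg
    rw [Finset.card_eq_sum_ones]
    exact Finset.sum_le_sum fun κ hκ => irr_td (hXirr κ (hKX hκ))
  set ab := F.totalDegree * f.totalDegree with hab
  -- three relations
  obtain ⟨R1, hR1⟩ : ∃ R1 : (Fin 3 → ℝ) → R2 → Prop, R1 = fun p s => On p s ∧ eval (tl p) (A s) = 0 ∧ eval (tl p) (B s) = 0 := ⟨_, rfl⟩
  obtain ⟨Rb, hRb⟩ : ∃ Rb : (Fin 3 → ℝ) → R2 → Prop, Rb = fun p s => On p s ∧ ∃ κ ∈ K, OnC p κ ∧ ¬ κ.1 ∣ κ.2 - s := ⟨_, rfl⟩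
  obtain ⟨Rg, hRg⟩ : ∃ Rg : (Fin 3 → ℝ) → R2 → Prop, Rg = fun p s => (∃ κ ∈ K, OnC p κ) ∧ ∀ κ ∈ K, OnC p κ → κ.1 ∣ κ.2 - s := ⟨_, rfl⟩
  have s1 : inc P N On ≤ inc P N R1 + inc P N (fun p s => Rb p s ∨ Rg p s) := by
    refine inc_split _ _ _ _ _ fun p hp s hs hon => ?_
    obtain ⟨r1, r2, r3⟩ := hABc s hs
    by_cases hc : eval (tl p) (c s) = 0
    · right
      obtain ⟨g, hg, hgi, hgd, hg0⟩ := irr_factor_zero (tl p) (c s) (hc0 s hs) hc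
      have hmem : (g, s) ∈ X := Finset.mem_biUnion.2 ⟨s, hs, Finset.mem_image.2 ⟨g, Multiset.mem_toFinset.2 hg, rfl⟩⟩
      obtain ⟨κ, hκ, hE1, hE2⟩ := hKex _ hmem
      simp only at hE1 hE2
      have hpk : OnC p κ := by
        refine ⟨?_, eval_zero_of_dvd hE1.dvd hg0⟩
        exact onC_on (κ := (g, s)) ⟨hon, hg0⟩ hE2
      by_cases hb : ∃ κ ∈ K, OnC p κ ∧ ¬ κ.1 ∣ κ.2 - s
      · left; rw [hRb]; exact ⟨hon, hb⟩
      · right; rw [hRg]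
        push Not at hb
        exact ⟨⟨κ, hκ, hpk⟩, hb⟩
    · left
      rw [hR1]
      refine ⟨hon, ?_, ?_⟩
      · have := eval_rho s F p hon
        rw [(hP p hp).1, ← r2, map_mul] at this
        exact (mul_eq_zero.1 this).resolve_left hc
      · have := eval_rho s f p hon
        rw [(hP p hp).2, ← r3, map_mul] at this
        exact (mul_eq_zero.1 this).resolve_left hc
  have s2 : inc P N (fun p s => Rb p s ∨ Rg p s) ≤ inc P N Rb + inc P N Rg :=
    inc_split _ _ _ _ _ fun p hp s hs h => h
  have b1 : inc P N R1 ≤ N.card * (4 * ab) := by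
    rw [inc, ← smul_eq_mul, ← Finset.sum_const]
    refine Finset.sum_le_sum fun s hs => ?_
    obtain ⟨r1, r2, r3⟩ := hABc s hs
    by_cases hB : B s = 0
    · rw [Finset.card_eq_zero.2]; · simp
      rw [Finset.filter_eq_empty_iff]
      intro p _ h
      rw [hR1] at h
      have hu : IsUnit (A s) := by
        rw [hB] at r1
        exact r1 dvd_rfl (dvd_zero _)
      exact (hu.map (eval (tl p))).ne_zero h.2.1
    · refine (count_common s (A s) (B s) (hA0 s hs) hB r1 _ ?_).trans ?_
      · intro p hp
        have := (Finset.mem_filter.1 hp).2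
        rw [hR1] at this; exact this
      · have d1 : (A s).totalDegree ≤ 2 * F.totalDegree := by
          refine le_trans ?_ (td_rho s (hN s hs) F)
          rw [← r2, totalDegree_mul_of_isDomain (hc0 s hs) (hA0 s hs)]; omega
        have d2 : (B s).totalDegree ≤ 2 * f.totalDegree := by
          refine le_trans ?_ (td_rho s (hN s hs) f)
          rw [← r3, totalDegree_mul_of_isDomain (hc0 s hs) hB]; omega
        refine (Nat.mul_le_mul d1 d2).trans (le_of_eq ?_)
        rw [hab]; ring
  have b2 : inc P N Rb ≤ N.card * (2 * ab) := by
    rw [inc, ← smul_eq_mul, ← Finset.sum_const]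
    refine Finset.sum_le_sum fun s hs => ?_
    have hsub : (P.filter fun p => Rb p s) ⊆ K.biUnion fun κ => P.filter fun p => On p s ∧ OnC p κ ∧ ¬ κ.1 ∣ κ.2 - s := by
      intro p hp
      rw [Finset.mem_filter, hRb] at hp
      obtain ⟨h1, h2, κ, h3, h4⟩ := hp
      exact Finset.mem_biUnion.2 ⟨κ, h3, Finset.mem_filter.2 ⟨h1, h2, h4⟩⟩
    refine (Finset.card_le_card hsub).trans (Finset.card_biUnion_le.trans ?_)
    calc _ ≤ ∑ κ ∈ K, 2 * κ.1.totalDegree := by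
          refine Finset.sum_le_sum fun κ hκ => ?_
          by_cases hd : κ.1 ∣ κ.2 - s
          · rw [Finset.card_eq_zero.2]; · simp
            rw [Finset.filter_eq_empty_iff]
            intro p _ h
            exact h.2.2 hd
          · refine (count_common s κ.1 (κ.2 - s) (hXirr κ (hKX hκ)).ne_zero (fun h => hd (h ▸ dvd_zero _))
              ((hXirr κ (hKX hκ)).isRelPrime_iff_not_dvd.2 hd) _ ?_).trans ?_
            · intro p hp
              obtain ⟨_, h1, h2, _⟩ := Finset.mem_filter.1 hp
              refine ⟨h1, h2.2, ?_⟩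
              rw [map_sub, sub_eq_zero]
              exact h2.1.symm.trans h1
            · rw [mul_comm]
              refine Nat.mul_le_mul_right _ ((totalDegree_sub _ _).trans (max_le ?_ (hN s hs)))
              exact hN _ (hXm κ (hKX hκ)).1
      _ ≤ 2 * ab := by rw [← Finset.mul_sum]; exact Nat.mul_le_mul_left _ hKdeg
  have b3 : inc P N Rg ≤ 2 * P.card + N.card * (2 * ab) := by
    have hch : ∀ p : Fin 3 → ℝ, ∃ κ : R2 × R2, (∃ κ ∈ K, OnC p κ) → κ ∈ K ∧ OnC p κ := by
      intro p
      by_cases h : ∃ κ ∈ K, OnC p κ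
      · obtain ⟨κ, h1⟩ := h; exact ⟨κ, fun _ => h1⟩
      · exact ⟨0, fun h' => absurd h' h⟩
    choose k hk using hch
    set P' := P.filter fun p => ∃ κ ∈ K, OnC p κ with hP'
    set Pk : R2 × R2 → Finset (Fin 3 → ℝ) := fun κ => P'.filter fun p => k p = κ with hPk
    set Nk : R2 × R2 → Finset R2 := fun κ => N.filter fun s => κ.1 ∣ κ.2 - s with hNk
    rw [inc_flip]
    have e1 : inc N P (fun s p => Rg p s) ≤ ∑ p ∈ P', (Nk (k p)).card := by
      rw [inc, hP', Finset.sum_filter]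
      refine Finset.sum_le_sum fun p hp => ?_
      split_ifs with h
      · refine Finset.card_le_card fun s hs => ?_
        rw [Finset.mem_filter, hRg] at hs
        exact Finset.mem_filter.2 ⟨hs.1, hs.2.2 _ (hk p h).1 (hk p h).2⟩
      · rw [Nat.le_zero, Finset.card_eq_zero, Finset.filter_eq_empty_iff]
        intro s _ hh
        rw [hRg] at hh
        exact h hh.1
    have e2 : ∑ p ∈ P', (Nk (k p)).card = ∑ κ ∈ K, (Pk κ).card * (Nk κ).card := by
      rw [← Finset.sum_fiberwise_of_maps_to (s := P') (t := K) (g := k)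
        (fun p hp => (hk p (Finset.mem_filter.1 hp).2).1)]
      refine Finset.sum_congr rfl fun κ _ => ?_
      rw [Finset.sum_congr rfl (g := fun _ => (Nk κ).card) fun p hp => by rw [(Finset.mem_filter.1 hp).2]]
      rw [Finset.sum_const, smul_eq_mul]
    have e3 : ∑ κ ∈ K, (Pk κ).card = P'.card :=
      (Finset.card_eq_sum_card_fiberwise (fun p hp => (hk p (Finset.mem_filter.1 hp).2).1)).symm
    have e4 : ∀ κ ∈ K, (Pk κ).card * (Nk κ).card ≤ 2 * (Pk κ).card + 2 * N.card := by
      intro κ hκ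
      have hNc : (Nk κ).card ≤ N.card := Finset.card_filter_le _ _
      by_cases h1 : (Pk κ).card ≤ 2
      · nlinarith
      by_cases h2 : (Nk κ).card ≤ 2
      · nlinarith
      exfalso
      obtain ⟨x, hx, y, hy, z, hz, hxy, hxz, hyz⟩ := Finset.two_lt_card.1 (not_le.1 h1)
      obtain ⟨u, hu, v, hv, w, hw, huv, huw, hvw⟩ := Finset.two_lt_card.1 (not_le.1 h2)
      have hPkm : ∀ p ∈ Pk κ, p ∈ P ∧ OnC p κ := by
        intro p hp
        obtain ⟨h1, h2⟩ := Finset.mem_filter.1 hp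
        obtain ⟨h3, h4⟩ := Finset.mem_filter.1 h1
        exact ⟨h3, h2 ▸ (hk p h4).2⟩
      have hNkm : ∀ s ∈ Nk κ, s ∈ N ∧ κ.1 ∣ κ.2 - s := fun s hs => Finset.mem_filter.1 hs
      have hon : ∀ p ∈ Pk κ, ∀ s ∈ Nk κ, On p s := fun p hp s hs => onC_on (hPkm p hp).2 (hNkm s hs).2
      exact hK x (hPkm x hx).1 y (hPkm y hy).1 z (hPkm z hz).1 u (hNkm u hu).1 v (hNkm v hv).1 w (hNkm w hw).1
        hxy hxz hyz huv huw hvw (hon x hx u hu) (hon x hx v hv) (hon x hx w hw)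
        (hon y hy u hu) (hon y hy v hv) (hon y hy w hw) (hon z hz u hu) (hon z hz v hv) (hon z hz w hw)
    have e5 := Finset.sum_le_sum e4
    rw [Finset.sum_add_distrib, ← Finset.mul_sum, e3, Finset.sum_const, smul_eq_mul] at e5
    have e6 : P'.card ≤ P.card := Finset.card_filter_le _ _
    have e7 : K.card * (2 * N.card) ≤ ab * (2 * N.card) := Nat.mul_le_mul_right _ hKcard
    rw [e2] at e1
    nlinarith
  nlinarith

lemma td_listprod {σ : Type} (L : List (MvPolynomial σ ℝ)) : L.prod.totalDegree ≤ (L.map totalDegree).sum := by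
  induction L with
  | nil => simp
  | cons a L ih =>
    rw [List.prod_cons, List.map_cons, List.sum_cons]
    exact (totalDegree_mul _ _).trans (by omega)

lemma td_map_rho (s : R2) (hs : s.totalDegree ≤ 2) (L : List R3) :
    (L.map (rho s)).prod.totalDegree ≤ 2 * (L.map totalDegree).sum := by
  refine (td_listprod _).trans ?_
  rw [List.map_map]
  induction L with
  | nil => simp
  | cons a L ih =>
    rw [List.map_cons, List.map_cons, List.sum_cons, List.sum_cons]
    have := td_rho s hs a
    simp only [Function.comp] at *
    omega

/-- transfer of sign-distinct sets to the plane -/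
lemma transfer (s : R2) (L : List R3) (P T : Finset (Fin 3 → ℝ)) (hT : T ⊆ nz P L) (hon : ∀ t ∈ T, On t s)
    (hd : ∀ x ∈ T, ∀ y ∈ T, SameSign L x y → x = y) :
    ∃ T' : Finset (Fin 2 → ℝ), T'.card = T.card ∧ (∀ t ∈ T', ∃ p ∈ T, tl p = t) ∧
      (∀ t ∈ T', ∀ f ∈ L.map (rho s), eval t f ≠ 0) ∧
      (∀ x ∈ T', ∀ y ∈ T', SameSign (L.map (rho s)) x y → x = y) := by
  classical
  refine ⟨T.image tl, Finset.card_image_of_injOn fun p hp q hq he => tl_inj (hon p hp) (hon q hq) he, ?_, ?_, ?_⟩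
  · intro t ht
    obtain ⟨p, hp, h⟩ := Finset.mem_image.1 ht
    exact ⟨p, hp, h⟩
  · intro t ht f hf
    obtain ⟨p, hp, rfl⟩ := Finset.mem_image.1 ht
    obtain ⟨g, hg, rfl⟩ := List.mem_map.1 hf
    rw [eval_rho s g p (hon p hp)]
    exact (Finset.mem_filter.1 (hT hp)).2 g hg
  · intro x hx y hy h
    obtain ⟨p, hp, rfl⟩ := Finset.mem_image.1 hx
    obtain ⟨q, hq, rfl⟩ := Finset.mem_image.1 hy
    rw [hd p hp q hq ?_]
    intro f hf
    have := h (rho s f) (List.mem_map.2 ⟨f, hf, rfl⟩)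
    rwa [eval_rho s f p (hon p hp), eval_rho s f q (hon q hq)] at this

lemma sum_toFinset_le (L : List R3) [DecidableEq R3] (w : R3 → ℕ) : ∑ f ∈ L.toFinset, w f ≤ (L.map w).sum := by
  induction L with
  | nil => simp
  | cons a L ih =>
    rw [List.toFinset_cons, List.map_cons, List.sum_cons]
    by_cases h : a ∈ L.toFinset
    · rw [Finset.insert_eq_of_mem h]; omega
    · rw [Finset.sum_insert h]; omega

lemma levelB (F : R3) (hF : Irreducible F) (P : Finset (Fin 3 → ℝ)) (N : Finset R2)
    (hP : ∀ p ∈ P, eval p F = 0) (hN : ∀ s ∈ N, s.totalDegree ≤ 2)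
    (hNF : ∀ s ∈ N, rho s F ≠ 0) (hK : K33 P N On) (J : ℕ) (hJ : F.totalDegree ≤ 2^J) :
    (inc P N On : ℝ) ≤ 368 * N.card * (F.totalDegree * 2^J) +
      864 * ((P.card:ℝ)^3 / (F.totalDegree^2 * 16^J)) + 2 * P.card := by
  classical
  obtain ⟨L, hL1, hL2, hL3⟩ := partition2 F hF P J hJ
  have hD := irr_td hF
  set D := F.totalDegree with hDdef
  set P0 := P.filter fun p => ∃ f ∈ L, eval p f = 0 with hP0
  have h1 : inc P N On ≤ inc (nz P L) N On + inc P0 N On := by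
    refine inc_unionP _ _ _ _ _ fun p hp => ?_
    by_cases h : ∃ f ∈ L, eval p f = 0
    · right; exact Finset.mem_filter.2 ⟨hp, h⟩
    · left; push Not at h
      exact Finset.mem_filter.2 ⟨hp, h⟩
  have h2 : (inc (nz P L) N On : ℝ) ≤ 2 * (96 * (D * 2^J)) * N.card + 2 * Phi P L := by
    refine inc_classes hK L _ ?_
    intro s hs T hT hon hd
    obtain ⟨T', c1, c2, c3, c4⟩ := transfer s L P T hT hon hd
    have := curveClasses' (rho s F) (hNF s hs) (L.map (rho s)) T' (by
      intro t ht
      obtain ⟨p, hp, rfl⟩ := c2 t ht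
      rw [eval_rho s F p (hon p hp)]
      exact hP p (Finset.mem_filter.1 (hT hp)).1) c3 c4
    rw [c1] at this
    have d1 := td_rho s (hN s hs) F
    have d2 := td_map_rho s (hN s hs) L
    have d3 : (L.map (rho s)).prod.totalDegree ≤ 44 * 2^J := by omega
    have : T.card ≤ 96 * (D * 2^J) := by
      refine this.trans ?_
      calc _ ≤ (2 * D) * (2 * D + 44 * 2^J + 2) := Nat.mul_le_mul d1 (by omega)
        _ ≤ (2 * D) * (48 * 2^J) := Nat.mul_le_mul_left _ (by omega)
        _ = _ := by ring
    exact_mod_cast this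
  have h3 : inc P0 N On ≤ N.card * (8 * (D * (22 * 2^J))) + 2 * P.card := by
    have hch : ∀ p : Fin 3 → ℝ, ∃ f : R3, p ∈ P0 → f ∈ L ∧ eval p f = 0 := by
      intro p
      by_cases h : p ∈ P0
      · obtain ⟨f, hf⟩ := (Finset.mem_filter.1 h).2
        exact ⟨f, fun _ => hf⟩
      · exact ⟨0, fun h' => absurd h' h⟩
    choose k hk using hch
    have e1 := inc_biUnion P0 N On L.toFinset (fun f => P0.filter fun p => k p = f) (by
      intro p hp
      exact ⟨k p, List.mem_toFinset.2 (hk p hp).1, Finset.mem_filter.2 ⟨hp, rfl⟩⟩)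
    have e2 : ∑ f ∈ L.toFinset, (P0.filter fun p => k p = f).card = P0.card :=
      (Finset.card_eq_sum_card_fiberwise fun p hp => by simpa using (hk p hp).1).symm
    have e3 : ∀ f ∈ L.toFinset, inc (P0.filter fun p => k p = f) N On ≤
        N.card * (8 * (D * f.totalDegree)) + 2 * (P0.filter fun p => k p = f).card := by
      intro f hf
      refine partD F f hF (hL1 f (List.mem_toFinset.1 hf)) _ N ?_ hN hNF (hK.mono ?_ le_rfl)
      · intro p hp
        obtain ⟨a1, a2⟩ := Finset.mem_filter.1 hp
        exact ⟨hP p (Finset.mem_filter.1 a1).1, a2 ▸ (hk p a1).2⟩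
      · exact (Finset.filter_subset _ _).trans (Finset.filter_subset _ _)
    have e4 := e1.trans (Finset.sum_le_sum e3)
    rw [Finset.sum_add_distrib, ← Finset.mul_sum, ← Finset.mul_sum, ← Finset.mul_sum, ← Finset.mul_sum, e2] at e4
    have e5 : ∑ f ∈ L.toFinset, f.totalDegree ≤ 22 * 2^J := (sum_toFinset_le L _).trans hL2
    have e6 : P0.card ≤ P.card := Finset.card_filter_le _ _
    refine e4.trans (add_le_add ?_ (by omega))
    gcongr
  have h1' : (inc P N On : ℝ) ≤ inc (nz P L) N On + inc P0 N On := by exact_mod_cast h1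
  have h3' : (inc P0 N On : ℝ) ≤ N.card * (8 * (D * (22 * 2^J))) + 2 * P.card := by exact_mod_cast h3
  rw [mul_div_assoc] at hL3
  linarith

set_option maxHeartbeats 2000000 in
lemma lemM (P : Finset (Fin 3 → ℝ)) (N : Finset R2) (hN : ∀ s ∈ N, s.totalDegree ≤ 2) (hK : K33 P N On) (I : ℕ) :
    (inc P N On : ℝ) ≤ 1000000 * (N.card * 4^I + (P.card:ℝ)^3 / 64^I + P.card + 8^I) := by
  classical
  rcases P.eq_empty_or_nonempty with hPe | hPne
  · have : inc P N On = 0 := by rw [hPe, inc]; simp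
    rw [this]; push_cast; positivity
  have hm : (0:ℝ) < P.card := by exact_mod_cast hPne.card_pos
  set m : ℝ := (P.card : ℝ) with hmdef
  set n : ℝ := (N.card : ℝ) with hndef
  have hn0 : 0 ≤ n := Nat.cast_nonneg _
  obtain ⟨L, hL1, hL2, hL3⟩ := partition1 P I
  set F := L.prod with hFdef
  have hF0 : F ≠ 0 := List.prod_ne_zero fun h => hL1 0 h rfl
  have hFd : F.totalDegree ≤ 22 * 2^I := (td_listprod L).trans hL2
  set d : ℝ := 2^I with hddef
  have hd1 : 1 ≤ d := one_le_pow₀ (by norm_num)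
  have h4 : (4:ℝ)^I = d^2 := by rw [hddef, ← pow_mul, mul_comm, pow_mul]; norm_num
  have h8 : (8:ℝ)^I = d^3 := by rw [hddef, ← pow_mul, mul_comm, pow_mul]; norm_num
  have h64 : (64:ℝ)^I = d^6 := by rw [hddef, ← pow_mul, mul_comm, pow_mul]; norm_num
  set N1 := N.filter fun s => rho s F = 0 with hN1
  set N2 := N.filter fun s => rho s F ≠ 0 with hN2
  have hN1c : N1.card ≤ 22 * 2^I := (card_rho_zero F hF0 N1 fun s hs => (Finset.mem_filter.1 hs).2).trans hFd
  have hN2c : (N2.card : ℝ) ≤ n := by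
    have h : N2.card ≤ N.card := Finset.card_le_card (Finset.filter_subset _ _)
    rw [hndef]; exact_mod_cast h
  have hN2n : N2 ⊆ N := Finset.filter_subset _ _
  have a0 : inc P N On ≤ inc P N1 On + inc P N2 On := by
    refine inc_unionN _ _ _ _ _ fun s hs => ?_
    by_cases h : rho s F = 0
    · exact Or.inl (Finset.mem_filter.2 ⟨hs, h⟩)
    · exact Or.inr (Finset.mem_filter.2 ⟨hs, h⟩)
  have a1 : (inc P N1 On : ℝ) ≤ 2 * m + 2 * (22 * d)^3 := by
    have := inc_K33b (hK.mono le_rfl (Finset.filter_subset _ _ : N1 ⊆ N))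
    have h2 : (inc P N1 On : ℝ) ≤ 2 * m + 2 * (N1.card : ℝ)^3 := by rw [hmdef]; exact_mod_cast this
    have h3 : (N1.card : ℝ) ≤ 22 * d := by rw [hddef]; exact_mod_cast hN1c
    refine h2.trans ?_
    gcongr
  set P0 := P.filter fun p => eval p F = 0 with hP0
  have a2 : inc P N2 On ≤ inc (nz P L) N2 On + inc P0 N2 On := by
    refine inc_unionP _ _ _ _ _ fun p hp => ?_
    by_cases h : eval p F = 0
    · right; exact Finset.mem_filter.2 ⟨hp, h⟩
    · left
      exact Finset.mem_filter.2 ⟨hp, (eval_list_prod_ne L p).1 h⟩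
  have a3 : (inc (nz P L) N2 On : ℝ) ≤ 2 * (46 * d)^2 * n + 2 * Phi P L := by
    have := inc_classes (hK.mono le_rfl hN2n) L ((46 * d)^2) (by
      intro s hs T hT hon hd
      obtain ⟨T', c1, c2, c3, c4⟩ := transfer s L P T hT hon hd
      have := planeClasses (L.map (rho s)) T' c3 c4
      rw [c1] at this
      have d2 := td_map_rho s (hN s (hN2n hs)) L
      have hpos : 0 < 2^I := by positivity
      have : T.card ≤ (46 * 2^I)^2 := this.trans (Nat.pow_le_pow_left (by omega) 2)
      rw [hddef]; exact_mod_cast this)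
    refine this.trans ?_
    gcongr
  have a4 : (inc P0 N2 On : ℝ) ≤ 736 * 507 * n * d^2 + 864 * (m^3 / d^6) + 2 * m := by
    set S := (UniqueFactorizationMonoid.factors F).toFinset with hS
    have hSd : ∑ g ∈ S, g.totalDegree ≤ 22 * 2^I := (sum_factors_td F hF0).trans hFd
    have hSd' : ∑ g ∈ S, (g.totalDegree : ℝ) ≤ 22 * d := by rw [hddef]; exact_mod_cast hSd
    have hch : ∀ p : Fin 3 → ℝ, ∃ f : R3, p ∈ P0 → f ∈ S ∧ eval p f = 0 := by
      intro p
      by_cases h : p ∈ P0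
      · obtain ⟨f, hf, _, _, hf2⟩ := irr_factor_zero p F hF0 (Finset.mem_filter.1 h).2
        exact ⟨f, fun _ => ⟨Multiset.mem_toFinset.2 hf, hf2⟩⟩
      · exact ⟨0, fun h' => absurd h' h⟩
    choose k hk using hch
    set Q : R3 → Finset (Fin 3 → ℝ) := fun f => P0.filter fun p => k p = f with hQ
    have e1 := inc_biUnion P0 N2 On S Q (by
      intro p hp
      exact ⟨k p, (hk p hp).1, Finset.mem_filter.2 ⟨hp, rfl⟩⟩)
    have e2 : ∑ f ∈ S, (Q f).card = P0.card :=
      (Finset.card_eq_sum_card_fiberwise fun p hp => (hk p hp).1).symm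
    have e2' : ∑ f ∈ S, ((Q f).card : ℝ) ≤ m := by
      have : P0.card ≤ P.card := Finset.card_filter_le _ _
      rw [← e2] at this
      rw [hmdef]; exact_mod_cast this
    have e3 : ∀ f ∈ S, (inc (Q f) N2 On : ℝ) ≤
        736 * n * ((22 * d) * f.totalDegree + ((Q f).card * d^2 / m + f.totalDegree * d))
          + 864 * ((Q f).card * (m^2 / d^6)) + 2 * (Q f).card := by
      intro f hf
      have hfm := Multiset.mem_toFinset.1 hf
      have hfi : Irreducible f := UniqueFactorizationMonoid.irreducible_of_factor _ hfm
      have hfd : f ∣ F := UniqueFactorizationMonoid.dvd_of_mem_factors hfm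
      have hD1 : (1:ℝ) ≤ f.totalDegree := by exact_mod_cast irr_td hfi
      have hD2 : (f.totalDegree : ℝ) ≤ 22 * d := by
        refine le_trans ?_ hSd'
        exact Finset.single_le_sum (f := fun g : R3 => (g.totalDegree:ℝ)) (fun _ _ => Nat.cast_nonneg _) hf
      set ml : ℝ := ((Q f).card : ℝ) with hml
      have hml0 : 0 ≤ ml := Nat.cast_nonneg _
      obtain ⟨x, hx0, hx⟩ : ∃ x : ℝ, 0 ≤ x ∧ x^2 = ml * d^3 / (m * f.totalDegree) :=
        ⟨Real.sqrt (ml * d^3 / (m * f.totalDegree)), Real.sqrt_nonneg _, Real.sq_sqrt (by positivity)⟩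
      obtain ⟨J0, hJ1, hJ2⟩ := exists_nat_pow_near (x := max (f.totalDegree : ℝ) x) (y := 2)
        (le_max_of_le_left hD1) (by norm_num)
      have hJa : (f.totalDegree : ℝ) ≤ 2^(J0+1) := (le_max_left _ _).trans hJ2.le
      have hJb : x ≤ 2^(J0+1) := (le_max_right _ _).trans hJ2.le
      have hJc : (2:ℝ)^(J0+1) ≤ 2 * (f.totalDegree + x) := by
        rw [pow_succ, mul_comm]
        have : max (f.totalDegree : ℝ) x ≤ f.totalDegree + x := max_le (by linarith) (by linarith)
        linarith
      have hB := levelB f hfi (Q f) N2 (fun p hp => by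
          obtain ⟨b1, b2⟩ := Finset.mem_filter.1 hp
          exact b2 ▸ (hk p b1).2) (fun s hs => hN s (hN2n hs))
        (fun s hs h => (Finset.mem_filter.1 hs).2 (by
          obtain ⟨w, hw⟩ := hfd
          rw [hw, map_mul, h, zero_mul]))
        (hK.mono ((Finset.filter_subset _ _).trans (Finset.filter_subset _ _)) hN2n) (J0+1)
        (by exact_mod_cast hJa)
      refine hB.trans ?_
      set D : ℝ := (f.totalDegree : ℝ) with hD
      set E : ℝ := 2^(J0+1) with hE
      have h16 : (16:ℝ)^(J0+1) = E^4 := by rw [hE, ← pow_mul, mul_comm, pow_mul]; norm_num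
      rw [h16]
      refine add_le_add (add_le_add ?_ ?_) le_rfl
      · have hDx : D * x ≤ ml * d^2 / m + D * d := by
          refine le_of_sq_le_sq ?_ (by positivity)
          have : (D * x)^2 = (ml * d^2 / m) * (D * d) := by
            rw [mul_pow, hx]; field_simp
          rw [this]
          have p1 : 0 ≤ ml * d^2 / m := by positivity
          have p2 : 0 ≤ D * d := by positivity
          nlinarith [mul_nonneg p1 p2]
        calc 368 * (N2.card : ℝ) * (D * E) ≤ 368 * n * (D * (2 * (D + x))) := by gcongr
          _ = 736 * n * (D * D + D * x) := by ring
          _ ≤ _ := by gcongr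
      · gcongr
        rw [div_le_iff₀ (by positivity)]
        have hx4 : x^4 ≤ E^4 := pow_le_pow_left₀ hx0 hJb 4
        have hx4' : x^4 = ml^2 * d^6 / (m^2 * D^2) := by
          rw [show x^4 = (x^2)^2 by ring, hx]; field_simp
        calc ml^3 = ml * (m^2/d^6) * (D^2 * (ml^2 * d^6 / (m^2 * D^2))) := by field_simp
          _ ≤ ml * (m^2/d^6) * (D^2 * E^4) := by
            rw [← hx4']; gcongr
    have e4 : (inc P0 N2 On : ℝ) ≤ ∑ f ∈ S, (inc (Q f) N2 On : ℝ) := by exact_mod_cast e1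
    have e5 := e4.trans (Finset.sum_le_sum e3)
    rw [Finset.sum_add_distrib, Finset.sum_add_distrib, ← Finset.mul_sum, ← Finset.mul_sum, ← Finset.mul_sum,
      ← Finset.sum_mul, Finset.sum_add_distrib, ← Finset.mul_sum, Finset.sum_add_distrib, ← Finset.sum_mul,
      ← Finset.sum_div, ← Finset.sum_mul] at e5
    refine e5.trans ?_
    refine add_le_add (add_le_add ?_ ?_) (by linarith)
    · calc _ ≤ 736 * n * ((22 * d) * (22 * d) + (m * d^2/m + (22 * d) * d)) := by gcongr
        _ = 736 * 507 * n * d^2 := by field_simp; ring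
    · calc _ ≤ 864 * (m * (m^2/d^6)) := by gcongr
        _ = _ := by field_simp
  have a0' : (inc P N On : ℝ) ≤ inc P N1 On + inc P N2 On := by exact_mod_cast a0
  have a2' : (inc P N2 On : ℝ) ≤ inc (nz P L) N2 On + inc P0 N2 On := by exact_mod_cast a2
  rw [h64, mul_div_assoc] at hL3
  rw [h4, h8, h64]
  have q1 : 0 ≤ n * d^2 := by positivity
  have q2 : 0 ≤ m^3/d^6 := by positivity
  have q3 : 0 ≤ d^3 := by positivity
  nlinarith

lemma core (P : Finset (Fin 3 → ℝ)) (N : Finset R2) (hN : ∀ s ∈ N, s.totalDegree ≤ 2) (hK : K33 P N On) :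
    (inc P N On : ℝ) ≤ 70000000 * ((P.card:ℝ)^((3:ℝ)/4) * (N.card:ℝ)^((3:ℝ)/4) + P.card + N.card) := by
  have hpos : 0 ≤ (P.card:ℝ)^((3:ℝ)/4) * (N.card:ℝ)^((3:ℝ)/4) := by positivity
  have hA : (inc P N On : ℝ) ≤ 2 * N.card + 2 * (P.card:ℝ)^3 := by exact_mod_cast inc_K33a hK
  have hB : (inc P N On : ℝ) ≤ 2 * P.card + 2 * (N.card:ℝ)^3 := by exact_mod_cast inc_K33b hK
  have hM := lemM P N hN hK
  obtain ⟨T, hT⟩ : ∃ T : ℝ, T = (inc P N On : ℝ) := ⟨_, rfl⟩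
  obtain ⟨m, hm⟩ : ∃ T : ℝ, T = (P.card : ℝ) := ⟨_, rfl⟩
  obtain ⟨n, hn⟩ : ∃ T : ℝ, T = (N.card : ℝ) := ⟨_, rfl⟩
  have hm0 : 0 ≤ m := by rw [hm]; positivity
  have hn0 : 0 ≤ n := by rw [hn]; positivity
  simp only [← hT, ← hm, ← hn] at hpos hA hB hM ⊢
  by_cases h1 : m^3 < n
  · linarith
  by_cases h2 : n^3 < m
  · linarith
  push Not at h1 h2
  by_cases hmz : m = 0
  · rw [hmz] at hA h1; norm_num at hA h1; linarith
  have hmp : 0 < m := lt_of_le_of_ne hm0 (Ne.symm hmz)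
  have hnp : 0 < n := by
    rcases hn0.lt_or_eq with h | h
    · exact h
    · rw [← h] at h2; norm_num at h2; linarith
  obtain ⟨I, hI1, hI2⟩ := exists_nat_pow_near (x := m^3/n) (y := 256) ((one_le_div hnp).2 h1) (by norm_num)
  have hM := hM I
  obtain ⟨d, hd⟩ : ∃ d : ℝ, d = 2^I := ⟨_, rfl⟩
  have hd1 : 1 ≤ d := hd ▸ one_le_pow₀ (by norm_num)
  have h4 : (4:ℝ)^I = d^2 := by rw [hd, ← pow_mul, mul_comm, pow_mul]; norm_num
  have h8 : (8:ℝ)^I = d^3 := by rw [hd, ← pow_mul, mul_comm, pow_mul]; norm_num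
  have h64 : (64:ℝ)^I = d^6 := by rw [hd, ← pow_mul, mul_comm, pow_mul]; norm_num
  have h256 : (256:ℝ)^I = d^8 := by rw [hd, ← pow_mul, mul_comm, pow_mul]; norm_num
  rw [pow_succ 256, h256, div_lt_iff₀ hnp] at hI2
  rw [h256, le_div_iff₀ hnp] at hI1
  rw [h4, h8, h64] at hM
  -- x = m^(1/8), y = n^(1/8)
  obtain ⟨x, hx0, hx⟩ : ∃ x : ℝ, 0 < x ∧ x = m^((1:ℝ)/8) := ⟨_, Real.rpow_pos_of_pos hmp _, rfl⟩
  obtain ⟨y, hy0, hy⟩ : ∃ x : ℝ, 0 < x ∧ x = n^((1:ℝ)/8) := ⟨_, Real.rpow_pos_of_pos hnp _, rfl⟩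
  have hx8 : m = x^8 := by rw [hx, ← Real.rpow_natCast, ← Real.rpow_mul hm0]; norm_num
  have hy8 : n = y^8 := by rw [hy, ← Real.rpow_natCast, ← Real.rpow_mul hn0]; norm_num
  have hx6 : m^((3:ℝ)/4) = x^6 := by rw [hx, ← Real.rpow_natCast, ← Real.rpow_mul hm0]; norm_num
  have hy6 : n^((3:ℝ)/4) = y^6 := by rw [hy, ← Real.rpow_natCast, ← Real.rpow_mul hn0]; norm_num
  rw [hx6, hy6]
  rw [hx6, hy6] at hpos
  have c1 : d * y ≤ x^3 := by
    have : (d*y)^8 ≤ (x^3)^8 := by rw [mul_pow, ← hy8, ← pow_mul, mul_comm 3 8, pow_mul, ← hx8]; exact hI1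
    exact le_of_pow_le_pow_left₀ (by norm_num) (by positivity) this
  have c2 : x^3 ≤ 2 * d * y := by
    have : (x^3)^8 ≤ (2*d*y)^8 := by
      rw [mul_pow, mul_pow, ← hy8, ← pow_mul, mul_comm 3 8, pow_mul, ← hx8]; norm_num; linarith
    exact le_of_pow_le_pow_left₀ (by norm_num) (by positivity) this
  have c3 : x ≤ y^3 := by
    have : x^8 ≤ (y^3)^8 := by rw [← pow_mul, mul_comm 3 8, pow_mul, ← hy8, ← hx8]; exact h2
    exact le_of_pow_le_pow_left₀ (by norm_num) (by positivity) this
  have f1 : n * d^2 ≤ x^6 * y^6 := by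
    rw [hy8]
    calc y^8 * d^2 = (d*y)^2 * y^6 := by ring
      _ ≤ (x^3)^2 * y^6 := by gcongr
      _ = _ := by ring
  have f2 : m^3/d^6 ≤ 64 * (x^6 * y^6) := by
    rw [hx8, div_le_iff₀ (by positivity)]
    calc (x^8)^3 = (x^3)^6 * x^6 := by ring
      _ ≤ (2*d*y)^6 * x^6 := by gcongr
      _ = _ := by ring
  have f3 : d^3 ≤ x^6 * y^6 := by
    have : d^3 * y^3 ≤ (x^6 * y^6) * y^3 := by
      calc d^3 * y^3 = (d*y)^3 := by ring
        _ ≤ (x^3)^3 := by gcongr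
        _ = x^6 * x^2 * x := by ring
        _ ≤ x^6 * (y^3)^2 * (y^3) := by gcongr
        _ = _ := by ring
    exact le_of_mul_le_mul_right this (by positivity)
  nlinarith

lemma nsq (a : Pt3) : ‖a‖^2 = ⟪a, a⟫ := (real_inner_self_eq_norm_sq a).symm

lemma plane_normal (q : Set Pt3) (h : IsPlane3 q) : ∃ g : Pt3 × ℝ, ‖g.1‖ = 1 ∧ g.1 2 ≠ 1 ∧ q = {x | ⟪g.1, x⟫ = g.2} := by
  obtain ⟨u, d, hu, rfl⟩ := h
  have hn : ‖u‖ ≠ 0 := norm_ne_zero_iff.2 hu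
  have key : ∀ c : ℝ, c ≠ 0 → {x : Pt3 | ⟪u, x⟫ = d} = {x | ⟪c • u, x⟫ = c * d} := by
    intro c hc
    ext x
    simp only [Set.mem_ofPred_eq, inner_smul_left]
    simp [hc]
  by_cases h1 : (‖u‖⁻¹ • u) 2 = 1
  · refine ⟨⟨(-‖u‖⁻¹) • u, (-‖u‖⁻¹) * d⟩, ?_, ?_, key _ ?_⟩
    · simp [norm_smul, hn]
    · simp at h1 ⊢; rw [h1]; norm_num
    · simpa using hu
  · refine ⟨⟨(‖u‖⁻¹) • u, (‖u‖⁻¹) * d⟩, ?_, h1, key _ ?_⟩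
    · simp [norm_smul, hn]
    · simpa using hu

lemma tangent_dist (u : Pt3) (d : ℝ) (hu : ‖u‖ = 1) (c : Pt3) (r : ℝ)
    (h : Tangent3 {x | ⟪u, x⟫ = d} (Metric.sphere c r)) : (⟪u, c⟫ - d) = r ∨ (⟪u, c⟫ - d) = -r := by
  obtain ⟨p, hp⟩ := h
  have huu : ⟪u, u⟫ = 1 := by rw [← nsq, hu]; norm_num
  obtain ⟨e, he⟩ : ∃ e, e = ⟪u, c⟫ - d := ⟨_, rfl⟩
  rw [← he]
  have hpm : p ∈ {x | ⟪u, x⟫ = d} ∩ Metric.sphere c r := by rw [hp]; rfl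
  obtain ⟨h1, h2⟩ := hpm
  simp only [Set.mem_ofPred_eq, mem_sphere_iff_norm] at h1 h2
  have hp' : (2:ℝ) • (c - e • u) - p ∈ {x | ⟪u, x⟫ = d} ∩ Metric.sphere c r := by
    refine ⟨?_, ?_⟩
    · simp only [Set.mem_ofPred_eq, inner_sub_right, inner_smul_right, huu, h1]; rw [he]; ring
    · rw [mem_sphere_iff_norm, ← h2]
      have : ‖(2:ℝ) • (c - e • u) - p - c‖^2 = ‖p - c‖^2 := by
        have e1 : (2:ℝ) • (c - e • u) - p - c = (c - p) - (2 * e) • u := by module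
        have e2 : ⟪u, c - p⟫ = e := by rw [inner_sub_right, h1, he]
        rw [e1, ← norm_neg (p - c), neg_sub]
        generalize c - p = z at *
        rw [nsq, nsq]
        simp only [inner_sub_left, inner_sub_right, inner_smul_left, inner_smul_right, huu, e2, real_inner_comm u z]
        simp; ring
      exact (sq_eq_sq₀ (norm_nonneg _) (norm_nonneg _)).1 this
  rw [hp] at hp'
  have h3 : (2:ℝ) • (c - e • u) - p = p := hp'
  have h4 : p - c = -(e • u) := by
    have : (2:ℝ) • p = (2:ℝ) • (c - e • u) := by
      rw [two_smul ℝ p]; nth_rewrite 1 [← h3]; abel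
    have := smul_right_injective Pt3 (two_ne_zero (α := ℝ)) this
    rw [this]; abel
  rw [h4, norm_neg, norm_smul, hu, mul_one, Real.norm_eq_abs] at h2
  rcases abs_choice e with h | h
  · left; linarith
  · right; linarith

lemma cyl_tangent (u : Pt3) (d : ℝ) (hu : ‖u‖ = 1) (a w : Pt3) (hw : w ≠ 0) (e r : ℝ) (hr : |e| = r)
    (h1 : ⟪u, a⟫ - d = e) (h2 : ⟪u, w⟫ = 0) : TangentPlaneCyl {x | ⟪u, x⟫ = d} a w r := by
  have huu : ⟪u, u⟫ = 1 := by rw [← nsq, hu]; norm_num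
  have hww : 0 < ⟪w, w⟫ := real_inner_self_pos.2 hw
  have hne : (lineThrough3 a w).Nonempty := ⟨a, 0, by simp⟩
  refine ⟨lineThrough3 (a - e • u) w, ⟨_, _, hw, rfl⟩, ?_⟩
  ext x
  constructor
  · rintro ⟨hx1, hx2⟩
    simp only [Set.mem_ofPred_eq, cylSet] at hx1 hx2
    obtain ⟨t, ht⟩ : ∃ t, t = ⟪w, x - a⟫ / ⟪w, w⟫ := ⟨_, rfl⟩
    refine ⟨t, ?_⟩
    obtain ⟨z, hz⟩ : ∃ z, z = x - (a + t • w) := ⟨_, rfl⟩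
    have hzw : ⟪z, w⟫ = 0 := by
      rw [real_inner_comm, hz, ← sub_sub, inner_sub_right, inner_smul_right, ht]; field_simp; ring
    have hle : ‖z‖ ≤ r := by
      rw [← hx2]
      refine (Metric.le_infDist hne).2 ?_
      rintro _ ⟨s, rfl⟩
      rw [dist_eq_norm]
      have e1 : x - (a + s • w) = z + (t - s) • w := by rw [hz]; module
      rw [e1]
      refine le_of_sq_le_sq ?_ (norm_nonneg _)
      rw [nsq, nsq]
      simp only [inner_add_left, inner_add_right, inner_smul_left, inner_smul_right, hzw, real_inner_comm z w]
      simp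
      nlinarith [mul_nonneg (mul_self_nonneg (t - s)) hww.le]
    have hzu : ⟪u, z⟫ = -e := by
      rw [hz, inner_sub_right, inner_add_right, inner_smul_right, h2, hx1, ← h1]; ring
    have h0 : ‖z + e • u‖^2 ≤ 0 := by
      have : ‖z + e • u‖^2 = ‖z‖^2 - e^2 := by
        rw [nsq, nsq]
        simp only [inner_add_left, inner_add_right, inner_smul_left, inner_smul_right, huu, real_inner_comm u z, hzu]
        simp; ring
      rw [this, ← sq_abs e, hr]
      nlinarith [norm_nonneg z]
    have h0' : z + e • u = 0 := by
      have : ‖z + e • u‖ = 0 := by nlinarith [norm_nonneg (z + e • u)]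
      exact norm_eq_zero.1 this
    rw [hz] at h0'
    have : x = (x - (a + t • w) + e • u) + (a - e • u + t • w) := by module
    rw [this, h0', zero_add]
  · rintro ⟨t, rfl⟩
    constructor
    · simp only [Set.mem_ofPred_eq, inner_add_right, inner_sub_right, inner_smul_right, huu, h2]; linarith
    · simp only [Set.mem_ofPred_eq, cylSet]
      refine le_antisymm ?_ ?_
      · have : a + t • w ∈ lineThrough3 a w := ⟨t, rfl⟩
        refine (Metric.infDist_le_dist_of_mem this).trans ?_
        rw [dist_eq_norm, show a - e • u + t • w - (a + t • w) = -(e • u) by module, norm_neg, norm_smul, hu, mul_one]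
        exact hr.le
      · refine (Metric.le_infDist hne).2 ?_
        rintro _ ⟨s, rfl⟩
        rw [dist_eq_norm, ← hr]
        have h3 := abs_real_inner_le_norm u (a - e • u + t • w - (a + s • w))
        rw [hu, one_mul] at h3
        refine le_trans (le_of_eq ?_) h3
        simp only [inner_sub_right, inner_add_right, inner_smul_right, huu, h2]
        rw [← abs_neg]; congr 1; ring

lemma cone_tangent (u : Pt3) (d : ℝ) (hu : ‖u‖ = 1) (a w : Pt3) (hw : w ≠ 0) (ρ : ℝ)
    (h1 : ⟪u, a⟫ = d) (h2 : ⟪u, w⟫ = ρ) (hρ : ρ^2 < ‖w‖^2) :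
    TangentPlaneCone {x | ⟪u, x⟫ = d} a w (Real.arccos (Real.sqrt (‖w‖^2 - ρ^2) / ‖w‖)) := by
  have huu : ⟪u, u⟫ = 1 := by rw [← nsq, hu]; norm_num
  have hww : 0 < ‖w‖ := norm_pos_iff.2 hw
  obtain ⟨κ, hκ⟩ : ∃ κ, κ = Real.sqrt (‖w‖^2 - ρ^2) := ⟨_, rfl⟩
  rw [← hκ]
  have hκ0 : 0 < κ := hκ ▸ Real.sqrt_pos.2 (by linarith)
  have hκ2 : κ^2 = ‖w‖^2 - ρ^2 := by rw [hκ, Real.sq_sqrt (by linarith)]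
  obtain ⟨v, hv⟩ : ∃ v, v = w - ρ • u := ⟨_, rfl⟩
  have huv : ⟪u, v⟫ = 0 := by rw [hv, inner_sub_right, inner_smul_right, huu, h2]; ring
  have hvw : ⟪v, w⟫ = κ^2 := by
    rw [hv, inner_sub_left, inner_smul_left, h2, ← nsq, hκ2]; simp; ring
  have hvv : ‖v‖^2 = κ^2 := by
    rw [nsq]; nth_rewrite 2 [hv]
    rw [inner_sub_right, inner_smul_right, real_inner_comm u v, huv, hvw]; ring
  have hvn : ‖v‖ = κ := (sq_eq_sq₀ (norm_nonneg _) hκ0.le).1 hvv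
  have hv0 : v ≠ 0 := norm_pos_iff.1 (hvn ▸ hκ0)
  have hang : InnerProductGeometry.angle v w = Real.arccos (κ / ‖w‖) := by
    rw [InnerProductGeometry.angle, hvw, hvn]; congr 1; field_simp
  refine ⟨lineThrough3 a v, ⟨_, _, hv0, rfl⟩, ?_⟩
  have hc1 : κ / ‖w‖ ≤ 1 := by
    rw [div_le_one hww]
    refine le_of_sq_le_sq ?_ hww.le
    rw [hκ2]; nlinarith [sq_nonneg ρ]
  have hcos : Real.cos (Real.arccos (κ / ‖w‖)) = κ / ‖w‖ :=
    Real.cos_arccos (by have : 0 ≤ κ / ‖w‖ := by positivity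
                        linarith) hc1
  ext x
  constructor
  · rintro ⟨hx1, hx2⟩
    simp only [Set.mem_ofPred_eq] at hx1
    have hcase : x = a ∨ ⟪x - a, w⟫^2 = κ^2 * ‖x - a‖^2 := by
      have hi := InnerProductGeometry.cos_angle_mul_norm_mul_norm (x - a) w
      rcases hx2 with h | h | h
      · exact Or.inl h
      · right; rw [← hi, h, hcos]; field_simp
      · right; rw [← hi, h, Real.cos_pi_sub, hcos]; field_simp
    rcases hcase with h | h
    · exact ⟨0, by simp [h]⟩
    obtain ⟨y, hy⟩ : ∃ y, y = x - a := ⟨_, rfl⟩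
    rw [← hy] at h
    have hyu : ⟪u, y⟫ = 0 := by rw [hy, inner_sub_right, hx1, h1, sub_self]
    have hyv : ⟪y, v⟫ = ⟪y, w⟫ := by
      rw [hv, inner_sub_right, inner_smul_right, real_inner_comm u y, hyu]; ring
    refine ⟨⟪y, w⟫ / κ^2, ?_⟩
    have h0 : ‖y - (⟪y, w⟫ / κ^2) • v‖^2 = 0 := by
      rw [nsq]
      simp only [inner_sub_left, inner_sub_right, inner_smul_left, inner_smul_right, real_inner_comm y v, hyv, ← nsq, hvv]
      simp
      field_simp
      nlinarith
    have h0' : y - (⟪y, w⟫ / κ^2) • v = 0 := norm_eq_zero.1 (pow_eq_zero_iff (two_ne_zero) |>.1 h0)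
    rw [← sub_eq_zero.1 h0', hy]; abel
  · rintro ⟨t, rfl⟩
    constructor
    · simp only [Set.mem_ofPred_eq, inner_add_right, inner_smul_right, huv, h1]; ring
    · show _ ∨ _ ∨ _
      rw [show a + t • v - a = t • v by abel]
      rcases lt_trichotomy t 0 with h | h | h
      · right; right
        rw [InnerProductGeometry.angle_smul_left_of_neg _ _ h, InnerProductGeometry.angle_neg_left, hang]
      · left; simp [h]
      · right; left
        rw [InnerProductGeometry.angle_smul_left_of_pos _ _ h, hang]

lemma three_sphere (u1 u2 u3 w z : Pt3) (h1 : ‖u1‖ = 1) (h2 : ‖u2‖ = 1) (h3 : ‖u3‖ = 1)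
    (h12 : u1 ≠ u2) (h13 : u1 ≠ u3) (h23 : u2 ≠ u3) (hw : w ≠ 0)
    (a : ⟪u1 - u2, w⟫ = 0) (b : ⟪u1 - u3, w⟫ = 0) (c : ⟪u1 - u2, z⟫ = 0) (d : ⟪u1 - u3, z⟫ = 0) :
    ∃ t : ℝ, z = t • w := by
  have h11 : ⟪u1, u1⟫ = 1 := by rw [← nsq, h1]; norm_num
  have hpa : ⟪u1 - u2, u1 - u2⟫ = 2 * ⟪u1, u1 - u2⟫ := by
    have : ⟪u2, u2⟫ = 1 := by rw [← nsq, h2]; norm_num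
    simp only [inner_sub_left, inner_sub_right, this, h11, real_inner_comm u1 u2]; ring
  have hpb : ⟪u1 - u3, u1 - u3⟫ = 2 * ⟪u1, u1 - u3⟫ := by
    have : ⟪u3, u3⟫ = 1 := by rw [← nsq, h3]; norm_num
    simp only [inner_sub_left, inner_sub_right, this, h11, real_inner_comm u1 u3]; ring
  have hab : u1 - u2 ≠ u1 - u3 := fun h => h23 (sub_right_injective h)
  have ha0 : u1 - u2 ≠ 0 := sub_ne_zero.2 h12
  have hb0 : u1 - u3 ≠ 0 := sub_ne_zero.2 h13
  generalize u1 - u2 = p at *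
  generalize u1 - u3 = q at *
  have hLI : LinearIndependent ℝ ![p, q] := by
    rw [LinearIndependent.pair_iff' ha0]
    intro s hs
    subst hs
    simp only [inner_smul_left, inner_smul_right] at hpb
    simp at hpb
    have hpp : 0 < ⟪p, p⟫ := real_inner_self_pos.2 ha0
    have hs0 : s ≠ 0 := by rintro rfl; simp at hb0
    have hs1 : s ≠ 1 := by rintro rfl; simp at hab
    have e0 : ⟪u1, p⟫ = ⟪p, p⟫ / 2 := by linarith
    rw [e0, nsq] at hpb
    have : s * (s - 1) * ⟪p, p⟫ = 0 := by linarith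
    simp [hs0, sub_ne_zero.2 hs1, ha0] at this
  have hf : finrank ℝ (Submodule.span ℝ (Set.range ![p, q])) = 2 := by
    rw [finrank_span_eq_card hLI]; rfl
  obtain ⟨K, hK⟩ : ∃ K, K = Submodule.span ℝ (Set.range ![p, q]) := ⟨_, rfl⟩
  rw [← hK] at hf
  have hmem : ∀ x : Pt3, ⟪p, x⟫ = 0 → ⟪q, x⟫ = 0 → x ∈ Kᗮ := by
    intro x h1 h2
    rw [Submodule.mem_orthogonal]
    intro y hy
    rw [hK] at hy
    induction hy using Submodule.span_induction with
    | mem y hy =>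
      obtain ⟨i, rfl⟩ := hy
      fin_cases i
      · exact h1
      · exact h2
    | zero => simp
    | add x y _ _ hx hy => rw [inner_add_left, hx, hy, add_zero]
    | smul t x _ hx => rw [inner_smul_left, hx, mul_zero]
  have hsum := Submodule.finrank_add_finrank_orthogonal K
  rw [hf, finrank_euclideanSpace_fin] at hsum
  have h1' : finrank ℝ Kᗮ = 1 := by omega
  obtain ⟨t, ht⟩ := (finrank_eq_one_iff_of_nonzero' (⟨w, hmem w a b⟩ : Kᗮ) (by simpa using hw)).1 h1' ⟨z, hmem z c d⟩
  exact ⟨t, by simpa using (congrArg Subtype.val ht).symm⟩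

lemma geo (S : Finset (Pt3 × ℝ)) (Pl : Finset (Set Pt3)) (g : Set Pt3 → Pt3 × ℝ)
    (hg : ∀ q ∈ Pl, ‖(g q).1‖ = 1 ∧ q = {x | ⟪(g q).1, x⟫ = (g q).2}) (hS : ∀ s ∈ S, 0 < s.2)
    (ε : ℝ) (hε : |ε| = 1) (s1 s2 s3 : Pt3 × ℝ) (q1 q2 q3 : Set Pt3)
    (hs1 : s1 ∈ S) (hs2 : s2 ∈ S) (hs3 : s3 ∈ S) (hq1 : q1 ∈ Pl) (hq2 : q2 ∈ Pl) (hq3 : q3 ∈ Pl)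
    (s12 : s1 ≠ s2) (s13 : s1 ≠ s3) (s23 : s2 ≠ s3) (q12 : q1 ≠ q2) (q13 : q1 ≠ q3) (q23 : q2 ≠ q3)
    (h : ∀ q, (q = q1 ∨ q = q2 ∨ q = q3) → ∀ s, (s = s1 ∨ s = s2 ∨ s = s3) → ⟪(g q).1, s.1⟫ - (g q).2 = ε * s.2) :
    SphereConeCylConfig33 S Pl := by
  have hε0 : ε ≠ 0 := by rintro rfl; simp at hε
  have hc12 : s1.1 ≠ s2.1 := by
    intro hc
    have a := h q1 (by simp) s1 (by simp)
    have b := h q1 (by simp) s2 (by simp)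
    rw [hc, b] at a
    exact s12 (Prod.ext hc (mul_left_cancel₀ hε0 a).symm)
  have hinj : ∀ q, (q = q1 ∨ q = q2 ∨ q = q3) → ∀ q', (q' = q1 ∨ q' = q2 ∨ q' = q3) → (g q).1 = (g q').1 → q = q' := by
    intro q hq q' hq' hu
    have a := h q hq s1 (by simp)
    have b := h q' hq' s1 (by simp)
    have hd : (g q).2 = (g q').2 := by rw [hu] at a; linarith
    have m1 : q ∈ Pl := by rcases hq with rfl | rfl | rfl <;> assumption
    have m2 : q' ∈ Pl := by rcases hq' with rfl | rfl | rfl <;> assumption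
    rw [(hg q m1).2, (hg q' m2).2, hu, hd]
  obtain ⟨w, hw⟩ : ∃ w, w = s1.1 - s2.1 := ⟨_, rfl⟩
  have hw0 : w ≠ 0 := hw ▸ sub_ne_zero.2 hc12
  obtain ⟨ρ, hρ⟩ : ∃ ρ, ρ = ε * s1.2 - ε * s2.2 := ⟨_, rfl⟩
  have hρ' : ∀ q, (q = q1 ∨ q = q2 ∨ q = q3) → ⟪(g q).1, w⟫ = ρ := by
    intro q hq
    rw [hw, inner_sub_right, hρ, ← h q hq s1 (by simp), ← h q hq s2 (by simp)]; ring
  have hσ' : ∀ q, (q = q1 ∨ q = q2 ∨ q = q3) → ⟪(g q).1, s1.1 - s3.1⟫ = ε * s1.2 - ε * s3.2 := by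
    intro q hq
    rw [inner_sub_right, ← h q hq s1 (by simp), ← h q hq s3 (by simp)]; ring
  have n12 : (g q1).1 ≠ (g q2).1 := fun hh => q12 (hinj q1 (by simp) q2 (by simp) hh)
  have n13 : (g q1).1 ≠ (g q3).1 := fun hh => q13 (hinj q1 (by simp) q3 (by simp) hh)
  have n23 : (g q2).1 ≠ (g q3).1 := fun hh => q23 (hinj q2 (by simp) q3 (by simp) hh)
  obtain ⟨t, ht⟩ := three_sphere _ _ _ w (s1.1 - s3.1) (hg q1 hq1).1 (hg q2 hq2).1 (hg q3 hq3).1 n12 n13 n23 hw0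
    (by rw [inner_sub_left, hρ' q1 (by simp), hρ' q2 (by simp), sub_self])
    (by rw [inner_sub_left, hρ' q1 (by simp), hρ' q3 (by simp), sub_self])
    (by rw [inner_sub_left, hσ' q1 (by simp), hσ' q2 (by simp), sub_self])
    (by rw [inner_sub_left, hσ' q1 (by simp), hσ' q3 (by simp), sub_self])
  have hmem : ∀ q, (q = q1 ∨ q = q2 ∨ q = q3) → q ∈ Pl := by
    rintro q (rfl | rfl | rfl) <;> assumption
  refine ⟨s1.1, w, hw0, ⟨s1, hs1, s2, hs2, s3, hs3, s12, s13, s23, ⟨0, by simp⟩, ⟨-1, by rw [hw]; module⟩,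
    ⟨-t, by rw [neg_smul, ← ht]; module⟩⟩, ⟨q1, hq1, q2, hq2, q3, hq3, q12, q13, q23, ?_⟩⟩
  by_cases hρ0 : ρ = 0
  · right
    have key : ∀ q, (q = q1 ∨ q = q2 ∨ q = q3) → TangentPlaneCyl q s1.1 w s1.2 := by
      intro q hq
      rw [(hg q (hmem q hq)).2]
      refine cyl_tangent _ _ (hg q (hmem q hq)).1 _ _ hw0 (ε * s1.2) _ ?_ (h q hq s1 (by simp)) (by rw [hρ' q hq, hρ0])
      rw [abs_mul, hε, one_mul, abs_of_pos (hS s1 hs1)]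
    exact ⟨s1.2, hS s1 hs1, key q1 (by simp), key q2 (by simp), key q3 (by simp)⟩
  · left
    have hnn : ∀ q, (q = q1 ∨ q = q2 ∨ q = q3) → ‖w - ρ • (g q).1‖^2 = ‖w‖^2 - ρ^2 := by
      intro q hq
      have huu : ⟪(g q).1, (g q).1⟫ = 1 := by rw [← nsq, (hg q (hmem q hq)).1]; norm_num
      have := hρ' q hq
      rw [nsq, nsq]
      simp only [inner_sub_left, inner_sub_right, inner_smul_left, inner_smul_right, huu, real_inner_comm (g q).1 w, this]
      simp; ring
    have hlt : ρ^2 < ‖w‖^2 := by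
      have a1 := hnn q1 (by simp)
      have a2 := hnn q2 (by simp)
      by_contra hcon
      have z1 : w - ρ • (g q1).1 = 0 := by
        rw [← norm_eq_zero]; nlinarith [norm_nonneg (w - ρ • (g q1).1)]
      have z2 : w - ρ • (g q2).1 = 0 := by
        rw [← norm_eq_zero]; nlinarith [norm_nonneg (w - ρ • (g q2).1)]
      have := (sub_eq_zero.1 z1).symm.trans (sub_eq_zero.1 z2)
      exact n12 (smul_right_injective Pt3 hρ0 this)
    have hwn : 0 < ‖w‖ := norm_pos_iff.2 hw0
    have key : ∀ q, (q = q1 ∨ q = q2 ∨ q = q3) → TangentPlaneCone q (s1.1 + (-(ε * s1.2)/ρ) • w) w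
        (Real.arccos (Real.sqrt (‖w‖^2 - ρ^2) / ‖w‖)) := by
      intro q hq
      nth_rewrite 1 [(hg q (hmem q hq)).2]
      refine cone_tangent _ _ (hg q (hmem q hq)).1 _ _ hw0 ρ ?_ (hρ' q hq) hlt
      rw [inner_add_right, inner_smul_right, hρ' q hq, ← h q hq s1 (by simp)]
      field_simp; ring
    refine ⟨_, ⟨_, rfl⟩, _, ?_, ?_, key q1 (by simp), key q2 (by simp), key q3 (by simp)⟩
    · rw [Real.arccos_pos, div_lt_one hwn, Real.sqrt_lt' hwn]
      have : 0 < ρ^2 := by positivity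
      linarith
    · rw [Real.arccos_lt_pi_div_two]
      have := Real.sqrt_pos.2 (sub_pos.2 hlt)
      positivity

/-- the polynomial attached to a signed sphere -/
def sphPoly (ε : ℝ) (s : Pt3 × ℝ) : R2 :=
  C (s.1 2 - ε * s.2) * (X 0 * X 0 + X 1 * X 1) + C (2 * s.1 0) * X 0 + C (2 * s.1 1) * X 1 - C (s.1 2 + ε * s.2)

lemma sphPoly_eval (ε : ℝ) (s : Pt3 × ℝ) (x : Fin 2 → ℝ) : eval x (sphPoly ε s) =
    (s.1 2 - ε * s.2) * (x 0 * x 0 + x 1 * x 1) + 2 * s.1 0 * x 0 + 2 * s.1 1 * x 1 - (s.1 2 + ε * s.2) := by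
  simp [sphPoly]

lemma sphPoly_td (ε : ℝ) (s : Pt3 × ℝ) : (sphPoly ε s).totalDegree ≤ 2 := by
  have hX : ∀ i : Fin 2, (X i : R2).totalDegree ≤ 1 := fun i => (totalDegree_X i).le
  have hC : ∀ c : ℝ, (C c : R2).totalDegree ≤ 0 := fun c => (totalDegree_C c).le
  have hCX : ∀ c i, (C c * X i : R2).totalDegree ≤ 2 := fun c i =>
    (totalDegree_mul _ _).trans (by have := hX i; have := hC c; omega)
  have hXX : ∀ i : Fin 2, (X i * X i : R2).totalDegree ≤ 2 := fun i =>
    (totalDegree_mul _ _).trans (by have := hX i; omega)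
  refine (totalDegree_sub _ _).trans (max_le ?_ ((hC _).trans (by norm_num)))
  refine (totalDegree_add _ _).trans (max_le ?_ (hCX _ _))
  refine (totalDegree_add _ _).trans (max_le ?_ (hCX _ _))
  refine (totalDegree_mul _ _).trans ?_
  have h1 := (totalDegree_add (X 0 * X 0 : R2) (X 1 * X 1)).trans (max_le (hXX 0) (hXX 1))
  have h2 := hC (s.1 2 - ε * s.2)
  omega

lemma sphPoly_inj (ε : ℝ) (hε : ε ≠ 0) : Function.Injective (sphPoly ε) := by
  intro s t hst
  have e : ∀ x : Fin 2 → ℝ, _ := fun x => (sphPoly_eval ε s x).symm.trans ((congrArg (eval x) hst).trans (sphPoly_eval ε t x))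
  have e0 := e ![0, 0]
  have e1 := e ![1, 0]
  have e2 := e ![-1, 0]
  have e3 := e ![0, 1]
  simp at e0 e1 e2 e3
  have h0 : s.1 0 = t.1 0 := by linarith
  have h1 : s.1 1 = t.1 1 := by linarith
  have h2 : s.1 2 = t.1 2 := by linarith
  have h3 : ε * s.2 = ε * t.2 := by linarith
  refine Prod.ext ?_ (mul_left_cancel₀ hε h3)
  ext i
  fin_cases i
  · exact h0
  · exact h1
  · exact h2

def plPt (g : Pt3 × ℝ) : Fin 3 → ℝ := ![2 * g.2 / (1 - g.1 2), g.1 0 / (1 - g.1 2), g.1 1 / (1 - g.1 2)]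

lemma unit_eq (u : Pt3) (h : ‖u‖ = 1) : u 0 ^ 2 + u 1 ^ 2 + u 2 ^ 2 = 1 := by
  have := EuclideanSpace.norm_sq_eq u
  rw [h, Fin.sum_univ_three] at this
  simpa using this.symm

lemma plPt_inj (g g' : Pt3 × ℝ) (h1 : ‖g.1‖ = 1) (h2 : g.1 2 ≠ 1) (h1' : ‖g'.1‖ = 1) (h2' : g'.1 2 ≠ 1)
    (h : plPt g = plPt g') : g = g' := by
  have u1 := unit_eq _ h1
  have u2 := unit_eq _ h1'
  have k1 : 1 - g.1 2 ≠ 0 := sub_ne_zero.2 (Ne.symm h2)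
  have k2 : 1 - g'.1 2 ≠ 0 := sub_ne_zero.2 (Ne.symm h2')
  have a0 := congrFun h 0
  have a1 := congrFun h 1
  have a2 := congrFun h 2
  simp [plPt] at a0 a1 a2
  have r1 : (g.1 0 / (1 - g.1 2))^2 + (g.1 1 / (1 - g.1 2))^2 + 1 = 2 / (1 - g.1 2) := by
    field_simp; linarith
  have r2 : (g'.1 0 / (1 - g'.1 2))^2 + (g'.1 1 / (1 - g'.1 2))^2 + 1 = 2 / (1 - g'.1 2) := by
    field_simp; linarith
  rw [a1, a2, r2, div_eq_div_iff k2 k1] at r1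
  have h3 : g.1 2 = g'.1 2 := by linarith
  rw [h3] at a0 a1 a2
  rw [div_left_inj' k2] at a0 a1 a2
  refine Prod.ext ?_ (by linarith)
  ext i
  fin_cases i
  · exact a1
  · exact a2
  · exact h3

lemma on_iff (g : Pt3 × ℝ) (h1 : ‖g.1‖ = 1) (h2 : g.1 2 ≠ 1) (ε : ℝ) (s : Pt3 × ℝ) :
    On (plPt g) (sphPoly ε s) ↔ ⟪g.1, s.1⟫ - g.2 = ε * s.2 := by
  have u1 := unit_eq _ h1
  have k1 : 1 - g.1 2 ≠ 0 := sub_ne_zero.2 (Ne.symm h2)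
  have hin : ⟪g.1, s.1⟫ = g.1 0 * s.1 0 + g.1 1 * s.1 1 + g.1 2 * s.1 2 := by
    rw [EuclideanSpace.inner_eq_star_dotProduct]
    simp [dotProduct, Fin.sum_univ_three]; ring
  have r1 : (g.1 0 / (1 - g.1 2)) * (g.1 0 / (1 - g.1 2)) + (g.1 1 / (1 - g.1 2)) * (g.1 1 / (1 - g.1 2))
      = (1 + g.1 2) / (1 - g.1 2) := by
    field_simp; linarith
  rw [On, sphPoly_eval, hin]
  have t0 : tl (plPt g) 0 = g.1 0 / (1 - g.1 2) := rfl
  have t1 : tl (plPt g) 1 = g.1 1 / (1 - g.1 2) := rfl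
  have t2 : plPt g 0 = 2 * g.2 / (1 - g.1 2) := rfl
  rw [t0, t1, t2, r1]
  constructor
  · intro h; field_simp at h; linarith
  · intro h; field_simp; linarith

lemma inc_image {α β γ δ : Type} [DecidableEq γ] [DecidableEq δ] (A : Finset α) (B : Finset β) (f : α → γ) (g : β → δ) (hf : Set.InjOn f A)
    (hg : Set.InjOn g B) (R : γ → δ → Prop) (Z : Finset (α × β)) (hZ : ∀ z ∈ Z, z.1 ∈ A ∧ z.2 ∈ B ∧ R (f z.1) (g z.2)) :
    Z.card ≤ inc (A.image f) (B.image g) R := by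
  classical
  rw [inc, Finset.sum_image hg]
  have : Z.card = ∑ b ∈ B, (Z.filter fun z => z.2 = b).card :=
    Finset.card_eq_sum_card_fiberwise fun z hz => (hZ z hz).2.1
  rw [this]
  refine Finset.sum_le_sum fun b hb => ?_
  refine Finset.card_le_card_of_injOn (fun z => f z.1) ?_ ?_
  · intro z hz
    obtain ⟨z1, z2⟩ := Finset.mem_filter.1 hz
    obtain ⟨y1, y2, y3⟩ := hZ z z1
    exact Finset.mem_filter.2 ⟨Finset.mem_image_of_mem _ y1, z2 ▸ y3⟩
  · intro z hz z' hz' hh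
    obtain ⟨z1, z2⟩ := Finset.mem_filter.1 hz
    obtain ⟨z1', z2'⟩ := Finset.mem_filter.1 hz'
    exact Prod.ext (hf (hZ z z1).1 (hZ z' z1').1 hh) (z2.trans z2'.symm)

lemma signed (Pl : Finset (Set Pt3)) (S : Finset (Pt3 × ℝ)) (g : Set Pt3 → Pt3 × ℝ)
    (hg : ∀ q ∈ Pl, ‖(g q).1‖ = 1 ∧ (g q).1 2 ≠ 1 ∧ q = {x | ⟪(g q).1, x⟫ = (g q).2}) (hS : ∀ s ∈ S, 0 < s.2)
    (hno : ¬ SphereConeCylConfig33 S Pl) (ε : ℝ) (hε : |ε| = 1) (Z : Finset (Set Pt3 × (Pt3 × ℝ)))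
    (hZ : ∀ z ∈ Z, z.1 ∈ Pl ∧ z.2 ∈ S ∧ ⟪(g z.1).1, z.2.1⟫ - (g z.1).2 = ε * z.2.2) :
    (Z.card : ℝ) ≤ 70000000 * ((Pl.card:ℝ)^((3:ℝ)/4) * (S.card:ℝ)^((3:ℝ)/4) + Pl.card + S.card) := by
  classical
  have hε0 : ε ≠ 0 := by rintro rfl; simp at hε
  have hf : Set.InjOn (fun q => plPt (g q)) (Pl : Set (Set Pt3)) := by
    intro q hq q' hq' hh
    obtain ⟨a, b, c⟩ := hg q hq
    obtain ⟨a', b', c'⟩ := hg q' hq'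
    rw [c, c', plPt_inj _ _ a b a' b' hh]
  have hs : Set.InjOn (sphPoly ε) (S : Set (Pt3 × ℝ)) := (sphPoly_inj ε hε0).injOn
  have h1 := inc_image Pl S _ _ hf hs On Z (fun z hz => by
    obtain ⟨a, b, c⟩ := hZ z hz
    exact ⟨a, b, (on_iff _ (hg _ a).1 (hg _ a).2.1 _ _).2 c⟩)
  have h2 := core (Pl.image fun q => plPt (g q)) (S.image (sphPoly ε)) (by
    intro s hs
    obtain ⟨t, _, rfl⟩ := Finset.mem_image.1 hs
    exact sphPoly_td _ _) (by
    intro p1 hp1 p2 hp2 p3 hp3 t1 ht1 t2 ht2 t3 ht3 a1 a2 a3 b1 b2 b3 c1 c2 c3 c4 c5 c6 c7 c8 c9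
    obtain ⟨q1, hq1, rfl⟩ := Finset.mem_image.1 hp1
    obtain ⟨q2, hq2, rfl⟩ := Finset.mem_image.1 hp2
    obtain ⟨q3, hq3, rfl⟩ := Finset.mem_image.1 hp3
    obtain ⟨s1, hs1, rfl⟩ := Finset.mem_image.1 ht1
    obtain ⟨s2, hs2, rfl⟩ := Finset.mem_image.1 ht2
    obtain ⟨s3, hs3, rfl⟩ := Finset.mem_image.1 ht3
    refine hno (geo S Pl g (fun q hq => ⟨(hg q hq).1, (hg q hq).2.2⟩) hS ε hε s1 s2 s3 q1 q2 q3 hs1 hs2 hs3 hq1 hq2 hq3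
      (fun h => b1 (by rw [h])) (fun h => b2 (by rw [h])) (fun h => b3 (by rw [h]))
      (fun h => a1 (by rw [h])) (fun h => a2 (by rw [h])) (fun h => a3 (by rw [h])) ?_)
    rintro q (rfl | rfl | rfl) s (rfl | rfl | rfl) <;> refine (on_iff _ (hg _ ?_).1 (hg _ ?_).2.1 _ _).1 ?_ <;> assumption)
  rw [Finset.card_image_of_injOn hf, Finset.card_image_of_injOn hs] at h2
  exact le_trans (by exact_mod_cast h1) h2

end Helpers

theorem plane_sphere_tangencies_no_config :
    ∃ A : ℝ, 0 < A ∧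
      ∀ (n k : ℕ) (Pl : Finset (Set Pt3)) (S : Finset (Pt3 × ℝ)),
        Pl.card = n → S.card = k →
        (∀ q ∈ Pl, IsPlane3 q) → (∀ s ∈ S, 0 < s.2) →
        ¬ SphereConeCylConfig33 S Pl →
        (({q : Set Pt3 × (Pt3 × ℝ) | q.1 ∈ Pl ∧ q.2 ∈ S ∧
            Tangent3 q.1 (Metric.sphere q.2.1 q.2.2)}).ncard : ℝ) ≤
          A * ((n : ℝ) ^ ((3 : ℝ) / 4) * (k : ℝ) ^ ((3 : ℝ) / 4) + (n : ℝ) + (k : ℝ)) := by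
  classical
  refine ⟨140000000, by norm_num, ?_⟩
  rintro n k Pl S rfl rfl hPl hS hno
  have hch : ∀ q : Set Pt3, ∃ g : Pt3 × ℝ, q ∈ Pl → ‖g.1‖ = 1 ∧ g.1 2 ≠ 1 ∧ q = {x | ⟪g.1, x⟫ = g.2} := by
    intro q
    by_cases h : q ∈ Pl
    · obtain ⟨g, hg⟩ := plane_normal q (hPl q h)
      exact ⟨g, fun _ => hg⟩
    · exact ⟨0, fun h' => absurd h' h⟩
  choose g hg using hch
  have h1 := signed Pl S g hg hS hno 1 (by simp)
    ((Pl ×ˢ S).filter fun z => ⟪(g z.1).1, z.2.1⟫ - (g z.1).2 = 1 * z.2.2) (fun z hz => by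
      obtain ⟨a, b⟩ := Finset.mem_filter.1 hz
      exact ⟨(Finset.mem_product.1 a).1, (Finset.mem_product.1 a).2, b⟩)
  have h2 := signed Pl S g hg hS hno (-1) (by simp)
    ((Pl ×ˢ S).filter fun z => ⟪(g z.1).1, z.2.1⟫ - (g z.1).2 = -1 * z.2.2) (fun z hz => by
      obtain ⟨a, b⟩ := Finset.mem_filter.1 hz
      exact ⟨(Finset.mem_product.1 a).1, (Finset.mem_product.1 a).2, b⟩)
  generalize hZ1 : (Pl ×ˢ S).filter (fun z => ⟪(g z.1).1, z.2.1⟫ - (g z.1).2 = 1 * z.2.2) = Z1 at h1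
  generalize hZ2 : (Pl ×ˢ S).filter (fun z => ⟪(g z.1).1, z.2.1⟫ - (g z.1).2 = -1 * z.2.2) = Z2 at h2
  have h3 : ({q : Set Pt3 × (Pt3 × ℝ) | q.1 ∈ Pl ∧ q.2 ∈ S ∧
            Tangent3 q.1 (Metric.sphere q.2.1 q.2.2)}).ncard ≤ Z1.card + Z2.card := by
    refine le_trans ?_ (Finset.card_union_le Z1 Z2)
    rw [← Set.ncard_coe_finset]
    refine Set.ncard_le_ncard ?_ (Finset.finite_toSet _)
    rintro ⟨q, s⟩ ⟨a, b, c⟩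
    dsimp only at a b c
    obtain ⟨d1, d2, d3⟩ := hg q a
    rw [d3] at c
    have := tangent_dist _ _ d1 _ _ c
    rw [Finset.mem_coe, Finset.mem_union, ← hZ1, ← hZ2, Finset.mem_filter, Finset.mem_filter, Finset.mem_product]
    rcases this with h | h
    · left; exact ⟨⟨a, b⟩, by dsimp only; linarith⟩
    · right; exact ⟨⟨a, b⟩, by dsimp only; linarith⟩
  have h4 : (({q : Set Pt3 × (Pt3 × ℝ) | q.1 ∈ Pl ∧ q.2 ∈ S ∧
            Tangent3 q.1 (Metric.sphere q.2.1 q.2.2)}).ncard : ℝ) ≤ Z1.card + Z2.card := by exact_mod_cast h3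
  linarith
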